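/- arXiv:2511.00303 — 2 statements merged into one kernel-verified Lean document; each statement's English description precedes it below -/
import Mathlib

section
/- Every eigenvalue a of 𝒜_{m,n} on V^{m,n} has the form a = rN + c(ρ/μ) + c(σ/ν) where r ∈ {0,…,min(m,n)}, (ρ,σ) is a pair of partitions of m and n each with at most N rows, (μ,ν) are partitions with m−|μ| = n−|ν| = r, μ ⊆ ρ, ν ⊆ σ, ℓ(μ)+ℓ(ν) ≤ N, and the rational GL(N)-representation labelled (μ,ν) occurs in U^{(ρ,∅)} ⊗ U^{(∅,σ)}; moreover a = 0 if and only if r = 0. -/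
open scoped BigOperators

noncomputable section

/-- Mixed tensors of valence (m,n) on an N-dimensional space, given by components. -/
abbrev Tens (N m n : ℕ) := (Fin m → Fin N) → (Fin n → Fin N) → ℂ

namespace Mixed

variable (N : ℕ)

/-- Permutation of the contravariant (V) factors. -/
def permU (m n : ℕ) (p : Equiv.Perm (Fin m)) : Module.End ℂ (Tens N m n) where
  toFun t := fun i j => t (i ∘ p) j
  map_add' t s := rfl
  map_smul' c t := rfl

/-- Permutation of the covariant (V*) factors. -/
def permD (m n : ℕ) (q : Equiv.Perm (Fin n)) : Module.End ℂ (Tens N m n) where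
  toFun t := fun i j => t i (j ∘ q)
  map_add' t s := rfl
  map_smul' c t := rfl

/-- The contraction map `tr_{ab'}` (the result, a tensor of valence (m−1,n−1), is
recorded as a function not depending on the slots a, b). -/
def ctr (m n : ℕ) (a : Fin m) (b : Fin n) : Tens N m n →ₗ[ℂ] Tens N m n where
  toFun t := fun i j => ∑ k : Fin N,
    t (Function.update i a k) (Function.update j b k)
  map_add' t s := by funext i j; simp [Finset.sum_add_distrib]
  map_smul' c t := by funext i j; simp [Finset.mul_sum]

/-- The contraction-insertion endomorphism `τ_{ab'} = tr⁺_{ab'} ∘ tr_{ab'}`. -/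
def tauC (m n : ℕ) (a : Fin m) (b : Fin n) : Module.End ℂ (Tens N m n) where
  toFun t := fun i j =>
    if i a = j b then
      ∑ k : Fin N, t (Function.update i a k) (Function.update j b k)
    else 0
  map_add' t s := by
    funext i j; by_cases h : i a = j b <;> simp [h, Finset.sum_add_distrib]
  map_smul' c t := by
    funext i j; by_cases h : i a = j b <;> simp [h, Finset.mul_sum]

/-- `𝒜_{m,n} = ∑_{a,b'} τ_{ab'}`. -/
def A (m n : ℕ) : Module.End ℂ (Tens N m n) :=
  ∑ a : Fin m, ∑ b : Fin n, tauC N m n a b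

/-- The traceless subspace: common kernel of all contractions. -/
def traceless0 (m n : ℕ) : Submodule ℂ (Tens N m n) :=
  ⨅ a : Fin m, ⨅ b : Fin n, LinearMap.ker (ctr N m n a b)

/-- `ℒ_m`: the sum of the transpositions of the V-factors. -/
def LOp (m n : ℕ) : Module.End ℂ (Tens N m n) :=
  ∑ x ∈ Finset.univ.filter (fun x : Fin m × Fin m => x.1 < x.2),
    permU N m n (Equiv.swap x.1 x.2)

/-- `ℛ_n`: the sum of the transpositions of the V*-factors. -/
def ROp (m n : ℕ) : Module.End ℂ (Tens N m n) :=
  ∑ x ∈ Finset.univ.filter (fun x : Fin n × Fin n => x.1 < x.2),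
    permD N m n (Equiv.swap x.1 x.2)

/-- The (diagonal) action of GL(N) on mixed tensors: the contragredient action on
the covariant indices. -/
def glAct (m n : ℕ) (g : GL (Fin N) ℂ) : Module.End ℂ (Tens N m n) where
  toFun t := fun i j => ∑ i' : Fin m → Fin N, ∑ j' : Fin n → Fin N,
    ((∏ a : Fin m, (g : Matrix (Fin N) (Fin N) ℂ) (i a) (i' a)) *
      ∏ b : Fin n, ((g⁻¹ : GL (Fin N) ℂ) : Matrix (Fin N) (Fin N) ℂ) (j' b) (j b)) *
        t i' j'
  map_add' t s := by
    funext i j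
    simp only [Pi.add_apply, mul_add, Finset.sum_add_distrib]
  map_smul' c t := by
    funext i j
    simp only [Pi.smul_apply, smul_eq_mul, RingHom.id_apply, Finset.mul_sum]
    refine Finset.sum_congr rfl fun i' _ => Finset.sum_congr rfl fun j' _ => by ring

/-- The centraliser algebra `C_{m,n}(N) = End_{GL(N)}(V^{m,n})`. -/
def Cent (m n : ℕ) : Subalgebra ℂ (Module.End ℂ (Tens N m n)) :=
  Subalgebra.centralizer ℂ (Set.range (glAct N m n))

end Mixed

attribute [local instance] Classical.propDecidable

namespace Mixed

/-- The total content c(ρ) = ∑_{(i,j)∈ρ} (j − i) of a Young diagram. -/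
def content (ρ : YoungDiagram) : ℤ :=
  ∑ c ∈ ρ.cells, ((c.2 : ℤ) - (c.1 : ℤ))

/-- The number of rows ℓ(ρ) of a Young diagram. -/
def nrows (ρ : YoungDiagram) : ℕ := (ρ.cells.image Prod.fst).card

/-- A (bijective) filling of the cells of ρ by {0, …, m−1}. -/
def IsTableau (m : ℕ) (ρ : YoungDiagram) (f : Fin m → ℕ × ℕ) : Prop :=
  Function.Injective f ∧ Set.range f = ↑ρ.cells

/-- p preserves the rows of the filling f. -/
def rowPres {m : ℕ} (f : Fin m → ℕ × ℕ) (p : Equiv.Perm (Fin m)) : Prop :=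
  ∀ x, (f (p x)).1 = (f x).1

/-- q preserves the columns of the filling f. -/
def colPres {m : ℕ} (f : Fin m → ℕ × ℕ) (q : Equiv.Perm (Fin m)) : Prop :=
  ∀ x, (f (q x)).2 = (f x).2

/-- The Young symmetriser c_λ = ∑_{p ∈ Row, q ∈ Col} sgn(q)·pq acting on the
contravariant factors. -/
def ySymU (N m n : ℕ) (f : Fin m → ℕ × ℕ) : Module.End ℂ (Tens N m n) :=
  ∑ p : Equiv.Perm (Fin m), ∑ q : Equiv.Perm (Fin m),
    if rowPres f p ∧ colPres f q then
      (((Equiv.Perm.sign q : ℤ) : ℂ)) • permU N m n (p * q)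
    else 0

/-- The Young symmetriser acting on the covariant factors. -/
def ySymD (N m n : ℕ) (f : Fin n → ℕ × ℕ) : Module.End ℂ (Tens N m n) :=
  ∑ p : Equiv.Perm (Fin n), ∑ q : Equiv.Perm (Fin n),
    if rowPres f p ∧ colPres f q then
      (((Equiv.Perm.sign q : ℤ) : ℂ)) • permD N m n (p * q)
    else 0

/-- The isotypic GL(N)×GL(N)-component of `V^{m,n}` labelled by the pair of
partitions (ρ,σ): the ℂ[𝔖_m×𝔖_n]-submodule generated by the images of the Young
symmetrisers of shapes ρ and σ. -/
def glglComp (N m n : ℕ) (ρ σ : YoungDiagram) : Submodule ℂ (Tens N m n) :=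
  Submodule.span ℂ {x | ∃ (fρ : Fin m → ℕ × ℕ) (fσ : Fin n → ℕ × ℕ),
    IsTableau m ρ fρ ∧ IsTableau n σ fσ ∧
    ∃ (p : Equiv.Perm (Fin m)) (q : Equiv.Perm (Fin n)) (t : Tens N m n),
      x = permU N m n p (permD N m n q (ySymU N m n fρ (ySymD N m n fσ t)))}

end Mixed

namespace Mixed

/-- The GL(N)-equivariant embedding `V^{m-r,n-r} ⊗ E^{⊗r} ↪ V^{m,n}` obtained by
tensoring with r copies of the identity tensor E = ∑ᵢ eᵢ ⊗ eⁱ placed in the last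
r contravariant and covariant slots. -/
def embE (N m n r : ℕ) (hrm : r ≤ m) (hrn : r ≤ n) :
    Tens N (m - r) (n - r) →ₗ[ℂ] Tens N m n where
  toFun t := fun i j =>
    (∏ s : Fin r,
      if i ⟨m - r + s.1, by have := s.2; omega⟩ = j ⟨n - r + s.1, by have := s.2; omega⟩
      then (1 : ℂ) else 0) *
    t (fun x => i (Fin.castLE (Nat.sub_le m r) x)) (fun y => j (Fin.castLE (Nat.sub_le n r) y))
  map_add' t s := by funext i j; simp [mul_add]
  map_smul' c t := by funext i j; simp; ring

/-- The isotypic GL(N)-component of `V^{m,n}` labelled by the pair of partitions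
(μ,ν) with m − |μ| = n − |ν| = r: the C_{m,n}(N)-submodule generated by the
embeddings `W ⊗ E^{⊗r}` of the Young-symmetrised traceless tensors
W ⊆ V₀^{m-r,n-r} of symmetry type (μ,ν). -/
def glIsoComp (N m n r : ℕ) (hrm : r ≤ m) (hrn : r ≤ n) (μ ν : YoungDiagram) :
    Submodule ℂ (Tens N m n) :=
  Submodule.span ℂ {x | ∃ f ∈ Cent N m n,
    ∃ (fμ : Fin (m - r) → ℕ × ℕ) (fν : Fin (n - r) → ℕ × ℕ),
      IsTableau (m - r) μ fμ ∧ IsTableau (n - r) ν fν ∧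
      ∃ t ∈ traceless0 N (m - r) (n - r),
        x = f (embE N m n r hrm hrn
          (ySymU N (m - r) (n - r) fμ (ySymD N (m - r) (n - r) fν t)))}

end Mixed

namespace WB

open Equiv

/-- The complex group algebra of the symmetric group on `m` letters. -/
abbrev GA (m : ℕ) := MonoidAlgebra ℂ (Perm (Fin m))

/-- The basis element of the group algebra. -/
def o {m : ℕ} (p : Perm (Fin m)) : GA m := MonoidAlgebra.of ℂ (Perm (Fin m)) p

theorem o_mul {m : ℕ} (p q : Perm (Fin m)) : o (p * q) = o p * o q := map_mul _ _ _

theorem o_one {m : ℕ} : o (1 : Perm (Fin m)) = 1 := map_one _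

/-- `p` fixes all letters `≥ k`. -/
def Fx {m : ℕ} (k : ℕ) (p : Perm (Fin m)) : Prop := ∀ i : Fin m, k ≤ i.1 → p i = i

theorem Fx.mul {m k : ℕ} {p q : Perm (Fin m)} (hp : Fx k p) (hq : Fx k q) : Fx k (p * q) := by
  intro i hi
  simp [hq i hi, hp i hi]

theorem Fx.inv {m k : ℕ} {p : Perm (Fin m)} (hp : Fx k p) : Fx k p⁻¹ := by
  intro i hi
  rw [Perm.inv_eq_iff_eq, hp i hi]

theorem Fx.mono {m k l : ℕ} (h : k ≤ l) {p : Perm (Fin m)} (hp : Fx k p) : Fx l p :=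
  fun i hi => hp i (h.trans hi)

theorem Fx.lt {m k : ℕ} {p : Perm (Fin m)} (hp : Fx k p) {i : Fin m} (hi : i.1 < k) :
    (p i).1 < k := by
  by_contra h
  have h1 := hp (p i) (not_lt.1 h)
  have h2 := p.injective h1
  rw [h2] at h
  exact h hi

theorem Fx_swap {m k : ℕ} {x y : Fin m} (hx : x.1 < k) (hy : y.1 < k) : Fx k (swap x y) := by
  intro i hi
  apply swap_apply_of_ne_of_ne
  · rintro rfl; omega
  · rintro rfl; omega

/-- Induction for permutations fixing all letters `≥ k`. -/
theorem Fx_comm {m k : ℕ} (x : GA m)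
    (h : ∀ a b : Fin m, a.1 < b.1 → b.1 < k → Commute (o (swap a b)) x)
    (p : Perm (Fin m)) (hp : Fx k p) : Commute (o p) x := by
  have key : ∀ q : Perm {i : Fin m // i.1 < k}, Commute (o (Perm.ofSubtype q)) x := by
    intro q
    induction q using Perm.swap_induction_on with
    | one => rw [map_one, o_one]; exact Commute.one_left x
    | swap_mul f a b hab ih =>
      rw [map_mul, o_mul]
      refine Commute.mul_left ?_ ih
      rw [Perm.ofSubtype_swap_eq]
      rcases lt_trichotomy a.1.1 b.1.1 with h1 | h1 | h1
      · exact h _ _ h1 b.2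
      · exact absurd (Subtype.ext (Fin.ext h1)) hab
      · rw [swap_comm]; exact h _ _ h1 a.2
  have h1 : ∀ i : Fin m, i.1 < k ↔ (p i).1 < k := by
    intro i
    constructor
    · exact hp.lt
    · intro hi
      have := hp.inv.lt hi
      simpa using this
  have h2 := key (p.subtypePerm (p := fun i : Fin m => i.1 < k) (fun i => (h1 i).symm))
  rwa [Perm.ofSubtype_subtypePerm] at h2
  intro i hi
  by_contra hlt
  exact hi (hp i (not_lt.1 hlt))

/-- The Jucys–Murphy element of the letter `k`. -/
def X (m k : ℕ) : GA m :=
  if h : k < m then ∑ j : Fin m, if j.1 < k then o (swap j ⟨k, h⟩) else 0 else 0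

/-- `∏_{i<k} (z + X_i)`. -/
def J (m : ℕ) (z : ℂ) : ℕ → GA m
  | 0 => 1
  | k + 1 => J m z k * (algebraMap ℂ (GA m) z + X m k)

/-- `∑_{i<k} X_i`. -/
def Ls (m : ℕ) : ℕ → GA m
  | 0 => 0
  | k + 1 => Ls m k + X m k

theorem comm_X {m k : ℕ} (p : Perm (Fin m)) (hp : Fx k p) : Commute (o p) (X m k) := by
  unfold X
  split_ifs with h
  · show _ * _ = _ * _
    rw [Finset.mul_sum, Finset.sum_mul]
    refine Fintype.sum_equiv p _ _ ?_
    intro j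
    have h0 : (p j).1 < k ↔ j.1 < k := by
      constructor
      · intro hi
        have := hp.inv.lt hi
        simpa using this
      · exact hp.lt
    by_cases hj : j.1 < k
    · rw [if_pos hj, if_pos (h0.2 hj), ← o_mul, ← o_mul]
      congr 1
      have := Equiv.mul_swap_eq_swap_mul p j ⟨k, h⟩
      rw [this, hp ⟨k, h⟩ le_rfl]
    · rw [if_neg hj, if_neg (fun h' => hj (h0.1 h'))]; simp
  · exact Commute.zero_right _

/-- membership in the span of permutations fixing letters `≥ k`, as a commutation principle. -/
theorem X_comm_of {m k : ℕ} (x : GA m) (h : ∀ p : Perm (Fin m), Fx (k + 1) p → Commute (o p) x) :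
    Commute (X m k) x := by
  unfold X
  split_ifs with hk
  · refine Commute.sum_left _ _ _ fun j _ => ?_
    split_ifs with hj
    · exact h _ (Fx_swap (by omega) (by simp))
    · exact Commute.zero_left _
  · exact Commute.zero_left _

theorem X_X {m : ℕ} (k l : ℕ) : Commute (X m k) (X m l) := by
  rcases lt_trichotomy k l with h | h | h
  · exact X_comm_of _ fun p hp => comm_X p (hp.mono h)
  · rw [h]
  · exact (X_comm_of _ fun p hp => comm_X p (hp.mono h)).symm

theorem X_J {m : ℕ} (k l : ℕ) (z : ℂ) : Commute (X m k) (J m z l) := by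
  induction l with
  | zero => exact Commute.one_right _
  | succ l ih =>
    exact ih.mul_right ((Algebra.commute_algebraMap_right z _).add_right (X_X k l))

theorem X_Ls {m : ℕ} (k l : ℕ) : Commute (X m k) (Ls m l) := by
  induction l with
  | zero => exact Commute.zero_right _
  | succ l ih => exact ih.add_right (X_X k l)

/-- adjacent transposition relation -/
theorem adj_rel {m k : ℕ} (h : k + 1 < m) :
    o (swap (⟨k, by omega⟩ : Fin m) ⟨k + 1, h⟩) * X m k + 1
      = X m (k + 1) * o (swap (⟨k, by omega⟩ : Fin m) ⟨k + 1, h⟩) := by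
  set s := swap (⟨k, by omega⟩ : Fin m) ⟨k + 1, h⟩ with hs
  have h1 : (1 : GA m) = o s * o s := by rw [← o_mul, hs, swap_mul_self, o_one]
  have h2 : X m (k + 1) = o s * X m k * o s + o s := by
    unfold X
    rw [dif_pos h, dif_pos (by omega : k < m), Finset.mul_sum, Finset.sum_mul]
    have h3 : ∀ j : Fin m, (if j.1 < k + 1 then o (swap j (⟨k + 1, h⟩ : Fin m)) else 0 : GA m)
      = (if j.1 < k then o (swap j (⟨k + 1, h⟩ : Fin m)) else 0)
        + (if j = ⟨k, by omega⟩ then o s else 0) := by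
      intro j
      rcases lt_trichotomy j.1 k with h4 | h4 | h4
      · rw [if_pos (by omega), if_pos h4, if_neg, add_zero]
        rintro rfl; simp at h4
      · have : j = ⟨k, by omega⟩ := Fin.ext h4
        rw [if_pos (by omega), if_neg (by omega), if_pos this, zero_add, hs, this]
      · rw [if_neg (by omega), if_neg (by omega), if_neg, add_zero]
        rintro rfl; simp at h4
    rw [Finset.sum_congr rfl fun j _ => h3 j, Finset.sum_add_distrib, Finset.sum_ite_eq']
    rw [if_pos (Finset.mem_univ _)]
    congr 1
    refine Finset.sum_congr rfl fun j _ => ?_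
    split_ifs with h4
    · rw [← o_mul, ← o_mul]
      congr 1
      have e := Equiv.mul_swap_eq_swap_mul s j ⟨k, by omega⟩
      have e1 : s j = j := by
        apply swap_apply_of_ne_of_ne <;> rintro rfl <;> simp at h4
      have e2 : s ⟨k, by omega⟩ = ⟨k + 1, h⟩ := swap_apply_left _ _
      rw [e, e1, e2, mul_assoc, hs, swap_mul_self, mul_one]
    · simp
  rw [h2, add_mul, ← h1, mul_assoc, ← h1, mul_one]

theorem adj_rel' {m k : ℕ} (h : k + 1 < m) :
    X m k * o (swap (⟨k, by omega⟩ : Fin m) ⟨k + 1, h⟩) + 1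
      = o (swap (⟨k, by omega⟩ : Fin m) ⟨k + 1, h⟩) * X m (k + 1) := by
  have h1 := adj_rel h
  set s := swap (⟨k, by omega⟩ : Fin m) ⟨k + 1, h⟩ with hs
  have h2 : o s * o s = 1 := by rw [← o_mul, hs, swap_mul_self, o_one]
  have h3 : o s * (o s * X m k + 1) * o s = o s * (X m (k + 1) * o s) * o s := by rw [h1]
  calc X m k * o s + 1 = (o s * o s) * X m k * o s + o s * o s := by rw [h2, one_mul]
    _ = o s * (o s * X m k + 1) * o s := by noncomm_ring
    _ = o s * (X m (k + 1) * o s) * o s := h3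
    _ = o s * X m (k + 1) * (o s * o s) := by noncomm_ring
    _ = _ := by rw [h2, mul_one]

/-- Extending centrality by one letter. -/
theorem cen_step {m k : ℕ} (x : GA m) (h : ∀ p : Perm (Fin m), Fx (k + 1) p → Commute (o p) x)
    (hs : ∀ h : k + 1 < m, Commute (o (swap (⟨k, by omega⟩ : Fin m) ⟨k + 1, h⟩)) x)
    (p : Perm (Fin m)) (hp : Fx (k + 2) p) : Commute (o p) x := by
  refine Fx_comm x ?_ p hp
  intro a b hab hb
  by_cases hb1 : b.1 < k + 1
  · exact h _ (Fx_swap (by omega) hb1)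
  · have hbk : b.1 = k + 1 := by omega
    have hm : k + 1 < m := hbk ▸ b.2
    obtain rfl : b = ⟨k + 1, hm⟩ := Fin.ext hbk
    by_cases ha : a.1 = k
    · have e : a = ⟨k, by omega⟩ := Fin.ext ha
      rw [e]
      exact hs hm
    · have hak : a ≠ ⟨k, by omega⟩ := fun e => ha (by rw [e])
      have hc := h (swap a ⟨k, by omega⟩) (Fx_swap (by omega) (by simp))
      have e : swap a (⟨k + 1, hm⟩ : Fin m) = swap a ⟨k, by omega⟩ *
          swap (⟨k, by omega⟩ : Fin m) ⟨k + 1, hm⟩ * swap a ⟨k, by omega⟩ := by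
        have e1 := Equiv.mul_swap_eq_swap_mul (swap a (⟨k, by omega⟩ : Fin m)) ⟨k, by omega⟩
          ⟨k + 1, hm⟩
        rw [e1, mul_assoc, swap_mul_self, mul_one, swap_apply_right, swap_apply_of_ne_of_ne]
        · rintro rfl; simp at hab
        · intro e; simp [Fin.ext_iff] at e
      rw [e, o_mul, o_mul]
      exact (hc.mul_left (hs hm)).mul_left hc

theorem Fx_zero {m : ℕ} {p : Perm (Fin m)} (hp : Fx 0 p) : p = 1 := by
  ext i; simp [hp i (Nat.zero_le _)]

theorem Fx_one {m : ℕ} {p : Perm (Fin m)} (hp : Fx 1 p) : p = 1 := by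
  ext i
  by_cases h : 1 ≤ i.1
  · simp [hp i h]
  · have h0 := hp.lt (i := i) (by omega)
    simp; omega

theorem cen_J {m : ℕ} (z : ℂ) (k : ℕ) (p : Perm (Fin m)) (hp : Fx k p) :
    Commute (o p) (J m z k) := by
  induction k using Nat.strong_induction_on generalizing p with
  | _ k ih =>
    match k with
    | 0 => rw [Fx_zero hp, o_one]; exact Commute.one_left _
    | 1 => rw [Fx_one hp, o_one]; exact Commute.one_left _
    | k + 2 =>
      refine cen_step _ ?_ ?_ p hp
      · intro q hq
        exact (ih (k + 1) (by omega) q hq).mul_right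
          ((Algebra.commute_algebraMap_right z _).add_right (comm_X q hq))
      · intro h
        have r1 := adj_rel h
        have r2 := adj_rel' h
        have hx : X m k * X m (k + 1) = X m (k + 1) * X m k := X_X k (k + 1)
        have hJ : Commute (o (swap (⟨k, by omega⟩ : Fin m) ⟨k + 1, h⟩)) (J m z k) := by
          have : ∀ l, l ≤ k → Commute (o (swap (⟨k, by omega⟩ : Fin m) ⟨k + 1, h⟩)) (J m z l) := by
            intro l
            induction l with
            | zero => intro _; exact Commute.one_right _
            | succ l ihl =>
              intro hl
              refine (ihl (by omega)).mul_right ((Algebra.commute_algebraMap_right z _).add_right ?_)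
              refine (X_comm_of _ fun q hq => ?_).symm
              show _ = _
              rw [← o_mul, ← o_mul, Equiv.mul_swap_eq_swap_mul, hq _ (by simpa using hl),
                hq _ (by simp; omega)]
          exact this k le_rfl
        show Commute _ (J m z k * (algebraMap ℂ (GA m) z + X m k)
          * (algebraMap ℂ (GA m) z + X m (k + 1)))
        rw [mul_assoc]
        refine hJ.mul_right ?_
        generalize o (swap (⟨k, by omega⟩ : Fin m) ⟨k + 1, h⟩) = s at *
        generalize X m k = x at *
        generalize X m (k + 1) = y at *
        have hz : ∀ t : GA m, algebraMap ℂ (GA m) z * t = t * algebraMap ℂ (GA m) z :=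
          fun t => Algebra.commutes z t
        generalize algebraMap ℂ (GA m) z = c at *
        show s * ((c + x) * (c + y)) = (c + x) * (c + y) * s
        have e1 : s * x = y * s - 1 := by rw [← r1]; abel
        have e2 : s * y = x * s + 1 := by rw [← r2]
        calc s * ((c + x) * (c + y)) = (s * c + s * x) * (c + y) := by noncomm_ring
          _ = (c * s + (y * s - 1)) * (c + y) := by rw [← hz s, e1]
          _ = (c + y) * (s * c + s * y) - (c + y) := by noncomm_ring
          _ = (c + y) * (c * s + (x * s + 1)) - (c + y) := by rw [← hz s, e2]
          _ = (c * c + c * x + y * c + y * x) * s := by noncomm_ring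
          _ = (c * c + x * c + c * y + x * y) * s := by rw [hz x, ← hz y, hx]
          _ = (c + x) * (c + y) * s := by noncomm_ring

theorem cen_Ls {m : ℕ} (k : ℕ) (p : Perm (Fin m)) (hp : Fx k p) :
    Commute (o p) (Ls m k) := by
  induction k using Nat.strong_induction_on generalizing p with
  | _ k ih =>
    match k with
    | 0 => rw [Fx_zero hp, o_one]; exact Commute.one_left _
    | 1 => rw [Fx_one hp, o_one]; exact Commute.one_left _
    | k + 2 =>
      refine cen_step _ ?_ ?_ p hp
      · intro q hq
        exact (ih (k + 1) (by omega) q hq).add_right (comm_X q hq)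
      · intro h
        have r1 := adj_rel h
        have r2 := adj_rel' h
        have hJ : Commute (o (swap (⟨k, by omega⟩ : Fin m) ⟨k + 1, h⟩)) (Ls m k) := by
          have : ∀ l, l ≤ k → Commute (o (swap (⟨k, by omega⟩ : Fin m) ⟨k + 1, h⟩)) (Ls m l) := by
            intro l
            induction l with
            | zero => intro _; exact Commute.zero_right _
            | succ l ihl =>
              intro hl
              refine (ihl (by omega)).add_right ?_
              refine (X_comm_of _ fun q hq => ?_).symm
              show _ = _
              rw [← o_mul, ← o_mul, Equiv.mul_swap_eq_swap_mul, hq _ (by simpa using hl),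
                hq _ (by simp; omega)]
          exact this k le_rfl
        show Commute _ (Ls m k + X m k + X m (k + 1))
        rw [add_assoc]
        refine hJ.add_right ?_
        show _ * _ = _ * _
        rw [mul_add, add_mul, ← r2, ← r1]
        abel

end WB

namespace WB

open Equiv Mixed

/-- Sign as a complex number. -/
def sg {m : ℕ} (q : Perm (Fin m)) : ℂ := ((Perm.sign q : ℤ) : ℂ)

theorem sg_mul {m : ℕ} (p q : Perm (Fin m)) : sg (p * q) = sg p * sg q := by
  simp [sg, Perm.sign_mul]

theorem sg_sq {m : ℕ} (p : Perm (Fin m)) : sg p * sg p = 1 := by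
  unfold sg
  rcases Int.units_eq_one_or (Perm.sign p) with h | h <;> simp [h]

theorem sg_inv {m : ℕ} (p : Perm (Fin m)) : sg p⁻¹ = sg p := by
  simp [sg]

/-- Row symmetriser of the letters `< k`. -/
def aS {m : ℕ} (f : Fin m → ℕ × ℕ) (k : ℕ) : GA m :=
  ∑ p : Perm (Fin m), if rowPres f p ∧ Fx k p then o p else 0

/-- Column antisymmetriser of the letters `< k`. -/
def bS {m : ℕ} (f : Fin m → ℕ × ℕ) (k : ℕ) : GA m :=
  ∑ q : Perm (Fin m), if colPres f q ∧ Fx k q then sg q • o q else 0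

theorem rowPres_mul {m : ℕ} {f : Fin m → ℕ × ℕ} {p q : Perm (Fin m)} (hp : rowPres f p)
    (hq : rowPres f q) : rowPres f (p * q) := fun x => by
  rw [Perm.mul_apply, hp, hq]

theorem rowPres_inv {m : ℕ} {f : Fin m → ℕ × ℕ} {p : Perm (Fin m)} (hp : rowPres f p) :
    rowPres f p⁻¹ := fun x => by
  have := hp (p⁻¹ x)
  simpa using this.symm

theorem colPres_mul {m : ℕ} {f : Fin m → ℕ × ℕ} {p q : Perm (Fin m)} (hp : colPres f p)
    (hq : colPres f q) : colPres f (p * q) := fun x => by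
  rw [Perm.mul_apply, hp, hq]

theorem colPres_inv {m : ℕ} {f : Fin m → ℕ × ℕ} {p : Perm (Fin m)} (hp : colPres f p) :
    colPres f p⁻¹ := fun x => by
  have := hp (p⁻¹ x)
  simpa using this.symm

theorem rowPres_swap {m : ℕ} {f : Fin m → ℕ × ℕ} {x y : Fin m} (h : (f x).1 = (f y).1) :
    rowPres f (swap x y) := fun z => by
  rcases eq_or_ne z x with rfl | h1
  · simp [h]
  rcases eq_or_ne z y with rfl | h2
  · simp [h]
  rw [swap_apply_of_ne_of_ne h1 h2]

theorem colPres_swap {m : ℕ} {f : Fin m → ℕ × ℕ} {x y : Fin m} (h : (f x).2 = (f y).2) :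
    colPres f (swap x y) := fun z => by
  rcases eq_or_ne z x with rfl | h1
  · simp [h]
  rcases eq_or_ne z y with rfl | h2
  · simp [h]
  rw [swap_apply_of_ne_of_ne h1 h2]

theorem aS_mul {m : ℕ} {f : Fin m → ℕ × ℕ} {k : ℕ} {p : Perm (Fin m)} (hp : rowPres f p)
    (hk : Fx k p) : aS f k * o p = aS f k := by
  unfold aS
  rw [Finset.sum_mul]
  refine Fintype.sum_equiv (Equiv.mulRight p) _ _ fun q => ?_
  have : (rowPres f (q * p) ∧ Fx k (q * p)) ↔ (rowPres f q ∧ Fx k q) := by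
    constructor
    · rintro ⟨h1, h2⟩
      have h3 := rowPres_mul h1 (rowPres_inv hp)
      have h4 := h2.mul hk.inv
      rw [mul_inv_cancel_right] at h3 h4
      exact ⟨h3, h4⟩
    · rintro ⟨h1, h2⟩
      exact ⟨rowPres_mul h1 hp, h2.mul hk⟩
  simp only [coe_mulRight, this, ite_mul, zero_mul, o_mul]

theorem mul_bS {m : ℕ} {f : Fin m → ℕ × ℕ} {k : ℕ} {p : Perm (Fin m)} (hp : colPres f p)
    (hk : Fx k p) : o p * bS f k = sg p • bS f k := by
  unfold bS
  rw [Finset.mul_sum, Finset.smul_sum]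
  refine Fintype.sum_equiv (Equiv.mulLeft p) _ _ fun q => ?_
  have : (colPres f (p * q) ∧ Fx k (p * q)) ↔ (colPres f q ∧ Fx k q) := by
    constructor
    · rintro ⟨h1, h2⟩
      have h3 := colPres_mul (colPres_inv hp) h1
      have h4 := hk.inv.mul h2
      rw [inv_mul_cancel_left] at h3 h4
      exact ⟨h3, h4⟩
    · rintro ⟨h1, h2⟩
      exact ⟨colPres_mul hp h1, hk.mul h2⟩
  simp only [coe_mulLeft, this, mul_ite, mul_zero, smul_ite, smul_zero, o_mul, sg_mul, smul_smul,
    mul_smul_comm, ← mul_assoc, sg_sq, one_mul]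

theorem aS_aS {m : ℕ} (f : Fin m → ℕ × ℕ) {k l : ℕ} (h : k ≤ l) :
    ∃ c : ℂ, c ≠ 0 ∧ aS f l * aS f k = c • aS f l := by
  refine ⟨((Finset.univ.filter fun p : Perm (Fin m) => rowPres f p ∧ Fx k p).card : ℂ), ?_, ?_⟩
  · rw [Nat.cast_ne_zero]
    apply Finset.card_ne_zero_of_mem (a := 1)
    exact Finset.mem_filter.2 ⟨Finset.mem_univ _, fun _ => rfl, fun _ _ => rfl⟩
  · conv_lhs => rw [show aS f k = ∑ p : Perm (Fin m), if rowPres f p ∧ Fx k p then o p else 0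
      from rfl]
    rw [Finset.mul_sum, ← Finset.sum_filter_add_sum_filter_not _
      (fun p : Perm (Fin m) => rowPres f p ∧ Fx k p)]
    rw [Finset.sum_congr rfl (g := fun _ => aS f l), Finset.sum_eq_zero
      (s := Finset.univ.filter fun p : Perm (Fin m) => ¬ (rowPres f p ∧ Fx k p))]
    · simp [Nat.cast_smul_eq_nsmul]
    · intro p hp
      rw [Finset.mem_filter] at hp
      rw [if_neg hp.2, mul_zero]
    · intro p hp
      rw [Finset.mem_filter] at hp
      rw [if_pos hp.2, aS_mul hp.2.1 (hp.2.2.mono h)]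

theorem bS_bS {m : ℕ} (f : Fin m → ℕ × ℕ) {k l : ℕ} (h : k ≤ l) :
    ∃ c : ℂ, c ≠ 0 ∧ bS f k * bS f l = c • bS f l := by
  refine ⟨((Finset.univ.filter fun p : Perm (Fin m) => colPres f p ∧ Fx k p).card : ℂ), ?_, ?_⟩
  · rw [Nat.cast_ne_zero]
    apply Finset.card_ne_zero_of_mem (a := 1)
    exact Finset.mem_filter.2 ⟨Finset.mem_univ _, fun _ => rfl, fun _ _ => rfl⟩
  · conv_lhs => rw [show bS f k = ∑ p : Perm (Fin m), if colPres f p ∧ Fx k p then sg p • o p else 0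
      from rfl]
    rw [Finset.sum_mul, ← Finset.sum_filter_add_sum_filter_not _
      (fun p : Perm (Fin m) => colPres f p ∧ Fx k p)]
    rw [Finset.sum_congr rfl (g := fun _ => bS f l), Finset.sum_eq_zero
      (s := Finset.univ.filter fun p : Perm (Fin m) => ¬ (colPres f p ∧ Fx k p))]
    · simp [Nat.cast_smul_eq_nsmul]
    · intro p hp
      rw [Finset.mem_filter] at hp
      rw [if_neg hp.2, zero_mul]
    · intro p hp
      rw [Finset.mem_filter] at hp
      rw [if_pos hp.2, smul_mul_assoc, mul_bS hp.2.1 (hp.2.2.mono h), smul_smul, sg_sq, one_smul]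

/-- A standard filling. -/
structure Std (m : ℕ) (ρ : YoungDiagram) (f : Fin m → ℕ × ℕ) : Prop where
  tab : IsTableau m ρ f
  mono : ∀ i j, (f i).1 ≤ (f j).1 → (f i).2 ≤ (f j).2 → i ≤ j

/-- The content of a cell, as a complex number. -/
def cc (c : ℕ × ℕ) : ℂ := (c.2 : ℂ) - (c.1 : ℂ)

theorem Std.mem {m : ℕ} {ρ : YoungDiagram} {f : Fin m → ℕ × ℕ} (h : Std m ρ f) (i : Fin m) :
    f i ∈ ρ := by
  have : f i ∈ Set.range f := ⟨i, rfl⟩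
  rw [h.tab.2] at this
  exact this

theorem Std.ex {m : ℕ} {ρ : YoungDiagram} {f : Fin m → ℕ × ℕ} (h : Std m ρ f) {c : ℕ × ℕ}
    (hc : c ∈ ρ) : ∃ i, f i = c := by
  have : c ∈ (ρ.cells : Set (ℕ × ℕ)) := hc
  rw [← h.tab.2] at this
  exact this

theorem sandwich_zero {m : ℕ} {f : Fin m → ℕ × ℕ} {k : ℕ} {x y z : Fin m} (hx : x.1 < k)
    (hy : y.1 < k) (hz : z.1 < k) (hxy : x ≠ y) (hzx : z ≠ x) (hzy : z ≠ y)
    (hr : (f z).1 = (f x).1) (hc : (f z).2 = (f y).2) :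
    aS f k * o (swap x y) * bS f k = 0 := by
  have e1 : swap x y = swap x z * swap z y * swap x z := by
    have e1 := Equiv.mul_swap_eq_swap_mul (swap x z) z y
    rw [e1, mul_assoc, swap_mul_self, mul_one, swap_apply_right, swap_apply_of_ne_of_ne] <;>
      exact Ne.symm ‹_›
  have e2 : swap x y = swap z y * swap x z * swap z y := by
    have e1 := Equiv.mul_swap_eq_swap_mul (swap z y) x z
    rw [e1, mul_assoc, swap_mul_self, mul_one, swap_apply_left, swap_apply_of_ne_of_ne] <;>
      first | exact hxy | exact hzx.symm
  have ha : aS f k * o (swap x z) = aS f k := aS_mul (rowPres_swap hr.symm) (Fx_swap hx hz)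
  have hb : o (swap z y) * bS f k = - bS f k := by
    rw [mul_bS (colPres_swap hc) (Fx_swap hz hy)]
    simp [sg, Perm.sign_swap hzy]
  have h1 : aS f k * o (swap x y) * bS f k = aS f k * o (swap z y) * o (swap x z) * bS f k := by
    conv_lhs => rw [e1, o_mul, o_mul, ← mul_assoc, ← mul_assoc, ha]
  have h2 : aS f k * o (swap x y) * bS f k = - (aS f k * o (swap z y) * o (swap x z) * bS f k) := by
    conv_lhs => rw [e2, o_mul, o_mul, mul_assoc, mul_assoc, mul_assoc, hb]
    simp [mul_assoc]
  rw [← h1] at h2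
  have h3 : (2 : ℂ) • (aS f k * o (swap x y) * bS f k) = 0 := by
    rw [two_smul]
    nth_rewrite 1 [h2]
    exact neg_add_cancel _
  exact (smul_eq_zero.1 h3).resolve_left two_ne_zero

/-- The number of letters before `k` in the row of `k`. -/
theorem row_count {m : ℕ} {ρ : YoungDiagram} {f : Fin m → ℕ × ℕ} (h : Std m ρ f) (k : Fin m) :
    (Finset.univ.filter fun j : Fin m => j < k ∧ (f j).1 = (f k).1).card = (f k).2 := by
  rw [← Finset.card_range (f k).2]
  refine Finset.card_bij (fun j _ => (f j).2) ?_ ?_ ?_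
  · intro j hj
    simp only [Finset.mem_filter, Finset.mem_univ, true_and] at hj
    rw [Finset.mem_range]
    by_contra hlt
    exact absurd (h.mono k j hj.2.ge (not_lt.1 hlt)) (not_le.2 hj.1)
  · intro i hi j hj e
    simp only [Finset.mem_filter, Finset.mem_univ, true_and] at hi hj
    exact h.tab.1 (Prod.ext (hi.2.trans hj.2.symm) e)
  · intro c hc
    rw [Finset.mem_range] at hc
    have hm : ((f k).1, c) ∈ ρ := ρ.up_left_mem le_rfl hc.le (h.mem k)
    obtain ⟨i, hi⟩ := h.ex hm
    refine ⟨i, ?_, by rw [hi]⟩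
    simp only [Finset.mem_filter, Finset.mem_univ, true_and, hi, and_true]
    refine lt_of_le_of_ne (h.mono i k (by rw [hi]) (by rw [hi]; exact hc.le)) ?_
    rintro rfl
    rw [Prod.ext_iff] at hi
    exact absurd hi.2 (by simp; omega)

/-- The number of letters before `k` in the column of `k`. -/
theorem col_count {m : ℕ} {ρ : YoungDiagram} {f : Fin m → ℕ × ℕ} (h : Std m ρ f) (k : Fin m) :
    (Finset.univ.filter fun j : Fin m => j < k ∧ (f j).2 = (f k).2).card = (f k).1 := by
  rw [← Finset.card_range (f k).1]
  refine Finset.card_bij (fun j _ => (f j).1) ?_ ?_ ?_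
  · intro j hj
    simp only [Finset.mem_filter, Finset.mem_univ, true_and] at hj
    rw [Finset.mem_range]
    by_contra hlt
    exact absurd (h.mono k j (not_lt.1 hlt) hj.2.ge) (not_le.2 hj.1)
  · intro i hi j hj e
    simp only [Finset.mem_filter, Finset.mem_univ, true_and] at hi hj
    exact h.tab.1 (Prod.ext e (hi.2.trans hj.2.symm))
  · intro c hc
    rw [Finset.mem_range] at hc
    have hm : (c, (f k).2) ∈ ρ := ρ.up_left_mem hc.le le_rfl (h.mem k)
    obtain ⟨i, hi⟩ := h.ex hm
    refine ⟨i, ?_, by rw [hi]⟩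
    simp only [Finset.mem_filter, Finset.mem_univ, true_and, hi, and_true]
    refine lt_of_le_of_ne (h.mono i k (by rw [hi]; exact hc.le) (by rw [hi])) ?_
    rintro rfl
    rw [Prod.ext_iff] at hi
    exact absurd hi.1 (by simp; omega)

theorem aXb {m : ℕ} {ρ : YoungDiagram} {f : Fin m → ℕ × ℕ} (h : Std m ρ f) (k : ℕ) (hk : k < m) :
    aS f (k + 1) * X m k * bS f (k + 1)
      = cc (f ⟨k, hk⟩) • (aS f (k + 1) * bS f (k + 1)) := by
  unfold X
  rw [dif_pos hk, Finset.mul_sum, Finset.sum_mul]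
  have key : ∀ j : Fin m,
      aS f (k + 1) * (if j.1 < k then o (swap j ⟨k, hk⟩) else 0) * bS f (k + 1)
      = ((if j < ⟨k, hk⟩ ∧ (f j).1 = (f ⟨k, hk⟩).1 then (1 : ℂ) else 0)
        - (if j < ⟨k, hk⟩ ∧ (f j).2 = (f ⟨k, hk⟩).2 then (1 : ℂ) else 0))
          • (aS f (k + 1) * bS f (k + 1)) := by
    intro j
    by_cases hj : j.1 < k
    · have hj' : j < ⟨k, hk⟩ := hj
      have hne : j ≠ ⟨k, hk⟩ := ne_of_lt hj'
      rw [if_pos hj]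
      simp only [hj', true_and]
      by_cases hr : (f j).1 = (f ⟨k, hk⟩).1
      · have hc : (f j).2 ≠ (f ⟨k, hk⟩).2 := fun hc => hne (h.tab.1 (Prod.ext hr hc))
        rw [if_pos hr, if_neg hc, aS_mul (rowPres_swap hr) (Fx_swap (by omega) (by simp))]
        simp
      · by_cases hc : (f j).2 = (f ⟨k, hk⟩).2
        · rw [if_neg hr, if_pos hc, mul_assoc,
            mul_bS (colPres_swap hc) (Fx_swap (by omega) (by simp))]
          simp [sg, Perm.sign_swap hne]
        · rw [if_neg hr, if_neg hc, sub_zero, zero_smul]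
          rcases lt_or_gt_of_ne hr with hlt | hlt
          · have hm : ((f j).1, (f ⟨k, hk⟩).2) ∈ ρ := ρ.up_left_mem hlt.le le_rfl (h.mem _)
            obtain ⟨z, hz⟩ := h.ex hm
            have hzk := h.mono z ⟨k, hk⟩ (by rw [hz]; exact hlt.le) (by rw [hz])
            refine sandwich_zero (z := z) (by omega) (by simp)
              (Nat.lt_succ_of_le hzk) hne ?_ ?_ (by rw [hz]) (by rw [hz])
            · rintro rfl; rw [Prod.ext_iff] at hz; exact hc hz.2
            · rintro rfl; rw [Prod.ext_iff] at hz; exact hr hz.1.symm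
          · have hm : ((f ⟨k, hk⟩).1, (f j).2) ∈ ρ := ρ.up_left_mem hlt.le le_rfl (h.mem _)
            obtain ⟨z, hz⟩ := h.ex hm
            have hzk := h.mono z j (by rw [hz]; exact hlt.le) (by rw [hz])
            rw [swap_comm]
            refine sandwich_zero (z := z) (by simp) (by omega)
              (lt_of_le_of_lt hzk (by omega)) hne.symm ?_ ?_ (by rw [hz]) (by rw [hz])
            · rintro rfl; rw [Prod.ext_iff] at hz; exact hc hz.2.symm
            · rintro rfl; rw [Prod.ext_iff] at hz; exact hr hz.1
    · have hj' : ¬ j < ⟨k, hk⟩ := hj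
      simp [hj, hj']
  rw [Finset.sum_congr rfl fun j _ => key j, ← Finset.sum_smul]
  congr 1
  rw [Finset.sum_sub_distrib, Finset.sum_boole, Finset.sum_boole, row_count h, col_count h]
  rfl

/-- One inductive step. -/
theorem step_ab {m : ℕ} (f : Fin m → ℕ × ℕ) (k : ℕ) (x y : GA m) (c : ℂ)
    (hy : ∀ p, Fx k p → Commute (o p) y)
    (hx : ∀ p, Fx k p → Commute (o p) x)
    (h : x * (aS f k * bS f k) = c • (aS f k * bS f k)) :
    aS f (k + 1) * (x * y) * bS f (k + 1) = c • (aS f (k + 1) * y * bS f (k + 1)) := by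
  obtain ⟨c1, hc1, e1⟩ := aS_aS f (Nat.le_succ k)
  obtain ⟨c2, hc2, e2⟩ := bS_bS f (Nat.le_succ k)
  have hxa : aS f k * x = x * aS f k := by
    unfold aS
    refine Commute.sum_left _ _ _ fun p _ => ?_
    split_ifs with hp
    · exact hx p hp.2
    · exact Commute.zero_left _
  have hyb : y * bS f k = bS f k * y := by
    unfold bS
    refine Commute.sum_right _ _ _ fun p _ => ?_
    split_ifs with hp
    · exact ((hy p hp.2).smul_left _).symm
    · exact Commute.zero_right _
  have e : ∀ w : GA m, (c1 * c2) • (aS f (k + 1) * w * bS f (k + 1))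
      = aS f (k + 1) * (aS f k * w * bS f k) * bS f (k + 1) := by
    intro w
    calc (c1 * c2) • (aS f (k + 1) * w * bS f (k + 1))
        = (c1 • aS f (k + 1)) * w * (c2 • bS f (k + 1)) := by
          simp [smul_smul, mul_comm]
      _ = _ := by rw [← e1, ← e2]; noncomm_ring
  have hne : c1 * c2 ≠ 0 := mul_ne_zero hc1 hc2
  have : (c1 * c2) • (aS f (k + 1) * (x * y) * bS f (k + 1))
      = (c1 * c2) • (c • (aS f (k + 1) * y * bS f (k + 1))) := by
    rw [e, smul_comm, e]
    have : aS f k * (x * y) * bS f k = c • (aS f k * y * bS f k) := by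
      calc aS f k * (x * y) * bS f k = (aS f k * x) * (y * bS f k) := by noncomm_ring
        _ = (x * (aS f k * bS f k)) * y := by rw [hxa, hyb]; noncomm_ring
        _ = c • (aS f k * bS f k * y) := by rw [h, smul_mul_assoc]
        _ = _ := by rw [mul_assoc, ← hyb, ← mul_assoc]
    rw [this]
    simp
  exact (smul_right_injective _ hne) this

/-- `∏_{i<k} (z + c_i)`. -/
def PJ {m : ℕ} (f : Fin m → ℕ × ℕ) (z : ℂ) : ℕ → ℂ
  | 0 => 1
  | k + 1 => PJ f z k * (z + if h : k < m then cc (f ⟨k, h⟩) else 0)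

/-- `∑_{i<k} c_i`. -/
def PL {m : ℕ} (f : Fin m → ℕ × ℕ) : ℕ → ℂ
  | 0 => 0
  | k + 1 => PL f k + if h : k < m then cc (f ⟨k, h⟩) else 0

theorem comm_aS {m k : ℕ} {f : Fin m → ℕ × ℕ} {x : GA m} (hx : ∀ p, Fx k p → Commute (o p) x) :
    x * aS f k = aS f k * x := by
  unfold aS
  refine Commute.sum_right _ _ _ fun p _ => ?_
  split_ifs with hp
  · exact (hx p hp.2).symm
  · exact Commute.zero_right _

theorem J_ab {m : ℕ} {ρ : YoungDiagram} {f : Fin m → ℕ × ℕ} (h : Std m ρ f) (z : ℂ) (k : ℕ)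
    (hk : k ≤ m) : J m z k * (aS f k * bS f k) = PJ f z k • (aS f k * bS f k) := by
  induction k with
  | zero => simp [J, PJ]
  | succ k ih =>
    have hkm : k < m := hk
    rw [← mul_assoc, comm_aS (cen_J z (k + 1))]
    have s := step_ab f k (J m z k) (algebraMap ℂ (GA m) z + X m k) (PJ f z k)
      (fun p hp => (Algebra.commute_algebraMap_right z _).add_right (comm_X p hp))
      (cen_J z k) (ih hkm.le)
    rw [show J m z (k + 1) = J m z k * (algebraMap ℂ (GA m) z + X m k) from rfl, s]
    rw [mul_add, add_mul, aXb h k hkm]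
    rw [← Algebra.commutes, mul_assoc, ← Algebra.smul_def, ← add_smul, smul_smul]
    rw [PJ, dif_pos hkm]

theorem Ls_ab {m : ℕ} {ρ : YoungDiagram} {f : Fin m → ℕ × ℕ} (h : Std m ρ f) (k : ℕ)
    (hk : k ≤ m) : Ls m k * (aS f k * bS f k) = PL f k • (aS f k * bS f k) := by
  induction k with
  | zero => simp [Ls, PL]
  | succ k ih =>
    have hkm : k < m := hk
    rw [← mul_assoc, comm_aS (cen_Ls (k + 1))]
    have s := step_ab f k (Ls m k) 1 (PL f k)
      (fun p hp => Commute.one_right _)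
      (cen_Ls k) (ih hkm.le)
    rw [mul_one, mul_one] at s
    rw [show Ls m (k + 1) = Ls m k + X m k from rfl]
    rw [mul_add, add_mul, aXb h k hkm, s, ← add_smul]
    rw [PL, dif_pos hkm]

end WB

namespace WB

open Equiv Mixed

/-- The Young diagram of a partition. -/
def Y {m : ℕ} (p : m.Partition) : YoungDiagram :=
  YoungDiagram.ofRowLens (p.parts.sort (· ≥ ·)) (Multiset.pairwise_sort _ _).sortedGE

theorem card_cellsOfRowLens (w : List ℕ) : (YoungDiagram.cellsOfRowLens w).card = w.sum := by
  induction w with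
  | nil => simp [YoungDiagram.cellsOfRowLens]
  | cons w ws ih =>
    rw [YoungDiagram.cellsOfRowLens, Finset.card_union_of_disjoint]
    · simp [ih]
    · rw [Finset.disjoint_left]
      rintro ⟨a, b⟩ h1 h2
      simp at h1 h2
      omega

theorem Y_card {m : ℕ} (p : m.Partition) : (Y p).cells.card = m := by
  have h : (Y p).cells = YoungDiagram.cellsOfRowLens (p.parts.sort (· ≥ ·)) := rfl
  rw [h, card_cellsOfRowLens, ← Multiset.sum_coe, Multiset.sort_eq, p.parts_sum]

theorem Y_inj {m : ℕ} : Function.Injective (Y (m := m)) := by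
  intro p q h
  have h1 := congrArg YoungDiagram.rowLens h
  unfold Y at h1
  rw [YoungDiagram.rowLens_ofRowLens_eq_self, YoungDiagram.rowLens_ofRowLens_eq_self] at h1
  · apply Nat.Partition.ext
    rw [← Multiset.sort_eq p.parts (· ≥ ·), h1, Multiset.sort_eq]
  · intro x hx
    exact q.parts_pos ((Multiset.mem_sort _).1 hx)
  · intro x hx
    exact p.parts_pos ((Multiset.mem_sort _).1 hx)

/-- The cells of a diagram, in lexicographic order. -/
def lexCells (ρ : YoungDiagram) : Finset (ℕ ×ₗ ℕ) := ρ.cells.map toLex.toEmbedding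

/-- A standard filling. -/
def stf {m : ℕ} (p : m.Partition) (i : Fin m) : ℕ × ℕ :=
  ofLex ((lexCells (Y p)).orderEmbOfFin (k := m) (by simp [lexCells, Y_card]) i)

theorem stf_std {m : ℕ} (p : m.Partition) : Std m (Y p) (stf p) := by
  refine ⟨⟨?_, ?_⟩, ?_⟩
  · intro i j h
    exact ((lexCells (Y p)).orderEmbOfFin _).injective (ofLex.injective h)
  · have h := Finset.range_orderEmbOfFin (lexCells (Y p)) (k := m) (by simp [lexCells, Y_card])
    have : stf p = fun i => ofLex ((lexCells (Y p)).orderEmbOfFin (k := m) (by simp [lexCells, Y_card]) i) := rfl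
    rw [this, Set.range_comp', h]
    ext c
    simp [lexCells]
  · intro i j h1 h2
    rw [← ((lexCells (Y p)).orderEmbOfFin (k := m) (by simp [lexCells, Y_card])).le_iff_le]
    exact Prod.Lex.toLex_mono (a := stf p i) (b := stf p j) ⟨h1, h2⟩

theorem PJ_eq {m : ℕ} (f : Fin m → ℕ × ℕ) (z : ℂ) (k : ℕ) (hk : k ≤ m) :
    PJ f z k = ∏ i : Fin k, (z + cc (f (Fin.castLE hk i))) := by
  induction k with
  | zero => simp [PJ]
  | succ k ih =>
    rw [Fin.prod_univ_castSucc, PJ, ih (by omega), dif_pos (by omega)]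
    rfl

theorem PL_eq {m : ℕ} (f : Fin m → ℕ × ℕ) (k : ℕ) (hk : k ≤ m) :
    PL f k = ∑ i : Fin k, (cc (f (Fin.castLE hk i))) := by
  induction k with
  | zero => simp [PL]
  | succ k ih =>
    rw [Fin.sum_univ_castSucc, PL, ih (by omega), dif_pos (by omega)]
    rfl

/-- Content polynomial. -/
def Pp (ρ : YoungDiagram) (z : ℂ) : ℂ := ∏ c ∈ ρ.cells, (z + cc c)

theorem tab_image {m : ℕ} {ρ : YoungDiagram} {f : Fin m → ℕ × ℕ} (h : IsTableau m ρ f) :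
    ρ.cells = Finset.univ.image f := by
  ext c
  have := Set.ext_iff.1 h.2 c
  simp at this
  simp [this]

theorem PJ_Pp {m : ℕ} {ρ : YoungDiagram} {f : Fin m → ℕ × ℕ} (h : IsTableau m ρ f) (z : ℂ) :
    PJ f z m = Pp ρ z := by
  rw [PJ_eq f z m le_rfl, Pp, tab_image h, Finset.prod_image (fun a _ b _ e => h.1 e)]
  rfl

theorem PL_content {m : ℕ} {ρ : YoungDiagram} {f : Fin m → ℕ × ℕ} (h : IsTableau m ρ f) :
    PL f m = (content ρ : ℂ) := by
  rw [PL_eq f m le_rfl, content, tab_image h, Finset.sum_image (fun a _ b _ e => h.1 e)]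
  push_cast
  rfl

/-- The Young symmetriser. -/
def cS {m : ℕ} (p : m.Partition) : GA m := aS (stf p) m * bS (stf p) m

theorem J_cS {m : ℕ} (p : m.Partition) (z : ℂ) : J m z m * cS p = Pp (Y p) z • cS p := by
  rw [cS, J_ab (stf_std p) z m le_rfl, PJ_Pp (stf_std p).tab]

theorem Ls_cS {m : ℕ} (p : m.Partition) : Ls m m * cS p = (content (Y p) : ℂ) • cS p := by
  rw [cS, Ls_ab (stf_std p) m le_rfl, PL_content (stf_std p).tab]

theorem Fx_top {m : ℕ} (p : Perm (Fin m)) : Fx m p := fun i hi => absurd i.2 (by omega)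

/-- Content polynomial as a polynomial. -/
def Pq (ρ : YoungDiagram) : Polynomial ℂ :=
  ((ρ.cells.val.map (fun c => - cc c)).map (fun a => Polynomial.X - Polynomial.C a)).prod

theorem Pq_eval (ρ : YoungDiagram) (z : ℂ) : (Pq ρ).eval z = Pp ρ z := by
  rw [Pq, Polynomial.eval_multiset_prod, Pp, Finset.prod, Multiset.map_map, Multiset.map_map]
  simp

theorem contain {ρ μ : YoungDiagram} (xs : Multiset ℂ)
    (h : ∀ z, Pp ρ z = Pp μ z * (xs.map (fun x => z + x)).prod) : μ.cells ⊆ ρ.cells := by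
  have h1 : Pq ρ = Pq μ * ((xs.map (fun x => -x)).map
      (fun a => Polynomial.X - Polynomial.C a)).prod := by
    apply Polynomial.funext
    intro z
    rw [Polynomial.eval_mul, Pq_eval, Pq_eval, h, Polynomial.eval_multiset_prod,
      Multiset.map_map, Multiset.map_map]
    simp
  unfold Pq at h1
  rw [← Multiset.prod_add, ← Multiset.map_add] at h1
  have h2 := congrArg Polynomial.roots h1
  rw [Polynomial.roots_multiset_prod_X_sub_C, Polynomial.roots_multiset_prod_X_sub_C] at h2
  rintro ⟨i, j⟩ hc
  by_contra hn
  have h3 := congrArg (Multiset.count (- cc (i, j))) h2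
  rw [Multiset.count_add, Multiset.count_map, Multiset.count_map] at h3
  have h4 : (ρ.cells.filter (fun c => - cc (i,j) = - cc c)) ⊂
      (μ.cells.filter (fun c => - cc (i,j) = - cc c)) := by
    rw [Finset.ssubset_iff_of_subset]
    · exact ⟨(i, j), by simpa using hc, by simp; simpa using hn⟩
    · rintro ⟨a, b⟩ hab
      simp only [Finset.mem_filter, neg_inj, cc] at hab ⊢
      refine ⟨?_, hab.2⟩
      have e : (j : ℂ) + a = b + i := by linear_combination hab.2
      have e' : j + a = b + i := by exact_mod_cast e
      have hlt : a < i := by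
        by_contra hge
        apply hn
        exact ρ.isLowerSet (a := (a, b)) (b := (i, j)) (Prod.mk_le_mk.2 ⟨by omega, by omega⟩) hab.1
      exact μ.isLowerSet (a := (i, j)) (b := (a, b)) (Prod.mk_le_mk.2 ⟨by omega, by omega⟩) hc
  have h5 := Finset.card_lt_card h4
  simp only [Finset.card, Finset.filter_val] at h5
  omega

theorem Pq_inj {m : ℕ} : Function.Injective (fun p : m.Partition => Pq (Y p)) := by
  intro p q h
  apply Y_inj
  have e : ∀ z, Pp (Y p) z = Pp (Y q) z := fun z => by
    rw [← Pq_eval, ← Pq_eval]; exact congrArg _ h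
  apply YoungDiagram.ext
  apply subset_antisymm
  · exact contain 0 (fun z => by simp [e])
  · exact contain 0 (fun z => by simp [e])

theorem exists_z (m : ℕ) : ∃ z : ℂ, Function.Injective (fun p : m.Partition => Pp (Y p) z) := by
  by_contra! hcon
  have : (∏ x ∈ (Finset.univ : Finset (m.Partition × m.Partition)).filter (fun x => x.1 ≠ x.2),
      (Pq (Y x.1) - Pq (Y x.2))) = 0 := by
    apply Polynomial.funext
    intro z
    have := hcon z
    rw [Function.not_injective_iff] at this
    obtain ⟨a, b, hab, hne⟩ := this
    rw [Polynomial.eval_prod, Polynomial.eval_zero]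
    apply Finset.prod_eq_zero (i := (a, b))
    · simp [hne]
    · simp [Pq_eval, hab]
  rw [Finset.prod_eq_zero_iff] at this
  obtain ⟨⟨a, b⟩, hab, h⟩ := this
  simp at hab
  exact hab (Pq_inj (sub_eq_zero.1 h))

end WB

namespace WB

open Equiv Mixed

/-- Coefficient functional. -/
def cf {m : ℕ} (g : Perm (Fin m)) : GA m →ₗ[ℂ] ℂ where
  toFun x := x.coeff g
  map_add' _ _ := rfl
  map_smul' _ _ := rfl

theorem cf_o {m : ℕ} (g p : Perm (Fin m)) : cf g (o p) = if p = g then 1 else 0 := by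
  show (MonoidAlgebra.single p (1:ℂ)).coeff g = _
  rw [MonoidAlgebra.coeff_single, Finsupp.single_apply]

theorem o_expand {m : ℕ} (x : GA m) : x = ∑ p, cf p x • o p := by
  conv_lhs => rw [← MonoidAlgebra.sum_coeff_single x]
  rw [Finsupp.sum_fintype]
  · refine Finset.sum_congr rfl fun p _ => ?_
    show _ = x.coeff p • MonoidAlgebra.single p (1:ℂ)
    rw [MonoidAlgebra.smul_single', mul_one]
  · intro p
    simp

theorem cf_ext {m : ℕ} {x y : GA m} (h : ∀ p, cf p x = cf p y) : x = y := by
  rw [o_expand x, o_expand y]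
  simp [h]

theorem cf_conj {m : ℕ} (g h : Perm (Fin m)) (x : GA m) :
    cf h (o g * x * o g⁻¹) = cf (g⁻¹ * h * g) x := by
  rw [o_expand x]
  simp only [Finset.mul_sum, Finset.sum_mul, map_sum, mul_smul_comm, smul_mul_assoc, map_smul,
    ← o_mul, cf_o]
  refine Finset.sum_congr rfl fun p _ => ?_
  have : g * p * g⁻¹ = h ↔ p = g⁻¹ * h * g := by
    constructor
    · rintro rfl; group
    · rintro rfl; group
  simp [this]

theorem comm_all {m : ℕ} {x : GA m} (h : ∀ p, Commute (o p) x) (y : GA m) : Commute y x := by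
  rw [o_expand y]
  apply Commute.sum_left
  intro p _
  exact (h p).smul_left _

theorem cS_expand {m : ℕ} (p : m.Partition) : cS p = ∑ u : Perm (Fin m), ∑ v : Perm (Fin m),
    if rowPres (stf p) u ∧ colPres (stf p) v then sg v • o (u * v) else 0 := by
  unfold cS aS bS
  simp only [Finset.mul_sum, Finset.sum_mul]
  rw [Finset.sum_comm]
  refine Finset.sum_congr rfl fun u _ => Finset.sum_congr rfl fun v _ => ?_
  by_cases h1 : rowPres (stf p) u <;> by_cases h2 : colPres (stf p) v <;>
    simp [h1, h2, Fx_top, o_mul]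

theorem cf_cS {m : ℕ} (p : m.Partition) : cf 1 (cS p) = 1 := by
  have key : ∀ u v : Perm (Fin m), rowPres (stf p) u → colPres (stf p) v → u * v = 1 →
      u = 1 ∧ v = 1 := by
    intro u v hu hv h
    have e : u = v⁻¹ := eq_inv_of_mul_eq_one_left h
    have hc := colPres_inv hv
    rw [← e] at hc
    have : u = 1 := by
      ext x
      have : u x = x := (stf_std p).tab.1 (Prod.ext (hu x) (hc x))
      simp [this]
    refine ⟨this, ?_⟩
    rw [this, one_mul] at h
    exact h
  rw [cS_expand]
  simp only [map_sum]
  rw [Finset.sum_eq_single 1, Finset.sum_eq_single 1]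
  · rw [if_pos ⟨fun x => rfl, fun x => rfl⟩, map_smul, cf_o]
    simp [sg]
  · intro v _ hv
    split_ifs with h
    · rw [map_smul, cf_o, if_neg, smul_zero]
      intro e
      exact hv (key _ _ h.1 h.2 e).2
    · simp
  · simp
  · intro u _ hu
    apply Finset.sum_eq_zero
    intro v _
    split_ifs with h
    · rw [map_smul, cf_o, if_neg, smul_zero]
      intro e
      exact hu (key _ _ h.1 h.2 e).1
    · simp
  · simp

/-- Central elements. -/
def zS {m : ℕ} (p : m.Partition) : GA m := ∑ g : Perm (Fin m), o g * cS p * o g⁻¹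

theorem zS_ne {m : ℕ} (p : m.Partition) : zS p ≠ 0 := by
  intro h
  have := congrArg (cf 1) h
  rw [zS, map_sum] at this
  simp only [cf_conj, mul_one, inv_mul_cancel, cf_cS, map_zero] at this
  simp at this

theorem zS_conj {m : ℕ} (p : m.Partition) (h : Perm (Fin m)) : o h * zS p * o h⁻¹ = zS p := by
  rw [zS, Finset.mul_sum, Finset.sum_mul]
  apply Fintype.sum_equiv (Equiv.mulLeft h)
  intro g
  simp only [Equiv.coe_mulLeft, mul_inv_rev, o_mul, mul_assoc]

theorem J_cen {m : ℕ} (z : ℂ) (x : GA m) : Commute x (J m z m) :=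
  comm_all (fun p => cen_J z m p (Fx_top p)) x

theorem Ls_cen {m : ℕ} (x : GA m) : Commute x (Ls m m) :=
  comm_all (fun p => cen_Ls m p (Fx_top p)) x

theorem J_zS {m : ℕ} (p : m.Partition) (z : ℂ) : J m z m * zS p = Pp (Y p) z • zS p := by
  rw [zS, Finset.mul_sum, Finset.smul_sum]
  refine Finset.sum_congr rfl fun g _ => ?_
  rw [← mul_assoc, ← mul_assoc, ← (J_cen z (o g)).eq, mul_assoc (o g), J_cS]
  simp

/-- Class functions. -/
def Phi (m : ℕ) : ((Fintype.card (Fin m)).Partition → ℂ) →ₗ[ℂ] GA m where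
  toFun φ := ∑ p : Perm (Fin m), φ p.partition • o p
  map_add' φ ψ := by simp [add_smul, Finset.sum_add_distrib]
  map_smul' c φ := by simp [mul_smul, Finset.smul_sum]

theorem mem_Phi {m : ℕ} (x : GA m) (h : ∀ g, o g * x * o g⁻¹ = x) : x ∈ LinearMap.range (Phi m) := by
  have hc : ∀ p q : Perm (Fin m), p.partition = q.partition → cf p x = cf q x := by
    intro p q hpq
    rw [← Perm.partition_eq_of_isConj, isConj_iff] at hpq
    obtain ⟨c, rfl⟩ := hpq
    conv_rhs => rw [← h c]
    rw [cf_conj]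
    congr 2
    group
  refine ⟨fun P => if hP : ∃ p : Perm (Fin m), p.partition = P then cf hP.choose x else 0, ?_⟩
  show ∑ p : Perm (Fin m), _ = x
  conv_rhs => rw [o_expand x]
  refine Finset.sum_congr rfl fun p _ => ?_
  have hP : ∃ q : Perm (Fin m), q.partition = p.partition := ⟨p, rfl⟩
  beta_reduce
  rw [dif_pos hP, hc _ _ hP.choose_spec]

theorem card_part (m : ℕ) : Fintype.card (Fintype.card (Fin m)).Partition = Fintype.card m.Partition := by
  have : ∀ k, k = m → Fintype.card k.Partition = Fintype.card m.Partition := by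
    rintro k rfl; rfl
  exact this _ (Fintype.card_fin m)

instance (m : ℕ) : Module.Finite ℂ (LinearMap.range (Phi m)) := inferInstance

theorem complete (m : ℕ) : ∃ α : m.Partition → ℂ, (1 : GA m) = ∑ p, α p • zS p := by
  obtain ⟨z, hz⟩ := exists_z m
  have li : LinearIndependent ℂ (fun p : m.Partition => zS p) :=
    Module.End.eigenvectors_linearIndependent' (LinearMap.mulLeft ℂ (J m z m)) _ hz _ (fun p => by
      rw [Module.End.hasEigenvector_iff, Module.End.mem_eigenspace_iff]
      exact ⟨J_zS p z, zS_ne p⟩)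
  let v : m.Partition → LinearMap.range (Phi m) := fun p => ⟨zS p, mem_Phi _ (zS_conj p)⟩
  have liv : LinearIndependent ℂ v := by
    apply LinearIndependent.of_comp (LinearMap.range (Phi m)).subtype
    exact li
  have h1 := liv.fintype_card_le_finrank
  have h2 : Module.finrank ℂ (LinearMap.range (Phi m)) ≤ Fintype.card m.Partition := by
    refine (LinearMap.finrank_range_le _).trans ?_
    rw [Module.finrank_fintype_fun_eq_card, card_part]
  have htop := liv.span_eq_top_of_card_eq_finrank' (le_antisymm h1 h2)
  have h3 : (⟨1, mem_Phi 1 (fun g => by rw [mul_one, ← o_mul, mul_inv_cancel, o_one])⟩ :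
    LinearMap.range (Phi m)) ∈ Submodule.span ℂ (Set.range v) := by rw [htop]; trivial
  rw [Submodule.mem_span_range_iff_exists_fun] at h3
  obtain ⟨c, hc⟩ := h3
  refine ⟨c, ?_⟩
  have := congrArg Subtype.val hc
  simpa [v] using this.symm

end WB

namespace WB

open Equiv Mixed

section basics

variable {N m n : ℕ}

/-- Action of the group algebra on the upper slots. -/
def U (N m n : ℕ) : GA m →ₐ[ℂ] Module.End ℂ (Tens N m n) :=
  MonoidAlgebra.lift ℂ (Module.End ℂ (Tens N m n)) (Perm (Fin m))
    { toFun := permU N m n, map_one' := rfl, map_mul' := fun _ _ => rfl }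

/-- Action of the group algebra on the lower slots. -/
def D (N m n : ℕ) : GA n →ₐ[ℂ] Module.End ℂ (Tens N m n) :=
  MonoidAlgebra.lift ℂ (Module.End ℂ (Tens N m n)) (Perm (Fin n))
    { toFun := permD N m n, map_one' := rfl, map_mul' := fun _ _ => rfl }

theorem U_o (p : Perm (Fin m)) : U N m n (o p) = permU N m n p := by
  unfold U o
  rw [MonoidAlgebra.lift_of]
  rfl

theorem D_o (p : Perm (Fin n)) : D N m n (o p) = permD N m n p := by
  unfold D o
  rw [MonoidAlgebra.lift_of]
  rfl

theorem U_comm_of {F : Module.End ℂ (Tens N m n)} (h : ∀ p, Commute (permU N m n p) F) (x : GA m) :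
    Commute (U N m n x) F := by
  rw [o_expand x, map_sum]
  apply Commute.sum_left
  intro p _
  rw [map_smul, U_o]
  exact (h p).smul_left _

theorem D_comm_of {F : Module.End ℂ (Tens N m n)} (h : ∀ p, Commute (permD N m n p) F) (x : GA n) :
    Commute (D N m n x) F := by
  rw [o_expand x, map_sum]
  apply Commute.sum_left
  intro p _
  rw [map_smul, D_o]
  exact (h p).smul_left _

theorem UD (x : GA m) (y : GA n) : Commute (U N m n x) (D N m n y) := by
  apply U_comm_of
  intro p
  apply Commute.symm
  apply D_comm_of
  intro q
  rfl

theorem U_cS (p : m.Partition) : U N m n (cS p) = ySymU N m n (stf p) := by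
  rw [cS_expand, map_sum, ySymU]
  refine Finset.sum_congr rfl fun u _ => ?_
  rw [map_sum]
  refine Finset.sum_congr rfl fun v _ => ?_
  split_ifs
  · rw [map_smul, U_o]; rfl
  · simp

theorem D_cS (p : n.Partition) : D N m n (cS p) = ySymD N m n (stf p) := by
  rw [cS_expand, map_sum, ySymD]
  refine Finset.sum_congr rfl fun u _ => ?_
  rw [map_sum]
  refine Finset.sum_congr rfl fun v _ => ?_
  split_ifs
  · rw [map_smul, D_o]; rfl
  · simp

theorem update_comp_perm {k : ℕ} (i : Fin k → Fin N) (p : Perm (Fin k)) (a : Fin k) (c : Fin N) :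
    Function.update (i ∘ p) a c = Function.update i (p a) c ∘ p := by
  funext x
  by_cases h : x = a
  · subst h; simp
  · simp [Function.update_of_ne h, Function.update_of_ne (p.injective.ne h)]

theorem permU_tau (p : Perm (Fin m)) (a : Fin m) (b : Fin n) :
    permU N m n p * tauC N m n a b = tauC N m n (p a) b * permU N m n p := by
  refine LinearMap.ext fun t => funext fun i => funext fun j => ?_
  show (if (i ∘ p) a = j b then ∑ k, t (Function.update (i ∘ p) a k) (Function.update j b k) else 0)
    = if i (p a) = j b then ∑ k, t (Function.update i (p a) k ∘ p) (Function.update j b k) else 0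
  simp only [update_comp_perm]
  rfl

theorem permD_tau (p : Perm (Fin n)) (a : Fin m) (b : Fin n) :
    permD N m n p * tauC N m n a b = tauC N m n a (p b) * permD N m n p := by
  refine LinearMap.ext fun t => funext fun i => funext fun j => ?_
  show (if i a = (j ∘ p) b then ∑ k, t (Function.update i a k) (Function.update (j ∘ p) b k) else 0)
    = if i a = j (p b) then ∑ k, t (Function.update i a k) (Function.update j (p b) k ∘ p) else 0
  simp only [update_comp_perm]
  rfl

theorem permU_A (p : Perm (Fin m)) : Commute (permU N m n p) (A N m n) := by
  show _ * _ = _ * _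
  unfold A
  rw [Finset.mul_sum, Finset.sum_mul]
  apply Fintype.sum_equiv p
  intro a
  rw [Finset.mul_sum, Finset.sum_mul]
  exact Finset.sum_congr rfl fun b _ => permU_tau p a b

theorem permD_A (p : Perm (Fin n)) : Commute (permD N m n p) (A N m n) := by
  show _ * _ = _ * _
  unfold A
  rw [Finset.mul_sum, Finset.sum_mul]
  refine Finset.sum_congr rfl fun a _ => ?_
  rw [Finset.mul_sum, Finset.sum_mul]
  apply Fintype.sum_equiv p
  intro b
  exact permD_tau p a b

theorem U_A (x : GA m) : Commute (U N m n x) (A N m n) := U_comm_of permU_A x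
theorem D_A (x : GA n) : Commute (D N m n x) (A N m n) := D_comm_of permD_A x

theorem permU_cent (p : Perm (Fin m)) : permU N m n p ∈ Cent N m n := by
  unfold Cent
  rw [Subalgebra.mem_centralizer_iff]
  rintro _ ⟨g, rfl⟩
  refine LinearMap.ext fun t => funext fun i => funext fun j => ?_
  show (∑ i' : Fin m → Fin N, ∑ j' : Fin n → Fin N,
    ((∏ a : Fin m, (g : Matrix (Fin N) (Fin N) ℂ) (i a) (i' a)) *
      ∏ b : Fin n, ((g⁻¹ : GL (Fin N) ℂ) : Matrix (Fin N) (Fin N) ℂ) (j' b) (j b)) *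
        t (i' ∘ p) j') = ∑ i' : Fin m → Fin N, ∑ j' : Fin n → Fin N,
    ((∏ a : Fin m, (g : Matrix (Fin N) (Fin N) ℂ) ((i ∘ p) a) (i' a)) *
      ∏ b : Fin n, ((g⁻¹ : GL (Fin N) ℂ) : Matrix (Fin N) (Fin N) ℂ) (j' b) (j b)) * t i' j'
  apply Fintype.sum_equiv (Equiv.arrowCongr p.symm (Equiv.refl (Fin N)))
  intro i'
  refine Finset.sum_congr rfl fun j' _ => ?_
  have : (Equiv.arrowCongr p.symm (Equiv.refl (Fin N))) i' = i' ∘ p := by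
    funext x; simp
  rw [this]
  congr 2
  exact (Equiv.prod_comp p (fun a => (g : Matrix (Fin N) (Fin N) ℂ) (i a) (i' a))).symm

theorem permD_cent (p : Perm (Fin n)) : permD N m n p ∈ Cent N m n := by
  unfold Cent
  rw [Subalgebra.mem_centralizer_iff]
  rintro _ ⟨g, rfl⟩
  refine LinearMap.ext fun t => funext fun i => funext fun j => ?_
  show (∑ i' : Fin m → Fin N, ∑ j' : Fin n → Fin N,
    ((∏ a : Fin m, (g : Matrix (Fin N) (Fin N) ℂ) (i a) (i' a)) *
      ∏ b : Fin n, ((g⁻¹ : GL (Fin N) ℂ) : Matrix (Fin N) (Fin N) ℂ) (j' b) (j b)) *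
        t i' (j' ∘ p)) = ∑ i' : Fin m → Fin N, ∑ j' : Fin n → Fin N,
    ((∏ a : Fin m, (g : Matrix (Fin N) (Fin N) ℂ) (i a) (i' a)) *
      ∏ b : Fin n, ((g⁻¹ : GL (Fin N) ℂ) : Matrix (Fin N) (Fin N) ℂ) (j' b) ((j ∘ p) b)) * t i' j'
  refine Finset.sum_congr rfl fun i' _ => ?_
  apply Fintype.sum_equiv (Equiv.arrowCongr p.symm (Equiv.refl (Fin N)))
  intro j'
  have : (Equiv.arrowCongr p.symm (Equiv.refl (Fin N))) j' = j' ∘ p := by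
    funext x; simp
  rw [this]
  congr 2
  exact (Equiv.prod_comp p (fun a => ((g⁻¹ : GL (Fin N) ℂ) : Matrix (Fin N) (Fin N) ℂ) (j' a) (j a))).symm

theorem U_cent (x : GA m) : U N m n x ∈ Cent N m n := by
  rw [o_expand x, map_sum]
  refine Subalgebra.sum_mem _ fun p _ => ?_
  rw [map_smul, U_o]
  exact Subalgebra.smul_mem _ (permU_cent p) _

theorem D_cent (x : GA n) : D N m n x ∈ Cent N m n := by
  rw [o_expand x, map_sum]
  refine Subalgebra.sum_mem _ fun p _ => ?_
  rw [map_smul, D_o]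
  exact Subalgebra.smul_mem _ (permD_cent p) _

/-- Hermitian form. -/
def ip (x : Tens N m n) : Tens N m n →ₗ[ℂ] ℂ where
  toFun y := ∑ i, ∑ j, (starRingEnd ℂ) (x i j) * y i j
  map_add' y z := by simp [mul_add, Finset.sum_add_distrib]
  map_smul' c y := by
    simp only [Pi.smul_apply, smul_eq_mul, RingHom.id_apply, Finset.mul_sum]
    refine Finset.sum_congr rfl fun i _ => Finset.sum_congr rfl fun j _ => by ring

theorem ip_def (x y : Tens N m n) : ip x y = ∑ i, ∑ j, (starRingEnd ℂ) (x i j) * y i j := rfl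

theorem ip_symm (x y : Tens N m n) : (starRingEnd ℂ) (ip x y) = ip y x := by
  simp only [ip_def, map_sum, map_mul, Complex.conj_conj]
  refine Finset.sum_congr rfl fun i _ => Finset.sum_congr rfl fun j _ => by ring

theorem ip_self (x : Tens N m n) : ip x x = ((∑ i, ∑ j, ‖x i j‖ ^ 2 : ℝ) : ℂ) := by
  rw [ip_def]
  push_cast
  refine Finset.sum_congr rfl fun i _ => Finset.sum_congr rfl fun j _ => ?_
  rw [← Complex.normSq_eq_conj_mul_self, Complex.normSq_eq_norm_sq]
  push_cast
  rfl

theorem ip_zero (x : Tens N m n) (h : (∑ i, ∑ j, ‖x i j‖ ^ 2 : ℝ) = 0) : x = 0 := by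
  funext i j
  rw [Finset.sum_eq_zero_iff_of_nonneg (fun i _ => by positivity)] at h
  have := h i (Finset.mem_univ _)
  rw [Finset.sum_eq_zero_iff_of_nonneg (fun i _ => by positivity)] at this
  simpa using this j (Finset.mem_univ _)

theorem ip_self_zero {x : Tens N m n} (h : ip x x = 0) : x = 0 := by
  rw [ip_self] at h
  exact ip_zero x (by exact_mod_cast h)

theorem ip_add_left (x y z : Tens N m n) : ip (x + y) z = ip x z + ip y z := by
  rw [← ip_symm, map_add, map_add, ip_symm, ip_symm]

theorem ip_smul_left (c : ℂ) (x z : Tens N m n) : ip (c • x) z = (starRingEnd ℂ) c * ip x z := by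
  rw [← ip_symm, map_smul, smul_eq_mul, map_mul, ip_symm]

theorem ip_zero_left (z : Tens N m n) : ip 0 z = 0 := by
  simp [ip_def]

theorem ip_sum_left {ι : Type*} (s : Finset ι) (f : ι → Tens N m n) (z : Tens N m n) :
    ip (∑ i ∈ s, f i) z = ∑ i ∈ s, ip (f i) z := by
  induction s using Finset.induction_on with
  | empty => simp [ip_zero_left]
  | insert a s ha ih => rw [Finset.sum_insert ha, ip_add_left, ih, Finset.sum_insert ha]

theorem ip_permU (p : Perm (Fin m)) (x y : Tens N m n) :
    ip (permU N m n p x) y = ip x (permU N m n p⁻¹ y) := by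
  show (∑ i : Fin m → Fin N, ∑ j, (starRingEnd ℂ) (x (i ∘ p) j) * y i j)
    = ∑ i : Fin m → Fin N, ∑ j, (starRingEnd ℂ) (x i j) * y (i ∘ ⇑(p⁻¹)) j
  apply Fintype.sum_equiv (Equiv.arrowCongr p.symm (Equiv.refl (Fin N)))
  intro i'
  have h : (Equiv.arrowCongr p.symm (Equiv.refl (Fin N))) i' = i' ∘ p := by
    funext x; simp
  have h2 : (i' ∘ p) ∘ ⇑(p⁻¹) = i' := by funext x; simp
  rw [h, h2]

theorem ip_permD (p : Perm (Fin n)) (x y : Tens N m n) :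
    ip (permD N m n p x) y = ip x (permD N m n p⁻¹ y) := by
  show (∑ i : Fin m → Fin N, ∑ j : Fin n → Fin N, (starRingEnd ℂ) (x i (j ∘ p)) * y i j)
    = ∑ i : Fin m → Fin N, ∑ j : Fin n → Fin N, (starRingEnd ℂ) (x i j) * y i (j ∘ ⇑(p⁻¹))
  refine Finset.sum_congr rfl fun i _ => ?_
  apply Fintype.sum_equiv (Equiv.arrowCongr p.symm (Equiv.refl (Fin N)))
  intro i'
  have h : (Equiv.arrowCongr p.symm (Equiv.refl (Fin N))) i' = i' ∘ p := by
    funext x; simp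
  have h2 : (i' ∘ p) ∘ ⇑(p⁻¹) = i' := by funext x; simp
  rw [h, h2]

theorem ip_tau (a : Fin m) (b : Fin n) (x y : Tens N m n) :
    ip (tauC N m n a b x) y = ip x (tauC N m n a b y) := by
  have h1 : ip (tauC N m n a b x) y = ∑ w ∈ (Finset.univ : Finset ((Fin m → Fin N) × (Fin n → Fin N) ×
      Fin N)).filter (fun w => w.1 a = w.2.1 b),
      (starRingEnd ℂ) (x (Function.update w.1 a w.2.2) (Function.update w.2.1 b w.2.2)) *
        y w.1 w.2.1 := by
    rw [Finset.sum_filter, Fintype.sum_prod_type, ip_def]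
    refine Finset.sum_congr rfl fun i _ => ?_
    rw [Fintype.sum_prod_type]
    refine Finset.sum_congr rfl fun j _ => ?_
    show (starRingEnd ℂ) (if i a = j b then _ else 0) * _ = _
    split_ifs with h
    · rw [map_sum, Finset.sum_mul]
    · simp
  have h2 : ip x (tauC N m n a b y) = ∑ w ∈ (Finset.univ : Finset ((Fin m → Fin N) × (Fin n → Fin N) ×
      Fin N)).filter (fun w => w.1 a = w.2.1 b),
      (starRingEnd ℂ) (x w.1 w.2.1) *
       y (Function.update w.1 a w.2.2) (Function.update w.2.1 b w.2.2)  := by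
    rw [Finset.sum_filter, Fintype.sum_prod_type, ip_def]
    refine Finset.sum_congr rfl fun i _ => ?_
    rw [Fintype.sum_prod_type]
    refine Finset.sum_congr rfl fun j _ => ?_
    show _ * (if i a = j b then _ else 0) = _
    split_ifs with h
    · rw [Finset.mul_sum]
    · simp
  rw [h1, h2]
  refine Finset.sum_nbij' (fun w => (Function.update w.1 a w.2.2, Function.update w.2.1 b w.2.2, w.1 a))
    (fun w => (Function.update w.1 a w.2.2, Function.update w.2.1 b w.2.2, w.1 a)) ?_ ?_ ?_ ?_ ?_
  · rintro ⟨i, j, k⟩ h; simp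
  · rintro ⟨i, j, k⟩ h; simp
  · rintro ⟨i, j, k⟩ h
    simp at h
    simp [h]
  · rintro ⟨i, j, k⟩ h
    simp at h
    simp [h]
  · rintro ⟨i, j, k⟩ h
    simp at h
    simp [h]
    rw [← h]; simp

theorem ip_A (x y : Tens N m n) : ip (A N m n x) y = ip x (A N m n y) := by
  simp only [A, LinearMap.sum_apply, ip_sum_left, map_sum, ip_tau]

theorem tau_tau (a : Fin m) (b : Fin n) (x : Tens N m n) :
    tauC N m n a b (tauC N m n a b x) = (N : ℂ) • tauC N m n a b x := by
  funext i j
  show (if i a = j b then ∑ k : Fin N, (if Function.update i a k a = Function.update j b k b then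
    ∑ l : Fin N, x (Function.update (Function.update i a k) a l)
      (Function.update (Function.update j b k) b l) else 0) else 0) = (N : ℂ) * (if i a = j b then _ else 0)
  split_ifs with h
  · simp
  · simp

theorem ctr_tau (a : Fin m) (b : Fin n) (x : Tens N m n) (i j) :
    ctr N m n a b x i j = tauC N m n a b x i (Function.update j b (i a)) := by
  show (∑ k : Fin N, _) = if i a = Function.update j b (i a) b then _ else 0
  rw [if_pos (by simp)]
  simp

theorem tau_of_A {x : Tens N m n} (h : A N m n x = 0) (a : Fin m) (b : Fin n) :
    tauC N m n a b x = 0 := by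
  have h1 : ip x (A N m n x) = 0 := by rw [h, map_zero]
  have h2 : ∑ a, ∑ b, ip (tauC N m n a b x) (tauC N m n a b x) = 0 := by
    simp only [ip_tau, tau_tau, map_smul, smul_eq_mul]
    simp only [← Finset.mul_sum]
    simp only [A, LinearMap.sum_apply, map_sum] at h1
    rw [h1, mul_zero]
  simp only [ip_self] at h2
  norm_cast at h2
  have hnn : ∀ (a : Fin m) (b : Fin n), 0 ≤ ∑ i, ∑ j, ‖tauC N m n a b x i j‖ ^ 2 := by
    intro a b; positivity
  rw [Finset.sum_eq_zero_iff_of_nonneg (fun a _ => Finset.sum_nonneg fun b _ => hnn a b)] at h2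
  have h3 := h2 a (Finset.mem_univ _)
  rw [Finset.sum_eq_zero_iff_of_nonneg (fun b _ => hnn a b)] at h3
  exact ip_zero _ (h3 b (Finset.mem_univ _))

theorem mem_traceless {x : Tens N m n} (h : A N m n x = 0) : x ∈ traceless0 N m n := by
  unfold traceless0
  simp only [Submodule.mem_iInf, LinearMap.mem_ker]
  intro a b
  funext i j
  rw [ctr_tau, tau_of_A h]
  rfl

theorem ker_sup_range : LinearMap.ker (A N m n) ⊔ LinearMap.range (A N m n) = ⊤ := by
  apply Submodule.eq_top_of_disjoint
  · rw [add_comm, LinearMap.finrank_range_add_finrank_ker]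
  · rw [Submodule.disjoint_def]
    rintro x hx ⟨y, rfl⟩
    rw [LinearMap.mem_ker] at hx
    apply ip_self_zero
    rw [ip_A, hx, map_zero]

end basics

end WB

namespace WB

open Equiv Mixed

section emb

variable {N m n : ℕ}

/-- Tensor with one copy of the identity tensor. -/
def emb1 (N m n : ℕ) : Tens N m n →ₗ[ℂ] Tens N (m + 1) (n + 1) where
  toFun x := fun i j => if i (Fin.last m) = j (Fin.last n) then
    x (fun a => i a.castSucc) (fun b => j b.castSucc) else 0
  map_add' x y := by
    funext i j
    by_cases h : i (Fin.last m) = j (Fin.last n) <;> simp [h]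
  map_smul' c x := by
    funext i j
    by_cases h : i (Fin.last m) = j (Fin.last n) <;> simp [h]

/-- Contraction of the last slots. -/
def tr1 (N m n : ℕ) : Tens N (m + 1) (n + 1) →ₗ[ℂ] Tens N m n where
  toFun x := fun i j => ∑ k : Fin N, x (Fin.snoc (α := fun _ => Fin N) i k)
    (Fin.snoc (α := fun _ => Fin N) j k)
  map_add' x y := by funext i j; simp [Finset.sum_add_distrib]
  map_smul' c x := by funext i j; simp [Finset.mul_sum]

theorem emb1_apply (x : Tens N m n) (i j) : emb1 N m n x i j = if i (Fin.last m) = j (Fin.last n) then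
    x (fun a => i a.castSucc) (fun b => j b.castSucc) else 0 := rfl

theorem sum_snoc {k : ℕ} (F : (Fin (k + 1) → Fin N) → ℂ) :
    ∑ i, F i = ∑ i : Fin k → Fin N, ∑ c : Fin N, F (Fin.snoc (α := fun _ => Fin N) i c) := by
  rw [← Equiv.sum_comp (Fin.snocEquiv (fun _ => Fin N)) F, Fintype.sum_prod_type, Finset.sum_comm]
  rfl

theorem ip_emb1 (x : Tens N m n) (y) : ip (emb1 N m n x) y = ip x (tr1 N m n y) := by
  rw [ip_def, sum_snoc, ip_def]
  refine Finset.sum_congr rfl fun i _ => ?_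
  rw [Finset.sum_comm, sum_snoc]
  refine Finset.sum_congr rfl fun j _ => ?_
  simp only [emb1_apply, Fin.snoc_last, Fin.snoc_castSucc]
  show _ = _ * ∑ k : Fin N, _
  rw [Finset.mul_sum]
  refine Finset.sum_congr rfl fun c _ => ?_
  rw [Finset.sum_eq_single c]
  · simp
  · intro d _ hd
    simp [hd]
  · simp

theorem tr1_emb1 (x : Tens N m n) : tr1 N m n (emb1 N m n x) = (N : ℂ) • x := by
  funext i j
  show ∑ k : Fin N, _ = (N : ℂ) * x i j
  simp [emb1_apply]

theorem update_last {k : ℕ} (i : Fin (k + 1) → Fin N) (c : Fin N) :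
    Function.update i (Fin.last k) c = Fin.snoc (α := fun _ => Fin N) (fun a => i a.castSucc) c := by
  funext x
  refine Fin.lastCases ?_ (fun a => ?_) x
  · simp
  · rw [Function.update_of_ne (Fin.castSucc_lt_last a).ne]; simp

theorem tau_last (y : Tens N (m + 1) (n + 1)) :
    tauC N (m + 1) (n + 1) (Fin.last m) (Fin.last n) y = emb1 N m n (tr1 N m n y) := by
  funext i j
  rw [emb1_apply]
  show (if _ then ∑ k : Fin N, _ else _) = if _ then ∑ k : Fin N, _ else _
  simp only [update_last]

theorem tau_last_emb1 (x : Tens N m n) :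
    tauC N (m + 1) (n + 1) (Fin.last m) (Fin.last n) (emb1 N m n x) = (N : ℂ) • emb1 N m n x := by
  rw [tau_last, tr1_emb1, map_smul]

/-- Any `τ_ab` factors through `emb1`. -/
theorem tau_fac (a : Fin (m + 1)) (b : Fin (n + 1)) (y : Tens N (m + 1) (n + 1)) :
    ∃ s, tauC N (m + 1) (n + 1) a b y =
      permU N _ _ (swap a (Fin.last m)) (permD N _ _ (swap b (Fin.last n)) (emb1 N m n s)) := by
  refine ⟨tr1 N m n (permU N _ _ (swap a (Fin.last m)) (permD N _ _ (swap b (Fin.last n)) y)), ?_⟩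
  rw [← tau_last]
  have h1 := fun (t : Tens N (m+1) (n+1)) => LinearMap.congr_fun (permU_tau (N := N) (n := n + 1) (swap a (Fin.last m)) (Fin.last m) (Fin.last n)) t
  have h2 := fun (t : Tens N (m+1) (n+1)) => LinearMap.congr_fun (permD_tau (N := N) (m := m + 1) (swap b (Fin.last n)) (Fin.last m) (Fin.last n)) t
  have h3 := fun (t : Tens N (m+1) (n+1)) => LinearMap.congr_fun (permU_tau (N := N) (n := n + 1) (swap a (Fin.last m)) (Fin.last m) b) t
  simp only [Module.End.mul_apply, swap_apply_right] at h1 h2 h3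
  rw [h2, h3]
  congr 1
  funext i j
  show _ = y ((i ∘ _) ∘ _) ((j ∘ _) ∘ _)
  congr 1
  · funext x; simp
  · funext x; simp

theorem tau_cc (a : Fin m) (b : Fin n) (x : Tens N m n) :
    tauC N (m + 1) (n + 1) a.castSucc b.castSucc (emb1 N m n x) = emb1 N m n (tauC N m n a b x) := by
  funext i j
  rw [emb1_apply]
  show (if _ then ∑ k : Fin N, emb1 N m n x _ _ else _) = if _ then (if _ then ∑ k : Fin N, _ else 0) else _
  simp only [emb1_apply]
  have hu : ∀ {k : ℕ} (i : Fin (k + 1) → Fin N) (a : Fin k) (c : Fin N),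
      (fun x : Fin k => Function.update i a.castSucc c x.castSucc) =
        Function.update (fun x : Fin k => i x.castSucc) a c := by
    intro k i a c
    funext x
    by_cases h : x = a
    · subst h; simp
    · rw [Function.update_of_ne h, Function.update_of_ne (by simpa using h)]
  have hl : ∀ {k : ℕ} (i : Fin (k + 1) → Fin N) (a : Fin k) (c : Fin N),
      Function.update i a.castSucc c (Fin.last k) = i (Fin.last k) := by
    intro k i a c
    rw [Function.update_of_ne (Fin.castSucc_lt_last a).ne']
  simp only [hu, hl]
  by_cases h1 : i (Fin.last m) = j (Fin.last n) <;> simp [h1]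

theorem tau_cl (a : Fin m) (x : Tens N m n) :
    tauC N (m + 1) (n + 1) a.castSucc (Fin.last n) (emb1 N m n x) =
      permU N _ _ (swap a.castSucc (Fin.last m)) (emb1 N m n x) := by
  funext i j
  show (if _ then ∑ k : Fin N, emb1 N m n x _ _ else _) = emb1 N m n x _ _
  simp only [emb1_apply, Function.comp_apply, swap_apply_right, update_last, Fin.snoc_last, Fin.snoc_castSucc]
  split_ifs with h
  · rw [Finset.sum_eq_single (i (Fin.last m))]
    · rw [if_pos (by rw [Function.update_of_ne (Fin.castSucc_lt_last a).ne'])]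
      congr 1
      funext y
      by_cases h : y = a
      · subst h; simp
      · rw [Function.update_of_ne (by simpa using h), swap_apply_of_ne_of_ne (by simpa using h)
          (Fin.castSucc_lt_last y).ne]
    · intro c _ hc
      rw [if_neg]
      rw [Function.update_of_ne (Fin.castSucc_lt_last a).ne']
      exact hc.symm
    · simp
  · rfl

theorem tau_lc (b : Fin n) (x : Tens N m n) :
    tauC N (m + 1) (n + 1) (Fin.last m) b.castSucc (emb1 N m n x) =
      permD N _ _ (swap b.castSucc (Fin.last n)) (emb1 N m n x) := by
  funext i j
  show (if _ then ∑ k : Fin N, emb1 N m n x _ _ else _) = emb1 N m n x _ _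
  simp only [emb1_apply, Function.comp_apply, swap_apply_right, update_last, Fin.snoc_last, Fin.snoc_castSucc]
  split_ifs with h
  · rw [Finset.sum_eq_single (j (Fin.last n))]
    · rw [if_pos (by rw [Function.update_of_ne (Fin.castSucc_lt_last b).ne'])]
      congr 1
      funext y
      by_cases h : y = b
      · subst h; simp
      · rw [Function.update_of_ne (by simpa using h), swap_apply_of_ne_of_ne (by simpa using h)
          (Fin.castSucc_lt_last y).ne]
    · intro c _ hc
      rw [if_neg]
      rw [Function.update_of_ne (Fin.castSucc_lt_last b).ne']
      exact hc
    · simp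
  · rfl

/-- Extension of a permutation by a fixed point. -/
def extP (g : Perm (Fin m)) : Perm (Fin (m + 1)) :=
  (finSuccEquivLast.trans (Equiv.optionCongr g)).trans finSuccEquivLast.symm

theorem extP_cast (g : Perm (Fin m)) (a : Fin m) : extP g a.castSucc = (g a).castSucc := by
  simp [extP]

theorem extP_last (g : Perm (Fin m)) : extP g (Fin.last m) = Fin.last m := by
  simp [extP]

theorem extP_mul (g h : Perm (Fin m)) : extP (g * h) = extP g * extP h := by
  refine Equiv.ext fun x => ?_
  refine Fin.lastCases ?_ (fun a => ?_) x
  · simp [extP_last]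
  · simp [extP_cast]

theorem extP_swap (a b : Fin m) : extP (swap a b) = swap a.castSucc b.castSucc := by
  refine Equiv.ext fun x => ?_
  refine Fin.lastCases ?_ (fun c => ?_) x
  · rw [extP_last, swap_apply_of_ne_of_ne (Fin.castSucc_lt_last a).ne' (Fin.castSucc_lt_last b).ne']
  · rw [extP_cast, swap_apply_def, swap_apply_def]
    simp only [Fin.castSucc_inj]
    split_ifs <;> rfl

theorem extP_one : extP (1 : Perm (Fin m)) = 1 := by
  refine Equiv.ext fun x => ?_
  refine Fin.lastCases ?_ (fun c => ?_) x
  · simp [extP_last]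
  · simp [extP_cast]

/-- Inclusion of group algebras. -/
def eG (m : ℕ) : GA m →ₐ[ℂ] GA (m + 1) :=
  MonoidAlgebra.lift ℂ (GA (m + 1)) (Perm (Fin m))
    { toFun := fun g => o (extP g), map_one' := by rw [extP_one, o_one],
      map_mul' := fun g h => by rw [extP_mul, o_mul] }

theorem eG_o (g : Perm (Fin m)) : eG m (o g) = o (extP g) := by
  unfold eG o
  rw [MonoidAlgebra.lift_of]
  rfl

theorem eG_X {k : ℕ} (hk : k < m) : eG m (X m k) = X (m + 1) k := by
  unfold X
  rw [dif_pos hk, dif_pos (by omega), map_sum, Fin.sum_univ_castSucc, if_neg (by simp; omega), add_zero]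
  refine Finset.sum_congr rfl fun a _ => ?_
  simp only [Fin.val_castSucc]
  split_ifs
  · rw [eG_o, extP_swap]; rfl
  · simp

theorem eG_J {k : ℕ} (z : ℂ) (hk : k ≤ m) : eG m (J m z k) = J (m + 1) z k := by
  induction k with
  | zero => simp [J]
  | succ k ih => rw [J, J, map_mul, ih (by omega), map_add, eG_X (by omega), AlgHom.commutes]

theorem eG_Ls {k : ℕ} (hk : k ≤ m) : eG m (Ls m k) = Ls (m + 1) k := by
  induction k with
  | zero => simp [Ls]
  | succ k ih => rw [Ls, Ls, map_add, ih (by omega), eG_X (by omega)]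

theorem U_emb1 (x : GA m) (t : Tens N m n) :
    U N (m + 1) (n + 1) (eG m x) (emb1 N m n t) = emb1 N m n (U N m n x t) := by
  rw [o_expand x]
  simp only [map_sum, LinearMap.sum_apply, map_smul, LinearMap.smul_apply, eG_o, U_o]
  refine Finset.sum_congr rfl fun p _ => ?_
  congr 1
  funext i j
  show emb1 N m n t _ _ = emb1 N m n _ _ _
  simp only [emb1_apply, Function.comp_apply, extP_last, extP_cast]
  rfl

theorem D_emb1 (x : GA n) (t : Tens N m n) :
    D N (m + 1) (n + 1) (eG n x) (emb1 N m n t) = emb1 N m n (D N m n x t) := by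
  rw [o_expand x]
  simp only [map_sum, LinearMap.sum_apply, map_smul, LinearMap.smul_apply, eG_o, D_o]
  refine Finset.sum_congr rfl fun p _ => ?_
  congr 1
  funext i j
  show emb1 N m n t _ _ = emb1 N m n _ _ _
  simp only [emb1_apply, Function.comp_apply, extP_last, extP_cast]
  rfl

theorem X_last (m : ℕ) : X (m + 1) m = ∑ a : Fin m, o (swap a.castSucc (Fin.last m)) := by
  unfold X
  rw [dif_pos (by omega), Fin.sum_univ_castSucc, if_neg (by simp), add_zero]
  refine Finset.sum_congr rfl fun a _ => ?_
  rw [if_pos (by simp)]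
  rfl

/-- The operator `L + R - A`. -/
def T (N m n : ℕ) : Module.End ℂ (Tens N m n) :=
  U N m n (Ls m m) + D N m n (Ls n n) - A N m n

theorem T_emb1 (x : Tens N m n) :
    T N (m + 1) (n + 1) (emb1 N m n x) = emb1 N m n (T N m n x) - (N : ℂ) • emb1 N m n x := by
  simp only [T, A, LinearMap.sub_apply, LinearMap.add_apply, Ls, map_add, map_sub, LinearMap.sum_apply]
  rw [← eG_Ls le_rfl, ← eG_Ls le_rfl, U_emb1, D_emb1, X_last, X_last]
  simp only [map_sum, LinearMap.sum_apply, U_o, D_o, Fin.sum_univ_castSucc, tau_cc, tau_lc, tau_cl,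
    tau_last_emb1, Finset.sum_add_distrib]
  abel

end emb

end WB

namespace WB

open Equiv Mixed

section embG

variable {N : ℕ}

/-- Tensor with `r` copies of the identity tensor. -/
def embG (N k l m n r : ℕ) (hk : k + r = m) (hl : l + r = n) : Tens N k l →ₗ[ℂ] Tens N m n where
  toFun t := fun i j =>
    (∏ s : Fin r,
      if i ⟨k + s.1, by have := s.2; omega⟩ = j ⟨l + s.1, by have := s.2; omega⟩
      then (1 : ℂ) else 0) *
    t (fun x => i (Fin.castLE (by omega) x)) (fun y => j (Fin.castLE (by omega) y))
  map_add' t s := by funext i j; simp [mul_add]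
  map_smul' c t := by funext i j; simp; ring

theorem embG_zero (m n : ℕ) (hk : m + 0 = m) (hl : n + 0 = n) (t : Tens N m n) :
    embG N m n m n 0 hk hl t = t := by
  funext i j
  show (∏ s : Fin 0, (_ : ℂ)) * _ = _
  simp

theorem embG_succ (k l m n r : ℕ) (hk : k + (r + 1) = m + 1) (hl : l + (r + 1) = n + 1)
    (t : Tens N k l) :
    embG N k l (m + 1) (n + 1) (r + 1) hk hl t =
      emb1 N m n (embG N k l m n r (by omega) (by omega) t) := by
  funext i j
  rw [emb1_apply]
  show (∏ s : Fin (r + 1), (_ : ℂ)) * _ = if _ then (∏ s : Fin r, (_ : ℂ)) * _ else _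
  rw [Fin.prod_univ_castSucc]
  have h1 : (⟨k + (Fin.last r).1, by simp; omega⟩ : Fin (m + 1)) = Fin.last m := by
    ext; simp; omega
  have h2 : (⟨l + (Fin.last r).1, by simp; omega⟩ : Fin (n + 1)) = Fin.last n := by
    ext; simp; omega
  rw [h1, h2]
  split_ifs with h
  · rw [mul_one]; rfl
  · simp

theorem embG_ind {P : ∀ (k l m n : ℕ), (Tens N k l →ₗ[ℂ] Tens N m n) → ℕ → Prop}
    (h0 : ∀ m n, P m n m n LinearMap.id 0)
    (hs : ∀ k l m n r F, k ≤ m → l ≤ n → P k l m n F r → P k l (m + 1) (n + 1) (emb1 N m n ∘ₗ F) (r + 1))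
    (k l m n r : ℕ) (hk : k + r = m) (hl : l + r = n) : P k l m n (embG N k l m n r hk hl) r := by
  induction r generalizing m n with
  | zero =>
    obtain rfl : k = m := by omega
    obtain rfl : l = n := by omega
    have : embG N k l k l 0 hk hl = LinearMap.id := LinearMap.ext fun t => embG_zero _ _ _ _ t
    rw [this]
    exact h0 _ _
  | succ r ih =>
    obtain ⟨m, rfl⟩ : ∃ m', m = m' + 1 := ⟨m - 1, by omega⟩
    obtain ⟨n, rfl⟩ : ∃ n', n = n' + 1 := ⟨n - 1, by omega⟩
    have : embG N k l (m + 1) (n + 1) (r + 1) hk hl = emb1 N m n ∘ₗ embG N k l m n r (by omega) (by omega) :=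
      LinearMap.ext fun t => embG_succ _ _ _ _ _ _ _ t
    rw [this]
    exact hs _ _ _ _ _ _ (by omega) (by omega) (ih _ _ _ _)

theorem T_embG (k l m n r : ℕ) (hk : k + r = m) (hl : l + r = n) (t : Tens N k l) :
    T N m n (embG N k l m n r hk hl t) = embG N k l m n r hk hl (T N k l t)
      - ((r : ℂ) * N) • embG N k l m n r hk hl t := by
  revert t
  refine embG_ind (P := fun k l m n F r => ∀ t, T N m n (F t) = F (T N k l t) - ((r : ℂ) * N) • F t)
    ?_ ?_ k l m n r hk hl
  · intro m n t; simp
  · intro k l m n r F _ _ h t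
    simp only [LinearMap.comp_apply, T_emb1, h, map_sub, map_smul]
    push_cast
    rw [add_mul, one_mul, add_smul]
    abel

theorem JU_embG (z : ℂ) (k l m n r : ℕ) (hk : k + r = m) (hl : l + r = n) (t : Tens N k l) :
    U N m n (J m z k) (embG N k l m n r hk hl t) = embG N k l m n r hk hl (U N k l (J k z k) t) := by
  revert t
  refine embG_ind (P := fun k l m n F r => ∀ t, U N m n (J m z k) (F t) = F (U N k l (J k z k) t))
    ?_ ?_ k l m n r hk hl
  · intro m n t; simp
  · intro k l m n r F hk _ h t
    simp only [LinearMap.comp_apply]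
    rw [← eG_J z hk, U_emb1, h]

theorem JD_embG (z : ℂ) (k l m n r : ℕ) (hk : k + r = m) (hl : l + r = n) (t : Tens N k l) :
    D N m n (J n z l) (embG N k l m n r hk hl t) = embG N k l m n r hk hl (D N k l (J l z l) t) := by
  revert t
  refine embG_ind (P := fun k l m n F r => ∀ t, D N m n (J n z l) (F t) = F (D N k l (J l z l) t))
    ?_ ?_ k l m n r hk hl
  · intro m n t; simp
  · intro k l m n r F _ hl h t
    simp only [LinearMap.comp_apply]
    rw [← eG_J z hl, D_emb1, h]

theorem exU (k l m n r : ℕ) (hk : k + r = m) (hl : l + r = n) (x : GA k) : ∃ x' : GA m,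
    ∀ t, U N m n x' (embG N k l m n r hk hl t) = embG N k l m n r hk hl (U N k l x t) := by
  revert x
  refine embG_ind (P := fun k l m n F r => ∀ x : GA k, ∃ x' : GA m,
    ∀ t, U N m n x' (F t) = F (U N k l x t)) ?_ ?_ k l m n r hk hl
  · intro m n x; exact ⟨x, fun t => rfl⟩
  · intro k l m n r F _ hl h x
    obtain ⟨x', hx⟩ := h x
    refine ⟨eG m x', fun t => ?_⟩
    simp only [LinearMap.comp_apply]
    rw [U_emb1, hx]

theorem exD (k l m n r : ℕ) (hk : k + r = m) (hl : l + r = n) (x : GA l) : ∃ x' : GA n,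
    ∀ t, D N m n x' (embG N k l m n r hk hl t) = embG N k l m n r hk hl (D N k l x t) := by
  revert x
  refine embG_ind (P := fun k l m n F r => ∀ x : GA l, ∃ x' : GA n,
    ∀ t, D N m n x' (F t) = F (D N k l x t)) ?_ ?_ k l m n r hk hl
  · intro m n x; exact ⟨x, fun t => rfl⟩
  · intro k l m n r F _ hl h x
    obtain ⟨x', hx⟩ := h x
    refine ⟨eG n x', fun t => ?_⟩
    simp only [LinearMap.comp_apply]
    rw [D_emb1, hx]

theorem spanning (m n : ℕ) (S : Submodule ℂ (Tens N m n))
    (hU : ∀ x, ∀ s ∈ S, U N m n x s ∈ S) (hD : ∀ x, ∀ s ∈ S, D N m n x s ∈ S)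
    (h : ∀ k l r (hk : k + r = m) (hl : l + r = n) (t : Tens N k l), A N k l t = 0 →
      embG N k l m n r hk hl t ∈ S) : S = ⊤ := by
  induction m generalizing n with
  | zero =>
    rw [eq_top_iff]
    intro t _
    have := h 0 n 0 rfl rfl t (by simp [A])
    rwa [embG_zero] at this
  | succ m ih =>
    cases n with
    | zero =>
      rw [eq_top_iff]
      intro t _
      have := h (m + 1) 0 0 rfl rfl t (by simp [A])
      rwa [embG_zero] at this
    | succ n =>
      have h1 : S.comap (emb1 N m n) = ⊤ := by
        apply ih
        · intro x s hs
          rw [Submodule.mem_comap] at hs ⊢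
          rw [← U_emb1]
          exact hU _ _ hs
        · intro x s hs
          rw [Submodule.mem_comap] at hs ⊢
          rw [← D_emb1]
          exact hD _ _ hs
        · intro k l r hk hl t ht
          rw [Submodule.mem_comap]
          have := h k l (r + 1) (by omega) (by omega) t ht
          rwa [embG_succ] at this
      have h2 : LinearMap.range (A N (m + 1) (n + 1)) ≤ S := by
        rintro _ ⟨y, rfl⟩
        unfold A
        simp only [LinearMap.sum_apply]
        refine Submodule.sum_mem _ fun a _ => Submodule.sum_mem _ fun b _ => ?_
        obtain ⟨s, hs⟩ := tau_fac a b y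
        rw [hs, ← U_o, ← D_o]
        apply hU
        apply hD
        have : s ∈ S.comap (emb1 N m n) := by rw [h1]; trivial
        exact this
      have h3 : LinearMap.ker (A N (m + 1) (n + 1)) ≤ S := by
        intro t ht
        have := h (m + 1) (n + 1) 0 rfl rfl t ht
        rwa [embG_zero] at this
      rw [eq_top_iff, ← ker_sup_range]
      exact sup_le h3 h2

theorem U_sumzero {m n : ℕ} (S : Submodule ℂ (Tens N m n)) (w : Tens N m n)
    (h : ∀ (p : m.Partition) (g : Perm (Fin m)), U N m n (o g * cS p * o g⁻¹) w ∈ S) : w ∈ S := by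
  obtain ⟨α, hα⟩ := complete m
  have : w = U N m n 1 w := by simp
  rw [this, hα]
  simp only [map_sum, map_smul, LinearMap.sum_apply, LinearMap.smul_apply, zS]
  exact Submodule.sum_mem _ fun p _ => Submodule.smul_mem _ _ (Submodule.sum_mem _ fun g _ => h p g)

theorem D_sumzero {m n : ℕ} (S : Submodule ℂ (Tens N m n)) (w : Tens N m n)
    (h : ∀ (p : n.Partition) (g : Perm (Fin n)), D N m n (o g * cS p * o g⁻¹) w ∈ S) : w ∈ S := by
  obtain ⟨α, hα⟩ := complete n
  have : w = D N m n 1 w := by simp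
  rw [this, hα]
  simp only [map_sum, map_smul, LinearMap.sum_apply, LinearMap.smul_apply, zS]
  exact Submodule.sum_mem _ fun p _ => Submodule.smul_mem _ _ (Submodule.sum_mem _ fun g _ => h p g)

theorem spanning2 (m n : ℕ) (S : Submodule ℂ (Tens N m n))
    (hU : ∀ x, ∀ s ∈ S, U N m n x s ∈ S) (hD : ∀ x, ∀ s ∈ S, D N m n x s ∈ S)
    (h : ∀ k l r (hk : k + r = m) (hl : l + r = n) (μ : k.Partition) (ν : l.Partition)
      (t : Tens N k l), A N k l t = 0 →
      embG N k l m n r hk hl (U N k l (cS μ) (D N k l (cS ν) t)) ∈ S) : S = ⊤ := by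
  apply spanning m n S hU hD
  intro k l r hk hl t ht
  have key : t ∈ S.comap (embG N k l m n r hk hl) := by
    apply U_sumzero
    intro μ g
    apply D_sumzero
    intro ν g'
    rw [Submodule.mem_comap]
    have e : D N k l (o g' * cS ν * o g'⁻¹) (U N k l (o g * cS μ * o g⁻¹) t) =
        U N k l (o g) (D N k l (o g') (U N k l (cS μ) (D N k l (cS ν)
          (U N k l (o g⁻¹) (D N k l (o g'⁻¹) t))))) := by
      simp only [map_mul]
      simp only [← Module.End.mul_apply]
      congr 1
      simp only [mul_assoc]
      have c : ∀ x y (z : Module.End ℂ (Tens N k l)), D N k l y * (U N k l x * z) = U N k l x * (D N k l y * z) := by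
        intro x y z
        rw [← mul_assoc, ← (UD x y).eq, mul_assoc]
      have c' : ∀ x y, D N k l y * (U N k l x) = U N k l x * (D N k l y) := fun x y => (UD x y).eq.symm
      simp only [c, c']
    rw [e]
    obtain ⟨x', hx⟩ := exU (N := N) k l m n r hk hl (o g)
    obtain ⟨y', hy⟩ := exD (N := N) k l m n r hk hl (o g')
    rw [← hx, ← hy]
    apply hU
    apply hD
    apply h
    have h1 := LinearMap.congr_fun (U_A (N := N) (n := l) (o g⁻¹)).eq.symm (D N k l (o g'⁻¹) t)
    have h2 := LinearMap.congr_fun (D_A (N := N) (m := k) (o g'⁻¹)).eq.symm t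
    simp only [Module.End.mul_apply] at h1 h2
    rw [h1, h2, ht, map_zero, map_zero]
  exact key

end embG

end WB

namespace WB

open Equiv Mixed

section rows

variable {N m n : ℕ}

theorem antiU_card (C : Finset (Fin m)) (v : Tens N m n) (hv : v ≠ 0)
    (h : ∀ a ∈ C, ∀ b ∈ C, a ≠ b → U N m n (o (swap a b)) v = -v) : C.card ≤ N := by
  by_contra hcon
  apply hv
  funext i j
  obtain ⟨a, ha, b, hb, hab, hi⟩ := Finset.exists_ne_map_eq_of_card_lt_of_maps_to
    (s := C) (t := (Finset.univ : Finset (Fin N))) (f := i) (by simpa using hcon) (fun _ _ => Finset.mem_coe.2 (Finset.mem_univ _))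
  have h1 := congrFun (congrFun (h a ha b hb hab) i) j
  rw [U_o] at h1
  have h2 : v (i ∘ swap a b) j = - v i j := h1
  have h3 : i ∘ swap a b = i := by
    funext x
    simp only [Function.comp_apply, swap_apply_def]
    split_ifs with e1 e2
    · rw [e1, hi]
    · rw [e2, hi]
    · rfl
  rw [h3] at h2
  exact self_eq_neg.1 h2

theorem antiD_card (C : Finset (Fin n)) (v : Tens N m n) (hv : v ≠ 0)
    (h : ∀ a ∈ C, ∀ b ∈ C, a ≠ b → D N m n (o (swap a b)) v = -v) : C.card ≤ N := by
  by_contra hcon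
  apply hv
  funext i j
  obtain ⟨a, ha, b, hb, hab, hi⟩ := Finset.exists_ne_map_eq_of_card_lt_of_maps_to
    (s := C) (t := (Finset.univ : Finset (Fin N))) (f := j) (by simpa using hcon) (fun _ _ => Finset.mem_coe.2 (Finset.mem_univ _))
  have h1 := congrFun (congrFun (h a ha b hb hab) i) j
  rw [D_o] at h1
  have h2 : v i (j ∘ swap a b) = - v i j := h1
  have h3 : j ∘ swap a b = j := by
    funext x
    simp only [Function.comp_apply, swap_apply_def]
    split_ifs with e1 e2
    · rw [e1, hi]
    · rw [e2, hi]
    · rfl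
  rw [h3] at h2
  exact self_eq_neg.1 h2

/-- Letters in the first column. -/
def C0 (p : m.Partition) : Finset (Fin m) := Finset.univ.filter (fun x => (stf p x).2 = 0)

theorem C0_card (p : m.Partition) : (C0 p).card = nrows (Y p) := by
  unfold nrows
  rw [← Finset.card_image_of_injOn (s := C0 p) (f := fun x => (stf p x).1)]
  · congr 1
    ext i
    simp only [Finset.mem_image, C0, Finset.mem_filter, Finset.mem_univ, true_and]
    constructor
    · rintro ⟨x, _, rfl⟩
      exact ⟨stf p x, (stf_std p).mem x, rfl⟩
    · rintro ⟨⟨a, b⟩, hc, rfl⟩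
      have : (a, 0) ∈ (Y p).cells :=
        (Y p).isLowerSet (a := (a, b)) (b := (a, 0)) (Prod.mk_le_mk.2 ⟨le_rfl, by omega⟩) hc
      obtain ⟨x, hx⟩ := (stf_std p).ex this
      exact ⟨x, by rw [hx], by rw [hx]⟩
  · intro x hx y hy h
    simp only [C0, Finset.coe_filter, Finset.mem_univ, true_and, Set.mem_ofPred_eq] at hx hy
    exact (stf_std p).tab.1 (Prod.ext h (by rw [hx, hy]))

theorem swap_bS (p : m.Partition) {a b : Fin m} (ha : a ∈ C0 p) (hb : b ∈ C0 p) (hab : a ≠ b) :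
    o (swap a b) * bS (stf p) m = - bS (stf p) m := by
  simp only [C0, Finset.mem_filter, Finset.mem_univ, true_and] at ha hb
  rw [mul_bS (colPres_swap (by rw [ha, hb])) (Fx_top _)]
  have : sg (swap a b) = -1 := by simp [sg, Perm.sign_swap hab]
  rw [this]
  simp

theorem rowsU (p : m.Partition) (y : Tens N m n) (h : U N m n (cS p) y ≠ 0) : nrows (Y p) ≤ N := by
  rw [← C0_card]
  refine antiU_card (n := n) (C0 p) (U N m n (bS (stf p) m) y) ?_ ?_
  · intro e
    apply h
    rw [cS, map_mul, Module.End.mul_apply, e, map_zero]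
  · intro a ha b hb hab
    rw [← Module.End.mul_apply, ← map_mul, swap_bS p ha hb hab]
    simp

theorem rowsD (p : n.Partition) (y : Tens N m n) (h : D N m n (cS p) y ≠ 0) : nrows (Y p) ≤ N := by
  rw [← C0_card]
  refine antiD_card (m := m) (C0 p) (D N m n (bS (stf p) n) y) ?_ ?_
  · intro e
    apply h
    rw [cS, map_mul, Module.End.mul_apply, e, map_zero]
  · intro a ha b hb hab
    rw [← Module.End.mul_apply, ← map_mul, swap_bS p ha hb hab]
    simp

/-- Antisymmetrising with the last letter. -/
def q (C : Finset (Fin m)) : GA (m + 1) := 1 - ∑ a ∈ C, o (swap a.castSucc (Fin.last m))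

theorem QQ {M : Type*} [AddCommGroup M] [Module ℂ M] (R : GA (m + 1) →ₐ[ℂ] Module.End ℂ M)
    (C : Finset (Fin m)) (x : M)
    (h : ∀ a ∈ C, ∀ b ∈ C, a ≠ b → R (o (swap a.castSucc b.castSucc)) x = -x) :
    R (q C) (R (q C) x) = ((C.card : ℂ) + 1) • R (q C) x := by
  have key : ∀ a ∈ C, R (o (swap a.castSucc (Fin.last m))) (R (q C) x) = - R (q C) x := by
    intro a ha
    have hq : R (q C) x = x - ∑ b ∈ C, R (o (swap b.castSucc (Fin.last m))) x := by
      simp [q, LinearMap.sum_apply]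
    rw [hq, map_sub, map_sum, ← Finset.add_sum_erase C _ ha,
      ← Finset.add_sum_erase C (fun b => R (o (swap b.castSucc (Fin.last m))) x) ha]
    have h1 : R (o (swap a.castSucc (Fin.last m))) (R (o (swap a.castSucc (Fin.last m))) x) = x := by
      rw [← Module.End.mul_apply, ← map_mul, ← o_mul, swap_mul_self, o_one]; simp
    have h2 : ∀ b ∈ C.erase a, R (o (swap a.castSucc (Fin.last m))) (R (o (swap b.castSucc (Fin.last m))) x)
        = - R (o (swap b.castSucc (Fin.last m))) x := by
      intro b hb
      rw [Finset.mem_erase] at hb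
      have e : swap a.castSucc (Fin.last m) * swap b.castSucc (Fin.last m) =
          swap b.castSucc (Fin.last m) * swap a.castSucc b.castSucc := by
        have n1 : a.castSucc ≠ b.castSucc := by simpa using hb.1.symm
        have n2 := (Fin.castSucc_lt_last a).ne
        have n3 := (Fin.castSucc_lt_last b).ne
        rw [Equiv.mul_swap_eq_swap_mul (swap b.castSucc (Fin.last m)) a.castSucc b.castSucc,
          swap_apply_of_ne_of_ne n1 n2, swap_apply_left]
      rw [← Module.End.mul_apply, ← map_mul, ← o_mul, e, o_mul, map_mul, Module.End.mul_apply,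
        h a ha b hb.2 hb.1.symm, map_neg]
    rw [h1, Finset.sum_congr rfl h2, Finset.sum_neg_distrib]
    abel
  have hq : ∀ y, R (q C) y = y - ∑ b ∈ C, R (o (swap b.castSucc (Fin.last m))) y := by
    intro y
    simp [q, LinearMap.sum_apply]
  rw [hq (R (q C) x), Finset.sum_congr rfl key,
    Finset.sum_const, ← Nat.cast_smul_eq_nsmul ℂ, add_smul, one_smul, smul_neg, sub_neg_eq_add, add_comm]

theorem ipU_q (C : Finset (Fin m)) (x y : Tens N (m + 1) n) :
    ip (U N (m + 1) n (q C) x) y = ip x (U N (m + 1) n (q C) y) := by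
  have h : ∀ z, U N (m + 1) n (q C) z =
      z + (-1 : ℂ) • ∑ a ∈ C, permU N (m + 1) n (swap a.castSucc (Fin.last m)) z := by
    intro z
    simp [q, LinearMap.sum_apply, U_o, sub_eq_add_neg]
  rw [h, h, ip_add_left, ip_smul_left, ip_sum_left, map_add, map_smul, map_sum]
  simp [ip_permU]

theorem ipD_q (C : Finset (Fin n)) (x y : Tens N m (n + 1)) :
    ip (D N m (n + 1) (q C) x) y = ip x (D N m (n + 1) (q C) y) := by
  have h : ∀ z, D N m (n + 1) (q C) z =
      z + (-1 : ℂ) • ∑ a ∈ C, permD N m (n + 1) (swap a.castSucc (Fin.last n)) z := by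
    intro z
    simp [q, LinearMap.sum_apply, D_o, sub_eq_add_neg]
  rw [h, h, ip_add_left, ip_smul_left, ip_sum_left, map_add, map_smul, map_sum]
  simp [ip_permD]

theorem snoc_swap {k : ℕ} (i : Fin k → Fin N) (a : Fin k) (c : Fin N) :
    (Fin.snoc (α := fun _ => Fin N) i c : Fin (k + 1) → Fin N) ∘ swap a.castSucc (Fin.last k)
      = Fin.snoc (α := fun _ => Fin N) (Function.update i a c) (i a) := by
  funext x
  refine Fin.lastCases ?_ (fun y => ?_) x
  · simp
  · by_cases h : y = a
    · subst h; simp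
    · rw [Function.comp_apply, swap_apply_of_ne_of_ne (by simpa using h) (Fin.castSucc_lt_last y).ne]
      simp [Function.update_of_ne h]

theorem tr_U (a : Fin m) (v : Tens N m n) :
    tr1 N m n (permU N _ _ (swap a.castSucc (Fin.last m)) (emb1 N m n v)) = v := by
  funext i j
  show ∑ k : Fin N, emb1 N m n v (_ ∘ _) _ = _
  simp only [snoc_swap, emb1_apply, Fin.snoc_last, Fin.snoc_castSucc]
  rw [Finset.sum_ite_eq]
  simp

theorem tr_D (a : Fin n) (v : Tens N m n) :
    tr1 N m n (permD N _ _ (swap a.castSucc (Fin.last n)) (emb1 N m n v)) = v := by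
  funext i j
  show ∑ k : Fin N, emb1 N m n v _ (_ ∘ _) = _
  simp only [snoc_swap, emb1_apply, Fin.snoc_last, Fin.snoc_castSucc]
  rw [Finset.sum_ite_eq']
  simp

theorem tr_UD (a : Fin m) (b : Fin n) (v : Tens N m n) :
    tr1 N m n (permU N _ _ (swap a.castSucc (Fin.last m))
      (permD N _ _ (swap b.castSucc (Fin.last n)) (emb1 N m n v))) = tauC N m n a b v := by
  funext i j
  show ∑ k : Fin N, emb1 N m n v (_ ∘ _) (_ ∘ _) = if _ then ∑ k : Fin N, _ else _
  simp only [snoc_swap, emb1_apply, Fin.snoc_last, Fin.snoc_castSucc]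
  split_ifs <;> simp

theorem two_anti (C : Finset (Fin m)) (C' : Finset (Fin n)) (v : Tens N m n) (hv : v ≠ 0)
    (hA : A N m n v = 0)
    (h : ∀ a ∈ C, ∀ b ∈ C, a ≠ b → U N m n (o (swap a b)) v = -v)
    (h' : ∀ a ∈ C', ∀ b ∈ C', a ≠ b → D N m n (o (swap a b)) v = -v) :
    C.card + C'.card ≤ N := by
  set x := emb1 N m n v with hx
  have k1 : D N _ _ (q C') (D N _ _ (q C') x) = ((C'.card : ℂ) + 1) • D N _ _ (q C') x := by
    apply QQ
    intro a ha b hb hab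
    rw [hx, ← extP_swap, ← eG_o, D_emb1, h' a ha b hb hab, map_neg]
  have k2 : U N _ _ (q C) (U N _ _ (q C) (D N _ _ (q C') x)) =
      ((C.card : ℂ) + 1) • U N _ _ (q C) (D N _ _ (q C') x) := by
    apply QQ
    intro a ha b hb hab
    rw [← Module.End.mul_apply, (UD _ _).eq, Module.End.mul_apply]
    rw [hx, ← extP_swap, ← eG_o, U_emb1, h a ha b hb hab, map_neg, map_neg]
  set z := U N _ _ (q C) (D N _ _ (q C') x) with hz
  have k3 : ip z z = ((C.card : ℂ) + 1) * ((C'.card : ℂ) + 1) * ip x z := by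
    conv_lhs => rw [hz]
    rw [ipU_q, ipD_q, k2, map_smul, map_smul, hz, ← Module.End.mul_apply (D N _ _ (q C')),
      ← (UD _ _).eq, Module.End.mul_apply, k1, map_smul, map_smul, smul_eq_mul, smul_eq_mul, mul_assoc]
  have k4 : ip x z = ((N : ℂ) - C.card - C'.card) * ip v v := by
    rw [hx, ip_emb1]
    have : tr1 N m n z = ((N : ℂ) - C.card - C'.card) • v := by
      rw [hz, hx]
      simp only [q, map_sub, map_one, map_sum, LinearMap.sub_apply, LinearMap.sum_apply, U_o, D_o,
        Module.End.one_apply, tr_U, tr_D, tr_UD, tau_of_A hA, tr1_emb1]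
      simp only [Finset.sum_const, ← Nat.cast_smul_eq_nsmul ℂ, sub_smul,
        smul_zero]
      module
    rw [this, map_smul, smul_eq_mul]
  rw [k4, ip_self, ip_self] at k3
  have k5 : (∑ i, ∑ j, ‖z i j‖ ^ 2 : ℝ) = ((C.card : ℝ) + 1) * ((C'.card : ℝ) + 1) *
      (((N : ℝ) - C.card - C'.card) * (∑ i, ∑ j, ‖v i j‖ ^ 2 : ℝ)) := by
    exact_mod_cast k3
  have p1 : 0 ≤ (∑ i, ∑ j, ‖z i j‖ ^ 2 : ℝ) := by positivity
  have p2 : 0 < (∑ i, ∑ j, ‖v i j‖ ^ 2 : ℝ) :=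
    lt_of_le_of_ne (by positivity) (fun e => hv (ip_zero v e.symm))
  by_contra hcon
  have p3 : (N : ℝ) - C.card - C'.card < 0 := by
    have : (N : ℝ) < C.card + C'.card := by exact_mod_cast not_le.1 hcon
    linarith
  have p4 : ((N : ℝ) - C.card - C'.card) * (∑ i, ∑ j, ‖v i j‖ ^ 2 : ℝ) < 0 :=
    mul_neg_of_neg_of_pos p3 p2
  have p5 : (0 : ℝ) < ((C.card : ℝ) + 1) * ((C'.card : ℝ) + 1) := by positivity
  have := mul_neg_of_pos_of_neg p5 p4
  linarith

theorem rowsUD (μ : m.Partition) (ν : n.Partition) (t : Tens N m n) (hA : A N m n t = 0)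
    (h : U N m n (cS μ) (D N m n (cS ν) t) ≠ 0) : nrows (Y μ) + nrows (Y ν) ≤ N := by
  rw [← C0_card, ← C0_card]
  refine two_anti (C0 μ) (C0 ν) (U N m n (bS (stf μ) m) (D N m n (bS (stf ν) n) t)) ?_ ?_ ?_ ?_
  · intro e
    apply h
    rw [cS, cS, map_mul, map_mul, Module.End.mul_apply, Module.End.mul_apply,
      ← Module.End.mul_apply (U N m n (bS (stf μ) m)), (UD _ _).eq, Module.End.mul_apply, e, map_zero,
      map_zero]
  · have h1 := LinearMap.congr_fun (U_A (N := N) (n := n) (bS (stf μ) m)).eq.symm (D N m n (bS (stf ν) n) t)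
    have h2 := LinearMap.congr_fun (D_A (N := N) (m := m) (bS (stf ν) n)).eq.symm t
    simp only [Module.End.mul_apply] at h1 h2
    rw [h1, h2, hA, map_zero, map_zero]
  · intro a ha b hb hab
    rw [← Module.End.mul_apply, ← map_mul, swap_bS μ ha hb hab]
    simp
  · intro a ha b hb hab
    rw [← Module.End.mul_apply, ← (UD _ _).eq, Module.End.mul_apply,
      ← Module.End.mul_apply (D N m n _), ← map_mul, swap_bS ν ha hb hab]
    simp

end rows

end WB

namespace WB

open Equiv Mixed

section main

variable {N : ℕ}

theorem DU_apply {m n : ℕ} (x : GA m) (y : GA n) (t : Tens N m n) :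
    D N m n y (U N m n x t) = U N m n x (D N m n y t) :=
  LinearMap.congr_fun (UD x y).eq.symm t

theorem AU_apply {m n : ℕ} (x : GA m) (t : Tens N m n) :
    A N m n (U N m n x t) = U N m n x (A N m n t) :=
  LinearMap.congr_fun (U_A x).eq.symm t

theorem AD_apply {m n : ℕ} (x : GA n) (t : Tens N m n) :
    A N m n (D N m n x t) = D N m n x (A N m n t) :=
  LinearMap.congr_fun (D_A x).eq.symm t

theorem UU_apply {m n : ℕ} (x y : GA m) (t : Tens N m n) :
    U N m n x (U N m n y t) = U N m n (x * y) t := by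
  rw [map_mul]; rfl

theorem DD_apply {m n : ℕ} (x y : GA n) (t : Tens N m n) :
    D N m n x (D N m n y t) = D N m n (x * y) t := by
  rw [map_mul]; rfl

theorem T_apply {m n : ℕ} (t : Tens N m n) :
    T N m n t = U N m n (Ls m m) t + D N m n (Ls n n) t - A N m n t := rfl

theorem TU_apply {m n : ℕ} (x : GA m) (t : Tens N m n) :
    T N m n (U N m n x t) = U N m n x (T N m n t) := by
  simp only [T_apply, map_add, map_sub, DU_apply, AU_apply, UU_apply, (Ls_cen x).eq]

theorem TD_apply {m n : ℕ} (x : GA n) (t : Tens N m n) :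
    T N m n (D N m n x t) = D N m n x (T N m n t) := by
  simp only [T_apply, map_add, map_sub, ← DU_apply, AD_apply, DD_apply, (Ls_cen x).eq]

variable {k l m n r : ℕ} (hk : k + r = m) (hl : l + r = n) (μ : k.Partition) (ν : l.Partition)

/-- Generators of type `(μ, ν)`. -/
def gen (t : Tens N k l) : Tens N m n :=
  embG N k l m n r hk hl (U N k l (cS μ) (D N k l (cS ν) t))

/-- The isotypic piece. -/
def W (N : ℕ) : Submodule ℂ (Tens N m n) :=
  Submodule.span ℂ {v | ∃ (x : GA m) (y : GA n) (t : Tens N k l), A N k l t = 0 ∧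
    v = U N m n x (D N m n y (gen hk hl μ ν t))}

theorem W_U (x : GA m) {s : Tens N m n} (hs : s ∈ W hk hl μ ν N) : U N m n x s ∈ W hk hl μ ν N := by
  induction hs using Submodule.span_induction with
  | mem s h =>
    obtain ⟨x', y, t, ht, rfl⟩ := h
    apply Submodule.subset_span
    exact ⟨x * x', y, t, ht, UU_apply _ _ _⟩
  | zero => rw [map_zero]; exact Submodule.zero_mem _
  | add a b _ _ ha hb => rw [map_add]; exact Submodule.add_mem _ ha hb
  | smul c a _ ha => rw [map_smul]; exact Submodule.smul_mem _ _ ha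

theorem W_D (x : GA n) {s : Tens N m n} (hs : s ∈ W hk hl μ ν N) : D N m n x s ∈ W hk hl μ ν N := by
  induction hs using Submodule.span_induction with
  | mem s h =>
    obtain ⟨x', y, t, ht, rfl⟩ := h
    apply Submodule.subset_span
    exact ⟨x', x * y, t, ht, by rw [DU_apply, DD_apply]⟩
  | zero => rw [map_zero]; exact Submodule.zero_mem _
  | add a b _ _ ha hb => rw [map_add]; exact Submodule.add_mem _ ha hb
  | smul c a _ ha => rw [map_smul]; exact Submodule.smul_mem _ _ ha

theorem T_gen (t : Tens N k l) (ht : A N k l t = 0) : T N m n (gen hk hl μ ν t) =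
    ((content (Y μ) : ℂ) + (content (Y ν) : ℂ) - r * N) • gen hk hl μ ν t := by
  unfold gen
  rw [T_embG, T_apply, AU_apply, AD_apply, ht, map_zero, map_zero, sub_zero, UU_apply, Ls_cS, DU_apply,
    DD_apply, Ls_cS]
  simp only [map_smul, LinearMap.smul_apply, map_add]
  module

theorem W_T {s : Tens N m n} (hs : s ∈ W hk hl μ ν N) :
    T N m n s = ((content (Y μ) : ℂ) + (content (Y ν) : ℂ) - r * N) • s := by
  induction hs using Submodule.span_induction with
  | mem s h =>
    obtain ⟨x', y, t, ht, rfl⟩ := h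
    rw [TU_apply, TD_apply, T_gen hk hl μ ν t ht, map_smul, map_smul]
  | zero => simp
  | add a b _ _ ha hb => rw [map_add, ha, hb, smul_add]
  | smul c a _ ha => rw [map_smul, ha, smul_comm]

theorem W_A {s : Tens N m n} (hs : s ∈ W hk hl μ ν N) : A N m n s ∈ W hk hl μ ν N := by
  have h : A N m n s = U N m n (Ls m m) s + D N m n (Ls n n) s - T N m n s := by
    rw [T_apply]; abel
  rw [h, W_T hk hl μ ν hs]
  exact Submodule.sub_mem _ (Submodule.add_mem _ (W_U _ _ _ _ _ hs) (W_D _ _ _ _ _ hs))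
    (Submodule.smul_mem _ _ hs)

theorem W_iso (hrm : r ≤ m) (hrn : r ≤ n) :
    W hk hl μ ν N ≤ glIsoComp N m n r hrm hrn (Y μ) (Y ν) := by
  obtain rfl : k = m - r := by omega
  obtain rfl : l = n - r := by omega
  apply Submodule.span_le.2
  rintro _ ⟨x, y, t, ht, rfl⟩
  apply Submodule.subset_span
  refine ⟨U N m n x * D N m n y, Subalgebra.mul_mem _ (U_cent x) (D_cent y), stf μ, stf ν,
    (stf_std μ).tab, (stf_std ν).tab, t, mem_traceless ht, ?_⟩
  rw [← U_cS, ← D_cS]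
  rfl

theorem perpU (x : GA m) (s : Tens N m n) (h : ∀ w, A N m n w = 0 → ip s w = 0) :
    ∀ w, A N m n w = 0 → ip (U N m n x s) w = 0 := by
  intro w hw
  rw [o_expand x]
  simp only [map_sum, LinearMap.sum_apply, ip_sum_left, map_smul, LinearMap.smul_apply, ip_smul_left, U_o,
    ip_permU]
  refine Finset.sum_eq_zero fun p _ => ?_
  rw [h, mul_zero]
  rw [← U_o, AU_apply, hw, map_zero]

theorem perpD (x : GA n) (s : Tens N m n) (h : ∀ w, A N m n w = 0 → ip s w = 0) :
    ∀ w, A N m n w = 0 → ip (D N m n x s) w = 0 := by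
  intro w hw
  rw [o_expand x]
  simp only [map_sum, LinearMap.sum_apply, ip_sum_left, map_smul, LinearMap.smul_apply, ip_smul_left, D_o,
    ip_permD]
  refine Finset.sum_eq_zero fun p _ => ?_
  rw [h, mul_zero]
  rw [← D_o, AD_apply, hw, map_zero]

theorem W_perp (hN : 1 ≤ N) (hr : r ≠ 0) {s : Tens N m n} (hs : s ∈ W hk hl μ ν N) :
    ∀ w, A N m n w = 0 → ip s w = 0 := by
  induction hs using Submodule.span_induction with
  | mem s h =>
    obtain ⟨x, y, t, ht, rfl⟩ := h
    apply perpU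
    apply perpD
    intro w hw
    obtain ⟨r, rfl⟩ := Nat.exists_eq_succ_of_ne_zero hr
    obtain ⟨m, rfl⟩ : ∃ m', m = m' + 1 := ⟨m - 1, by omega⟩
    obtain ⟨n, rfl⟩ : ∃ n', n = n' + 1 := ⟨n - 1, by omega⟩
    unfold gen
    rw [embG_succ]
    set e := emb1 N m n (embG N k l m n r (by omega) (by omega) ((U N k l (cS μ)) ((D N k l (cS ν)) t)))
      with he
    have h1 : ip (tauC N (m + 1) (n + 1) (Fin.last m) (Fin.last n) e) w = 0 := by
      rw [ip_tau, tau_of_A hw, map_zero]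
    rw [he, tau_last_emb1, ← he, ip_smul_left] at h1
    have hN' : (N : ℂ) ≠ 0 := by exact_mod_cast (by omega : N ≠ 0)
    simpa [hN'] using h1
  | zero => intro w _; exact ip_zero_left w
  | add a b _ _ ha hb => intro w hw; rw [ip_add_left, ha w hw, hb w hw, add_zero]
  | smul c a _ ha => intro w hw; rw [ip_smul_left, ha w hw, mul_zero]

theorem W_rows {s : Tens N m n} (hs : s ∈ W hk hl μ ν N) (h0 : s ≠ 0) :
    nrows (Y μ) + nrows (Y ν) ≤ N := by
  by_contra hcon
  apply h0
  have : W hk hl μ ν N ≤ ⊥ := by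
    apply Submodule.span_le.2
    rintro _ ⟨x, y, t, ht, rfl⟩
    have : U N k l (cS μ) (D N k l (cS ν) t) = 0 := by
      by_contra hne
      exact hcon (rowsUD μ ν t ht hne)
    simp [gen, this]
  simpa using this hs

/-- The part of `W` with prescribed content polynomials for the small symmetric groups. -/
def X' (N : ℕ) : Submodule ℂ (Tens N m n) where
  carrier := {s | s ∈ W hk hl μ ν N ∧ (∀ z, U N m n (J m z k) s = Pp (Y μ) z • s) ∧
    (∀ z, D N m n (J n z l) s = Pp (Y ν) z • s)}
  zero_mem' := ⟨Submodule.zero_mem _, fun z => by simp, fun z => by simp⟩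
  add_mem' := fun {a b} ha hb => ⟨Submodule.add_mem _ ha.1 hb.1,
    fun z => by rw [map_add, ha.2.1, hb.2.1, smul_add],
    fun z => by rw [map_add, ha.2.2, hb.2.2, smul_add]⟩
  smul_mem' := fun c a ha => ⟨Submodule.smul_mem _ _ ha.1,
    fun z => by rw [map_smul, ha.2.1, smul_comm],
    fun z => by rw [map_smul, ha.2.2, smul_comm]⟩

theorem gen_X' (t : Tens N k l) (ht : A N k l t = 0) : gen hk hl μ ν t ∈ X' hk hl μ ν N := by
  refine ⟨?_, ?_, ?_⟩
  · apply Submodule.subset_span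
    exact ⟨1, 1, t, ht, by simp⟩
  · intro z
    unfold gen
    rw [JU_embG, UU_apply, J_cS, map_smul, LinearMap.smul_apply, map_smul]
  · intro z
    unfold gen
    rw [JD_embG, DU_apply, DD_apply, J_cS, map_smul, LinearMap.smul_apply, map_smul, map_smul]

theorem X'_A {s : Tens N m n} (hs : s ∈ X' hk hl μ ν N) : A N m n s ∈ X' hk hl μ ν N :=
  ⟨W_A _ _ _ _ hs.1, fun z => by rw [← AU_apply, hs.2.1, map_smul],
    fun z => by rw [← AD_apply, hs.2.2, map_smul]⟩

theorem X'_U (i : ℕ) {s : Tens N m n} (hs : s ∈ X' hk hl μ ν N) :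
    U N m n (X m i) s ∈ X' hk hl μ ν N :=
  ⟨W_U _ _ _ _ _ hs.1, fun z => by rw [UU_apply, ← (X_J i k z).eq, ← UU_apply, hs.2.1, map_smul],
    fun z => by rw [DU_apply, hs.2.2, map_smul]⟩

theorem X'_D (i : ℕ) {s : Tens N m n} (hs : s ∈ X' hk hl μ ν N) :
    D N m n (X n i) s ∈ X' hk hl μ ν N :=
  ⟨W_D _ _ _ _ _ hs.1, fun z => by rw [← DU_apply, hs.2.1, map_smul],
    fun z => by rw [DD_apply, ← (X_J i l z).eq, ← DD_apply, hs.2.2, map_smul]⟩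

theorem joint {V : Type*} [AddCommGroup V] [Module ℂ V] [FiniteDimensional ℂ V]
    (fs : List (Module.End ℂ V)) (hc : ∀ f ∈ fs, ∀ g ∈ fs, Commute f g) (E : Submodule ℂ V)
    (hE : E ≠ ⊥) (hs : ∀ f ∈ fs, ∀ v ∈ E, f v ∈ E) :
    ∃ w ∈ E, w ≠ 0 ∧ ∀ f ∈ fs, ∃ c : ℂ, f w = c • w := by
  induction fs generalizing E with
  | nil =>
    obtain ⟨w, hw, h0⟩ := Submodule.exists_mem_ne_zero_of_ne_bot hE
    exact ⟨w, hw, h0, by simp⟩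
  | cons f fs ih =>
    have : Nontrivial E := Submodule.nontrivial_iff_ne_bot.2 hE
    obtain ⟨c, hcc⟩ := Module.End.exists_eigenvalue (f.restrict (hs f (by simp)))
    obtain ⟨v, hv⟩ := hcc.exists_hasEigenvector
    have hfv : f v.1 = c • v.1 := congrArg Subtype.val hv.apply_eq_smul
    have hv0 : v.1 ≠ 0 := fun h => hv.2 (Subtype.ext h)
    obtain ⟨w, hw, h0, h⟩ := ih (fun f hf g hg => hc f (by simp [hf]) g (by simp [hg]))
      (E ⊓ Module.End.eigenspace f c)
      (by
        intro e
        have : v.1 ∈ E ⊓ Module.End.eigenspace f c := ⟨v.2, Module.End.mem_eigenspace_iff.2 hfv⟩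
        rw [e] at this
        exact hv0 (by simpa using this))
      (by
        rintro g hg u ⟨hu1, hu2⟩
        refine ⟨hs g (by simp [hg]) u hu1, ?_⟩
        rw [SetLike.mem_coe, Module.End.mem_eigenspace_iff] at hu2 ⊢
        have := LinearMap.congr_fun (hc f (by simp) g (by simp [hg])).eq u
        rw [Module.End.mul_apply, Module.End.mul_apply] at this
        rw [this, hu2, map_smul])
    refine ⟨w, hw.1, h0, ?_⟩
    intro g hg
    rcases List.mem_cons.1 hg with rfl | hg
    · exact ⟨c, Module.End.mem_eigenspace_iff.1 hw.2⟩
    · exact h g hg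

theorem JU_prod (w : Tens N m n) (x : ℕ → ℂ) (hx : ∀ i < m, U N m n (X m i) w = x i • w) (z : ℂ) (k d : ℕ)
    (hkd : k + d ≤ m) : U N m n (J m z (k + d)) w =
      (((Multiset.range d).map (fun i => x (k + i))).map (fun x => z + x)).prod • U N m n (J m z k) w := by
  induction d with
  | zero => simp
  | succ d ih =>
    rw [← add_assoc, J, ← UU_apply, map_add, LinearMap.add_apply, hx _ (by omega), AlgHom.commutes,
      Module.algebraMap_end_apply, ← add_smul, map_smul, ih (by omega), Multiset.range_succ, Multiset.map_cons,
      Multiset.map_cons, Multiset.prod_cons, mul_smul]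

theorem JD_prod (w : Tens N m n) (x : ℕ → ℂ) (hx : ∀ i < n, D N m n (X n i) w = x i • w) (z : ℂ) (k d : ℕ)
    (hkd : k + d ≤ n) : D N m n (J n z (k + d)) w =
      (((Multiset.range d).map (fun i => x (k + i))).map (fun x => z + x)).prod • D N m n (J n z k) w := by
  induction d with
  | zero => simp
  | succ d ih =>
    rw [← add_assoc, J, ← DD_apply, map_add, LinearMap.add_apply, hx _ (by omega), AlgHom.commutes,
      Module.algebraMap_end_apply, ← add_smul, map_smul, ih (by omega), Multiset.range_succ, Multiset.map_cons,
      Multiset.map_cons, Multiset.prod_cons, mul_smul]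

/-- Some piece meets the eigenspace. -/
theorem exists_piece (m n : ℕ) (a : ℂ) (ha : Module.End.HasEigenvalue (A N m n) a) :
    ∃ (k l r : ℕ) (hk : k + r = m) (hl : l + r = n) (μ : k.Partition) (ν : l.Partition),
      X' hk hl μ ν N ⊓ Module.End.eigenspace (A N m n) a ≠ ⊥ := by
  by_contra! hcon
  let B : Module.End ℂ (Tens N m n) := A N m n - algebraMap ℂ _ a
  have hB : ∀ v, B v = A N m n v - a • v := fun v => rfl
  have htop : LinearMap.range B = ⊤ := by
    apply spanning2
    · rintro x _ ⟨v, rfl⟩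
      exact ⟨U N m n x v, by rw [hB, hB, AU_apply, map_sub, map_smul]⟩
    · rintro x _ ⟨v, rfl⟩
      exact ⟨D N m n x v, by rw [hB, hB, AD_apply, map_sub, map_smul]⟩
    · intro k l r hk hl μ ν t ht
      have hst : ∀ s ∈ X' hk hl μ ν N, B s ∈ X' hk hl μ ν N := fun s hs => by
        rw [hB]
        exact Submodule.sub_mem _ (X'_A hk hl μ ν hs) (Submodule.smul_mem _ _ hs)
      have hinj : Function.Injective (B.restrict hst) := by
        rw [← LinearMap.ker_eq_bot, LinearMap.ker_eq_bot']
        intro s hs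
        have h1 : B s.1 = 0 := congrArg Subtype.val hs
        rw [hB, sub_eq_zero] at h1
        have : s.1 ∈ X' hk hl μ ν N ⊓ Module.End.eigenspace (A N m n) a :=
          ⟨s.2, Module.End.mem_eigenspace_iff.2 h1⟩
        rw [hcon k l r hk hl μ ν] at this
        exact Subtype.ext (by simpa using this)
      obtain ⟨s, hs⟩ := LinearMap.injective_iff_surjective.1 hinj ⟨_, gen_X' hk hl μ ν t ht⟩
      exact ⟨s.1, congrArg Subtype.val hs⟩
  have hinj : Function.Injective B :=
    LinearMap.injective_iff_surjective.2 (LinearMap.range_eq_top.1 htop)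
  obtain ⟨v, hv⟩ := ha.exists_hasEigenvector
  apply hv.2
  apply hinj
  rw [map_zero, hB, hv.apply_eq_smul, sub_self]

theorem conj_J (p : m.Partition) (g : Perm (Fin m)) (z : ℂ) :
    J m z m * (o g * cS p * o g⁻¹) = Pp (Y p) z • (o g * cS p * o g⁻¹) := by
  rw [← mul_assoc, ← mul_assoc, ← (J_cen z (o g)).eq, mul_assoc (o g), J_cS]
  simp

theorem conj_Ls (p : m.Partition) (g : Perm (Fin m)) :
    Ls m m * (o g * cS p * o g⁻¹) = (content (Y p) : ℂ) • (o g * cS p * o g⁻¹) := by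
  rw [← mul_assoc, ← mul_assoc, ← (Ls_cen (o g)).eq, mul_assoc (o g), Ls_cS]
  simp

end main

theorem final (N m n : ℕ) (hN : 1 ≤ N)
    (a : ℂ) (ha : Module.End.HasEigenvalue (Mixed.A N m n) a) :
    ∃ (r : ℕ) (hrm : r ≤ m) (hrn : r ≤ n) (ρ σ μ ν : YoungDiagram),
      ρ.card = m ∧ σ.card = n ∧
      Mixed.nrows ρ ≤ N ∧ Mixed.nrows σ ≤ N ∧
      μ.card = m - r ∧ ν.card = n - r ∧
      μ.cells ⊆ ρ.cells ∧ ν.cells ⊆ σ.cells ∧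
      Mixed.nrows μ + Mixed.nrows ν ≤ N ∧
      (Mixed.glIsoComp N m n r hrm hrn μ ν ⊓ Mixed.glglComp N m n ρ σ ≠ ⊥) ∧
      a = (r : ℂ) * (N : ℂ) + ((Mixed.content ρ - Mixed.content μ : ℤ) : ℂ)
            + ((Mixed.content σ - Mixed.content ν : ℤ) : ℂ) ∧
      (a = 0 ↔ r = 0) := by
  obtain ⟨k, l, r, hk, hl, μ, ν, hne⟩ := exists_piece m n a ha
  obtain ⟨w, hw, hw0, hje⟩ := joint
    ((List.range m).map (fun i => U N m n (X m i)) ++ (List.range n).map (fun i => D N m n (X n i)))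
    (by
      intro f hf g hg
      simp only [List.mem_append, List.mem_map] at hf hg
      rcases hf with ⟨i, _, rfl⟩ | ⟨i, _, rfl⟩ <;> rcases hg with ⟨j, _, rfl⟩ | ⟨j, _, rfl⟩
      · exact (X_X i j).map (U N m n)
      · exact UD _ _
      · exact (UD _ _).symm
      · exact (X_X i j).map (D N m n))
    (X' hk hl μ ν N ⊓ Module.End.eigenspace (A N m n) a) hne
    (by
      intro f hf v hv
      simp only [List.mem_append, List.mem_map] at hf
      have hv2 := Module.End.mem_eigenspace_iff.1 hv.2
      rcases hf with ⟨i, _, rfl⟩ | ⟨i, _, rfl⟩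
      · exact ⟨X'_U _ _ _ _ i hv.1, Module.End.mem_eigenspace_iff.2 (by
          rw [AU_apply, hv2, map_smul])⟩
      · exact ⟨X'_D _ _ _ _ i hv.1, Module.End.mem_eigenspace_iff.2 (by
          rw [AD_apply, hv2, map_smul])⟩)
  have hAw := Module.End.mem_eigenspace_iff.1 hw.2
  have hwX := hw.1
  have hxU : ∀ i, ∃ c : ℂ, i < m → U N m n (X m i) w = c • w := by
    intro i
    by_cases hi : i < m
    · obtain ⟨c, hc⟩ := hje (U N m n (X m i)) (by
        simp only [List.mem_append, List.mem_map]
        exact Or.inl ⟨i, by simpa using hi, rfl⟩)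
      exact ⟨c, fun _ => hc⟩
    · exact ⟨0, fun h => absurd h hi⟩
  have hxD : ∀ i, ∃ c : ℂ, i < n → D N m n (X n i) w = c • w := by
    intro i
    by_cases hi : i < n
    · obtain ⟨c, hc⟩ := hje (D N m n (X n i)) (by
        simp only [List.mem_append, List.mem_map]
        exact Or.inr ⟨i, by simpa using hi, rfl⟩)
      exact ⟨c, fun _ => hc⟩
    · exact ⟨0, fun h => absurd h hi⟩
  choose xU hxU using hxU
  choose xD hxD using hxD
  obtain ⟨ρ, g, hg⟩ : ∃ (ρ : m.Partition) (g : Perm (Fin m)),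
      U N m n (o g * cS ρ * o g⁻¹) w ≠ 0 := by
    by_contra! hc
    have h1 := U_sumzero ⊥ w (fun p g => by
      rw [Submodule.mem_bot]
      exact hc p g)
    exact hw0 ((Submodule.mem_bot ℂ).1 h1)
  obtain ⟨σ, h, hh⟩ : ∃ (σ : n.Partition) (h : Perm (Fin n)),
      D N m n (o h * cS σ * o h⁻¹) (U N m n (o g * cS ρ * o g⁻¹) w) ≠ 0 := by
    by_contra! hc
    have h1 := D_sumzero ⊥ (U N m n (o g * cS ρ * o g⁻¹) w) (fun p g' => by
      rw [Submodule.mem_bot]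
      exact hc p g')
    exact hg ((Submodule.mem_bot ℂ).1 h1)
  set x0 := o g * cS ρ * o g⁻¹ with hx0
  set y0 := o h * cS σ * o h⁻¹ with hy0
  set y := D N m n y0 (U N m n x0 w) with hy
  have hyW : y ∈ W hk hl μ ν N := W_D _ _ _ _ _ (W_U _ _ _ _ _ hwX.1)
  have hAy : A N m n y = a • y := by rw [hy, AD_apply, AU_apply, hAw, map_smul, map_smul]
  have hLy : U N m n (Ls m m) y = (content (Y ρ) : ℂ) • y := by
    rw [hy, ← DU_apply, UU_apply, conj_Ls, map_smul, LinearMap.smul_apply, map_smul]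
  have hRy : D N m n (Ls n n) y = (content (Y σ) : ℂ) • y := by
    rw [hy, DD_apply, conj_Ls, map_smul, LinearMap.smul_apply]
  have hTy := W_T hk hl μ ν hyW
  rw [T_apply, hAy, hLy, hRy, ← add_smul, ← sub_smul] at hTy
  have hform := smul_left_injective ℂ hh hTy
  have hcontU : (Y μ).cells ⊆ (Y ρ).cells := by
    apply contain ((Multiset.range r).map (fun i => xU (k + i)))
    intro z
    have e1 : U N m n (J m z m) y = Pp (Y ρ) z • y := by
      rw [hy, ← DU_apply, UU_apply, conj_J, map_smul, LinearMap.smul_apply, map_smul]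
    have e2 := JU_prod w xU hxU z k r (by omega)
    rw [hk, hwX.2.1, smul_smul] at e2
    have e4 : U N m n (J m z m) y = D N m n y0 (U N m n x0 (U N m n (J m z m) w)) := by
      rw [hy, ← DU_apply, UU_apply, ← (J_cen z x0).eq, ← UU_apply]
    have e3 := e4
    rw [e2, map_smul, map_smul, ← hy, e1] at e3
    rw [smul_left_injective ℂ hh e3, mul_comm]
  have hcontD : (Y ν).cells ⊆ (Y σ).cells := by
    apply contain ((Multiset.range r).map (fun i => xD (l + i)))
    intro z
    have e1 : D N m n (J n z n) y = Pp (Y σ) z • y := by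
      rw [hy, DD_apply, conj_J, map_smul, LinearMap.smul_apply]
    have e2 := JD_prod w xD hxD z l r (by omega)
    rw [hl, hwX.2.2, smul_smul] at e2
    have e4 : D N m n (J n z n) y = D N m n y0 (U N m n x0 (D N m n (J n z n) w)) := by
      rw [hy, DD_apply, ← (J_cen z y0).eq, ← DD_apply, DU_apply]
    have e3 := e4
    rw [e2, map_smul, map_smul, ← hy, e1] at e3
    rw [smul_left_injective ℂ hh e3, mul_comm]
  have hyform : y = permU N m n g (permD N m n h (ySymU N m n (stf ρ) (ySymD N m n (stf σ)
      (U N m n (o g⁻¹) (D N m n (o h⁻¹) w))))) := by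
    rw [hy, hx0, hy0, ← U_o, ← D_o, ← U_cS, ← D_cS]
    simp only [DU_apply, UU_apply, DD_apply, mul_assoc]
  have hrm : r ≤ m := by omega
  have hrn : r ≤ n := by omega
  have hform' : a = (r : ℂ) * (N : ℂ) + ((Mixed.content (Y ρ) - Mixed.content (Y μ) : ℤ) : ℂ)
            + ((Mixed.content (Y σ) - Mixed.content (Y ν) : ℤ) : ℂ) := by
    push_cast
    linear_combination -hform
  refine ⟨r, hrm, hrn, Y ρ, Y σ, Y μ, Y ν, Y_card ρ, Y_card σ, ?_, ?_, ?_, ?_, hcontU, hcontD,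
    W_rows hk hl μ ν hyW hh, ?_, hform', ?_, ?_⟩
  · apply rowsU ρ (D N m n (cS σ) (U N m n (o g⁻¹) (D N m n (o h⁻¹) w)))
    intro e
    apply hh
    rw [hyform, ← U_cS, ← D_cS, e, map_zero, map_zero]
  · apply rowsD σ (U N m n (o g⁻¹) (D N m n (o h⁻¹) w))
    intro e
    apply hh
    rw [hyform, ← U_cS, ← D_cS, e, map_zero, map_zero, map_zero]
  · have := Y_card μ
    show (Y μ).cells.card = _
    omega
  · have := Y_card ν
    show (Y ν).cells.card = _
    omega
  · intro e
    have : y ∈ Mixed.glIsoComp N m n r hrm hrn (Y μ) (Y ν) ⊓ Mixed.glglComp N m n (Y ρ) (Y σ) := by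
      refine ⟨W_iso hk hl μ ν hrm hrn hyW, Submodule.subset_span ?_⟩
      exact ⟨stf ρ, stf σ, (stf_std ρ).tab, (stf_std σ).tab, g, h, _, hyform⟩
    rw [e] at this
    exact hh (by simpa using this)
  · intro h0
    by_contra hr
    apply hh
    apply ip_self_zero
    exact W_perp hk hl μ ν hN hr hyW y (by rw [hAy, h0, zero_smul])
  · intro hr
    have c1 : (Y μ).cells = (Y ρ).cells := Finset.eq_of_subset_of_card_le hcontU (by
      rw [Y_card, Y_card]; omega)
    have c2 : (Y ν).cells = (Y σ).cells := Finset.eq_of_subset_of_card_le hcontD (by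
      rw [Y_card, Y_card]; omega)
    rw [hform', content, content, content, content, c1, c2, hr]
    simp

end WB

/-- every eigenvalue a of 𝒜_{m,n} on V^{m,n} has the form
a = rN + c(ρ/μ) + c(σ/ν), where 0 ≤ r ≤ min(m,n), ρ ⊢ m and σ ⊢ n have at most N
rows, μ ⊆ ρ, ν ⊆ σ with m − |μ| = n − |ν| = r and ℓ(μ)+ℓ(ν) ≤ N, and the rational
GL(N)-representation labelled (μ,ν) occurs in U^{(ρ,∅)} ⊗ U^{(∅,σ)} (i.e. the
corresponding isotypic components of V^{m,n} intersect nontrivially); moreover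
a = 0 if and only if r = 0. -/
theorem eigenvalues_A (N m n : ℕ) (hm : 1 ≤ m) (hn : 1 ≤ n) (hN : 1 ≤ N)
    (a : ℂ) (ha : Module.End.HasEigenvalue (Mixed.A N m n) a) :
    ∃ (r : ℕ) (hrm : r ≤ m) (hrn : r ≤ n) (ρ σ μ ν : YoungDiagram),
      ρ.card = m ∧ σ.card = n ∧
      Mixed.nrows ρ ≤ N ∧ Mixed.nrows σ ≤ N ∧
      μ.card = m - r ∧ ν.card = n - r ∧
      μ.cells ⊆ ρ.cells ∧ ν.cells ⊆ σ.cells ∧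
      Mixed.nrows μ + Mixed.nrows ν ≤ N ∧
      (Mixed.glIsoComp N m n r hrm hrn μ ν ⊓ Mixed.glglComp N m n ρ σ ≠ ⊥) ∧
      a = (r : ℂ) * (N : ℂ) + ((Mixed.content ρ - Mixed.content μ : ℤ) : ℂ)
            + ((Mixed.content σ - Mixed.content ν : ℤ) : ℂ) ∧
      (a = 0 ↔ r = 0) := by
  exact WB.final N m n hN a ha
end
end

section
/- The traceless projector 𝒫_{m,n} (the GL(N)-equivariant projector of V^{m,n} onto the traceless subspace V₀^{m,n} along V₁^{m,n}) lies in the center of the centralizer algebra C_{m,n}(N) = End_{GL(N)}(V^{m,n}); in particular it commutes with all permutations of the m contravariant and n covariant factors. -/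
open scoped BigOperators

noncomputable section

namespace Mixed

/-- The subspace V₁^{m,n}: the span of the images of the insertion maps (equal to
the span of the images of the operators τ_{ab'}, since the contractions are
surjective). -/
def traceSpan0 (N m n : ℕ) : Submodule ℂ (Tens N m n) :=
  ⨆ a : Fin m, ⨆ b : Fin n, LinearMap.range (tauC N m n a b)

end Mixed

namespace TPC

open Matrix

/-- Bicommutant theorem for finite groups. -/
theorem bicomm {G W : Type*} [Group G] [Finite G] [AddCommGroup W] [Module ℂ W]
    [Module.Finite ℂ W] (ρ : Representation ℂ G W) (T : Module.End ℂ W)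
    (hT : ∀ B : Module.End ℂ W, (∀ g, Commute B (ρ g)) → Commute T B) :
    T ∈ Submodule.span ℂ (Set.range ρ) := by
  haveI : NeZero (Nat.card G : ℂ) := ⟨by exact_mod_cast Nat.card_pos.ne'⟩
  haveI : IsSemisimpleModule (MonoidAlgebra ℂ G) ρ.asModule := inferInstance
  let f : Module.End (Module.End (MonoidAlgebra ℂ G) ρ.asModule) ρ.asModule :=
    { toFun := fun w => ρ.asModuleEquiv.symm (T (ρ.asModuleEquiv w))
      map_add' := by intro x y; simp
      map_smul' := by
        intro b w
        let B : Module.End ℂ W :=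
          { toFun := fun v => ρ.asModuleEquiv (b (ρ.asModuleEquiv.symm v))
            map_add' := by intro x y; simp
            map_smul' := by
              intro c x
              rw [Representation.asModuleEquiv_symm_map_smul, b.map_smul,
                Representation.asModuleEquiv_map_smul, AlgHom.commutes]
              rfl }
        have hB : ∀ g, Commute B (ρ g) := by
          intro g
          ext v
          simp only [Module.End.mul_apply]
          change ρ.asModuleEquiv (b (ρ.asModuleEquiv.symm (ρ g v))) =
            ρ g (ρ.asModuleEquiv (b (ρ.asModuleEquiv.symm v)))
          rw [Representation.asModuleEquiv_symm_map_rho, map_smul,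
            Representation.asModuleEquiv_map_smul]
          simp
        have := congrArg (fun F : Module.End ℂ W => F (ρ.asModuleEquiv w)) (hT B hB).eq
        apply ρ.asModuleEquiv.injective
        simpa [B] using this }
  classical
  let bs := Module.finBasis ℂ W
  obtain ⟨r, hr⟩ := jacobson_density f
    (Finset.univ.image fun k => ρ.asModuleEquiv.symm (bs k))
  have hTr : T = ρ.asAlgebraHom r := by
    refine bs.ext fun k => ?_
    have := hr (ρ.asModuleEquiv.symm (bs k)) (by simp)
    have h2 := congrArg ρ.asModuleEquiv this
    rw [Representation.asModuleEquiv_map_smul] at h2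
    simpa [f] using h2
  rw [hTr]
  clear hTr hr
  induction r using MonoidAlgebra.induction_on with
  | of g => exact Submodule.subset_span ⟨g, by simp⟩
  | add a b ha hb => rw [map_add]; exact add_mem ha hb
  | smul c a ha => rw [map_smul]; exact Submodule.smul_mem _ _ ha

/-- Tensor power of a matrix. -/
def tp {X : Type*} [Fintype X] {N : ℕ} (A : Matrix (Fin N) (Fin N) ℂ) :
    Matrix (X → Fin N) (X → Fin N) ℂ := fun r s => ∏ x, A (r x) (s x)

theorem tp_one {X : Type*} [Fintype X] {N : ℕ} :
    tp (X := X) (1 : Matrix (Fin N) (Fin N) ℂ) = 1 := by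
  ext r s
  simp only [tp, Matrix.one_apply, Finset.prod_ite_zero, Finset.prod_const_one]
  simp [funext_iff]

theorem tp_mul {X : Type*} [Fintype X] [DecidableEq X] {N : ℕ}
    (A B : Matrix (Fin N) (Fin N) ℂ) :
    tp (X := X) (A * B) = tp A * tp B := by
  ext r s
  simp only [tp, Matrix.mul_apply, ← Finset.prod_mul_distrib]
  rw [Fintype.prod_sum]

/-- Commuting with tensor powers of invertible matrices implies commuting with all. -/
theorem comm_tp {X : Type*} [Fintype X] [DecidableEq X] {N : ℕ}
    (M : Matrix (X → Fin N) (X → Fin N) ℂ)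
    (hM : ∀ g : GL (Fin N) ℂ, Commute M (tp (g : Matrix (Fin N) (Fin N) ℂ)))
    (A : Matrix (Fin N) (Fin N) ℂ) : Commute M (tp A) := by
  ext r s
  let A' : Matrix (Fin N) (Fin N) (Polynomial ℂ) :=
    fun i j => Polynomial.C (A i j) + Polynomial.X * Polynomial.C ((1 : Matrix (Fin N) (Fin N) ℂ) i j)
  let Q : (X → Fin N) → (X → Fin N) → Polynomial ℂ := fun r s => ∏ x, A' (r x) (s x)
  have hQ : ∀ z r s, (Q r s).eval z = tp (A + z • 1) r s := by
    intro z r s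
    simp only [Q, A', tp, Polynomial.eval_prod, Matrix.add_apply, Matrix.smul_apply,
      Polynomial.eval_add, Polynomial.eval_mul, Polynomial.eval_C, Polynomial.eval_X, smul_eq_mul]
  let p : Polynomial ℂ := ∑ u, Polynomial.C (M r u) * Q u s - ∑ u, Q r u * Polynomial.C (M u s)
  have hp : ∀ z, p.eval z = (M * tp (A + z • (1 : Matrix (Fin N) (Fin N) ℂ)) : Matrix (X → Fin N) (X → Fin N) ℂ) r s -
      (tp (A + z • (1 : Matrix (Fin N) (Fin N) ℂ)) * M : Matrix (X → Fin N) (X → Fin N) ℂ) r s := by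
    intro z
    simp [p, Polynomial.eval_finsetSum, hQ, Matrix.mul_apply]
  let d : Polynomial ℂ := (-A).charpoly
  have hd : d ≠ 0 := (Matrix.charpoly_monic _).ne_zero
  have hdp : d * p = 0 := by
    apply Polynomial.funext
    intro z
    rw [Polynomial.eval_mul, Polynomial.eval_zero]
    by_cases hz : d.eval z = 0
    · simp [hz]
    · have hdet : (A + z • (1 : Matrix (Fin N) (Fin N) ℂ)).det ≠ 0 := by
        rw [Matrix.eval_charpoly] at hz
        convert hz using 2
        rw [sub_neg_eq_add, add_comm, Matrix.smul_one_eq_diagonal]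
        rfl
      have := hM (Matrix.GeneralLinearGroup.mkOfDetNeZero _ hdet)
      have h3 : Commute M (tp (A + z • 1)) := this
      rw [hp, h3.eq]
      simp
  have hp0 : p = 0 := (mul_eq_zero.mp hdp).resolve_left hd
  have := hp 0
  rw [hp0] at this
  simp only [zero_smul, add_zero, Polynomial.eval_zero, Matrix.sub_apply] at this
  exact (sub_eq_zero.mp this.symm)

/-- Polarization identity. -/
theorem ryser {X : Type*} [Fintype X] [DecidableEq X] (a : X → X → ℂ) :
    ∑ S : Finset X, (-1 : ℂ) ^ (Sᶜ).card * ∏ y, ∑ x ∈ S, a x y =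
      ∑ σ : Equiv.Perm X, ∏ y, a (σ y) y := by
  have h1 : ∀ S : Finset X, ∏ y, ∑ x ∈ S, a x y =
      ∑ φ : X → X, if ∀ y, φ y ∈ S then ∏ y, a (φ y) y else 0 := by
    intro S
    rw [Finset.prod_univ_sum, ← Finset.sum_filter]
    apply Finset.sum_congr _ (fun _ _ => rfl)
    ext φ; simp
  simp_rw [h1, Finset.mul_sum]
  rw [Finset.sum_comm]
  have h2 : ∀ φ : X → X, (∑ S : Finset X, (-1 : ℂ) ^ (Sᶜ).card *
      (if ∀ y, φ y ∈ S then ∏ y, a (φ y) y else 0)) =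
      if Function.Bijective φ then ∏ y, a (φ y) y else 0 := by
    intro φ
    have : (∑ S : Finset X, (-1 : ℂ) ^ (Sᶜ).card *
      (if ∀ y, φ y ∈ S then ∏ y, a (φ y) y else 0)) =
      (∑ S ∈ ((Finset.univ.image φ)ᶜ).powerset, (-1 : ℂ) ^ S.card) * ∏ y, a (φ y) y := by
      rw [Finset.sum_mul, ← Equiv.sum_comp
        (Function.Involutive.toPerm (compl : Finset X → Finset X) compl_involutive),
        ← Finset.sum_subset (Finset.subset_univ ((Finset.univ.image φ)ᶜ).powerset)]
      · refine Finset.sum_congr rfl fun S hS => ?_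
        rw [if_pos]
        · simp
        · intro y
          rw [Finset.mem_powerset] at hS
          simp only [Function.Involutive.coe_toPerm, Finset.mem_compl]
          intro hy
          have := hS hy
          simp at this
      · intro S _ hS
        rw [if_neg, mul_zero]
        intro h
        apply hS
        rw [Finset.mem_powerset]
        intro y hy
        simp only [Finset.mem_compl, Finset.mem_image, Finset.mem_univ, true_and]
        rintro ⟨x, rfl⟩
        have := h x
        simp [hy] at this
    rw [this]
    have h3 := Finset.sum_powerset_neg_one_pow_card (x := (Finset.univ.image φ)ᶜ)
    have h4 : (∑ S ∈ ((Finset.univ.image φ)ᶜ).powerset, (-1 : ℂ) ^ S.card) =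
        if (Finset.univ.image φ)ᶜ = ∅ then 1 else 0 := by
      have := congrArg (Int.cast : ℤ → ℂ) h3
      push_cast at this
      exact this
    rw [h4]
    have h5 : (Finset.univ.image φ)ᶜ = ∅ ↔ Function.Bijective φ := by
      rw [Finset.compl_eq_empty_iff, ← Finite.surjective_iff_bijective]
      simp [Finset.eq_univ_iff_forall, Function.Surjective]
    simp [h5]
  simp_rw [h2]
  rw [← Finset.sum_filter]
  symm
  refine Finset.sum_bij (fun σ _ => (σ : X → X)) ?_ ?_ ?_ ?_
  · intro σ _; simp [σ.bijective]
  · intro σ _ τ _ h; exact DFunLike.coe_injective h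
  · intro φ hφ
    exact ⟨Equiv.ofBijective φ (by simpa using hφ), by simp, rfl⟩
  · intros; rfl

theorem comm_sym {X : Type*} [Fintype X] [DecidableEq X] {N : ℕ}
    (M : Matrix (X → Fin N) (X → Fin N) ℂ)
    (hM : ∀ A : Matrix (Fin N) (Fin N) ℂ, Commute M (tp A))
    (A : X → Matrix (Fin N) (Fin N) ℂ) :
    Commute M (Matrix.of fun r s => ∑ σ : Equiv.Perm X, ∏ y, A (σ y) (r y) (s y)) := by
  have : (Matrix.of fun r s => ∑ σ : Equiv.Perm X, ∏ y, A (σ y) (r y) (s y) :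
      Matrix (X → Fin N) (X → Fin N) ℂ) =
      ∑ S : Finset X, (-1 : ℂ) ^ (Sᶜ).card • tp (∑ x ∈ S, A x) := by
    ext r s
    rw [Matrix.of_apply, ← ryser (fun x y => A x (r y) (s y))]
    simp [tp, Matrix.sum_apply]
  rw [this]
  exact Commute.sum_right _ _ _ fun S _ => (hM _).smul_right _

/-- Permutation representation on tensor space. -/
def rho (X : Type*) (N : ℕ) : Representation ℂ (Equiv.Perm X) ((X → Fin N) → ℂ) where
  toFun σ := LinearMap.funLeft ℂ ℂ (fun r => r ∘ σ)
  map_one' := rfl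
  map_mul' _ _ := rfl

theorem comm_inv {X : Type*} [Fintype X] [DecidableEq X] {N : ℕ}
    (M : Matrix (X → Fin N) (X → Fin N) ℂ)
    (hM : ∀ A : Matrix (Fin N) (Fin N) ℂ, Commute M (tp A))
    (B : Matrix (X → Fin N) (X → Fin N) ℂ)
    (hB : ∀ (σ : Equiv.Perm X) r s, B (r ∘ σ) (s ∘ σ) = B r s) : Commute M B := by
  have key : (Fintype.card (Equiv.Perm X) : ℂ) • B = ∑ r0, ∑ s0, B r0 s0 •
      (Matrix.of fun r s => ∑ σ : Equiv.Perm X,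
        ∏ y, (Matrix.single (r0 (σ y)) (s0 (σ y)) (1:ℂ)) (r y) (s y) :
        Matrix (X → Fin N) (X → Fin N) ℂ) := by
    ext r s
    simp only [Matrix.sum_apply, Matrix.smul_apply, Matrix.of_apply, smul_eq_mul, Matrix.single_apply,
      Finset.prod_ite_zero, Finset.prod_const_one, Finset.mul_sum]
    rw [Finset.sum_congr rfl fun r0 _ => Finset.sum_comm, Finset.sum_comm]
    have : ∀ σ : Equiv.Perm X, (∑ r0 : X → Fin N, ∑ s0 : X → Fin N, B r0 s0 *
        (if ∀ i ∈ Finset.univ, r0 (σ i) = r i ∧ s0 (σ i) = s i then (1:ℂ) else 0)) = B r s := by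
      intro σ
      have h : ∀ r0 s0 : X → Fin N, (∀ i ∈ Finset.univ, r0 (σ i) = r i ∧ s0 (σ i) = s i) ↔
          (r0 = r ∘ ⇑σ⁻¹ ∧ s0 = s ∘ ⇑σ⁻¹) := by
        intro r0 s0
        constructor
        · intro h
          constructor <;> funext x
          · have := (h (σ⁻¹ x) (by simp)).1; simpa using this
          · have := (h (σ⁻¹ x) (by simp)).2; simpa using this
        · rintro ⟨rfl, rfl⟩; simp
      simp_rw [h, ite_and]
      simpa using hB σ⁻¹ r s
    simp_rw [this]
    simp
  have h2 : Commute M ((Fintype.card (Equiv.Perm X) : ℂ) • B) := by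
    rw [key]
    refine Commute.sum_right _ _ _ fun r0 _ => Commute.sum_right _ _ _ fun s0 _ => ?_
    exact (comm_sym M hM (fun x => Matrix.single (r0 x) (s0 x) (1:ℂ))).smul_right _
  have h3 := h2.smul_right ((Fintype.card (Equiv.Perm X) : ℂ)⁻¹)
  rwa [smul_smul, inv_mul_cancel₀ (by exact_mod_cast Fintype.card_ne_zero), one_smul] at h3

/-- Permutation matrix on tensor space. -/
def pm {X : Type*} [Fintype X] {N : ℕ} (σ : Equiv.Perm X) :
    Matrix (X → Fin N) (X → Fin N) ℂ := fun r s => if s = r ∘ σ then 1 else 0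

theorem rho_toMatrix {X : Type*} [Fintype X] [DecidableEq X] {N : ℕ} (σ : Equiv.Perm X) :
    Matrix.toLin' (pm (N := N) σ) = rho X N σ := by
  ext v r
  simp [pm, rho, Matrix.mulVec, dotProduct, LinearMap.funLeft, Pi.single_apply, eq_comm]

/-- Schur-Weyl duality. -/
theorem schurWeyl {X : Type*} [Fintype X] [DecidableEq X] {N : ℕ}
    (M : Matrix (X → Fin N) (X → Fin N) ℂ)
    (hM : ∀ g : GL (Fin N) ℂ, Commute M (tp (g : Matrix (Fin N) (Fin N) ℂ))) :
    M ∈ Submodule.span ℂ (Set.range (pm (X := X) (N := N))) := by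
  have hM' := comm_tp M hM
  have h := bicomm (rho X N) (Matrix.toLin' M) (by
    intro B hB
    obtain ⟨B, rfl⟩ := Matrix.toLin'.surjective B
    have : Commute M B := by
      apply comm_inv M hM'
      intro σ r s
      have h1 := hB σ
      rw [← rho_toMatrix] at h1
      have h2 : B * pm σ = pm σ * B := by
        apply Matrix.toLin'.injective
        rw [Matrix.toLin'_mul, Matrix.toLin'_mul]
        exact h1
      have h3 := congrFun (congrFun h2 r) (s ∘ σ)
      simp only [Matrix.mul_apply, pm, mul_ite, mul_one, mul_zero, ite_mul, one_mul,
        zero_mul, Finset.sum_ite_eq', Finset.mem_univ, if_true] at h3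
      rw [← h3]
      have h4 : ∀ x : X → Fin N, (s ∘ σ = x ∘ σ) ↔ s = x := fun x =>
        σ.surjective.injective_comp_right.eq_iff
      simp [h4]
    change _ * _ = _ * _
    rw [Module.End.mul_eq_comp, Module.End.mul_eq_comp,
      ← Matrix.toLin'_mul, ← Matrix.toLin'_mul, this.eq])
  have h5 : Set.range (rho X N) = Matrix.toLin' '' Set.range (pm (X := X) (N := N)) := by
    rw [← Set.range_comp]
    congr 1
    funext σ
    exact (rho_toMatrix σ).symm
  rw [h5] at h
  have h6 := Submodule.map_span (Matrix.toLin' (R := ℂ) (m := X → Fin N)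
    (n := X → Fin N)).toLinearMap (Set.range (pm (X := X) (N := N)))
  erw [← h6] at h
  obtain ⟨M', hM1, hM2⟩ := h
  rwa [← Matrix.toLin'.injective hM2]

end TPC

namespace TPC

open Matrix Mixed

/-- Tensor power acting differently on the two groups of factors. -/
def kk {N : ℕ} (m n : ℕ) (A B : Matrix (Fin N) (Fin N) ℂ) :
    Matrix (Fin m ⊕ Fin n → Fin N) (Fin m ⊕ Fin n → Fin N) ℂ :=
  (Matrix.kronecker (tp (X := Fin m) A) (tp (X := Fin n) B)).submatrix
    (Equiv.sumArrowEquivProdArrow (Fin m) (Fin n) (Fin N))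
    (Equiv.sumArrowEquivProdArrow (Fin m) (Fin n) (Fin N))

theorem kk_apply {N m n : ℕ} (A B : Matrix (Fin N) (Fin N) ℂ) (i i' j j') :
    kk m n A B (Sum.elim i j) (Sum.elim i' j') = tp A i i' * tp B j j' := rfl

theorem kk_mul {N m n : ℕ} (A B C D : Matrix (Fin N) (Fin N) ℂ) :
    kk m n A B * kk m n C D = kk m n (A * C) (B * D) := by
  unfold kk
  rw [Matrix.submatrix_mul_equiv]
  congr 1
  rw [tp_mul, tp_mul]
  exact (Matrix.mul_kronecker_mul _ _ _ _).symm

theorem kk_one {N m n : ℕ} : kk m n (1 : Matrix (Fin N) (Fin N) ℂ) 1 = 1 := by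
  unfold kk
  rw [tp_one, tp_one]
  have h : Matrix.kronecker (1 : Matrix (Fin m → Fin N) (Fin m → Fin N) ℂ)
      (1 : Matrix (Fin n → Fin N) (Fin n → Fin N) ℂ) = 1 := Matrix.one_kronecker_one
  rw [h]
  simp

theorem kk_self {N m n : ℕ} (A : Matrix (Fin N) (Fin N) ℂ) : kk m n A A = tp A := by
  ext r s
  simp only [tp, Fintype.prod_sum_type]
  rfl

theorem sum_elim {N m n : ℕ} (F : (Fin m ⊕ Fin n → Fin N) → ℂ) :
    ∑ r, F r = ∑ i : Fin m → Fin N, ∑ j : Fin n → Fin N, F (Sum.elim i j) := by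
  rw [← Equiv.sum_comp (Equiv.sumArrowEquivProdArrow (Fin m) (Fin n) (Fin N)).symm,
    Fintype.sum_prod_type]
  rfl

/-- Operator on mixed tensors from a twisted matrix. -/
def opOf (N m n : ℕ) : Matrix (Fin m ⊕ Fin n → Fin N) (Fin m ⊕ Fin n → Fin N) ℂ →ₗ[ℂ]
    Module.End ℂ (Tens N m n) where
  toFun M :=
    { toFun := fun t i j => ∑ i' : Fin m → Fin N, ∑ j' : Fin n → Fin N,
        M (Sum.elim i j') (Sum.elim i' j) * t i' j'
      map_add' := by
        intro t s; funext i j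
        simp only [Pi.add_apply, mul_add, Finset.sum_add_distrib]
      map_smul' := by
        intro c t; funext i j
        simp only [Pi.smul_apply, smul_eq_mul, RingHom.id_apply, Finset.mul_sum]
        refine Finset.sum_congr rfl fun i' _ => Finset.sum_congr rfl fun j' _ => by ring }
  map_add' M M' := by
    refine LinearMap.ext fun t => ?_; funext i j
    simp [add_mul, Finset.sum_add_distrib]
  map_smul' c M := by
    refine LinearMap.ext fun t => ?_; funext i j
    simp [Finset.mul_sum, mul_assoc]

theorem opOf_apply {N m n : ℕ} (M) (t : Tens N m n) (i j) :
    opOf N m n M t i j = ∑ i' : Fin m → Fin N, ∑ j' : Fin n → Fin N,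
        M (Sum.elim i j') (Sum.elim i' j) * t i' j' := rfl

/-- Elementary tensor. -/
def el {N m n : ℕ} (i : Fin m → Fin N) (j : Fin n → Fin N) : Tens N m n :=
  fun i' j' => if i' = i then (if j' = j then 1 else 0) else 0

theorem opOf_el {N m n : ℕ} (M) (i i' j j') :
    opOf N m n M (el i' j') i j = M (Sum.elim i j') (Sum.elim i' j) := by
  simp [opOf_apply, el]

theorem opOf_inj {N m n : ℕ} : Function.Injective (opOf N m n) := by
  intro M M' h
  ext r s
  have := opOf_el M (r ∘ Sum.inl) (s ∘ Sum.inl) (s ∘ Sum.inr) (r ∘ Sum.inr)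
  rw [h, opOf_el] at this
  simpa using this.symm

theorem opOf_surj {N m n : ℕ} (f : Module.End ℂ (Tens N m n)) : ∃ M, opOf N m n M = f := by
  refine ⟨Matrix.of fun r s => f (el (s ∘ Sum.inl) (r ∘ Sum.inr)) (r ∘ Sum.inl) (s ∘ Sum.inr), ?_⟩
  refine LinearMap.ext fun t => ?_
  have ht : t = ∑ i', ∑ j', t i' j' • el i' j' := by
    funext i j
    simp [el, Finset.sum_apply]
  conv_rhs => rw [ht]
  funext i j
  simp [opOf_apply, Finset.sum_apply, mul_comm]

theorem end_ext {N m n : ℕ} (f h : Module.End ℂ (Tens N m n))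
    (H : ∀ i j i' j', f (el i' j') i j = h (el i' j') i j) : f = h := by
  obtain ⟨M, rfl⟩ := opOf_surj f
  obtain ⟨M', rfl⟩ := opOf_surj h
  congr 1
  ext r s
  have := H (r ∘ Sum.inl) (s ∘ Sum.inr) (s ∘ Sum.inl) (r ∘ Sum.inr)
  rw [opOf_el, opOf_el] at this
  simpa using this

theorem gl_apply {N m n : ℕ} (g : GL (Fin N) ℂ) (t : Tens N m n) (i j) :
    glAct N m n g t i j = ∑ i', ∑ j', (tp (g : Matrix (Fin N) (Fin N) ℂ) i i' *
      tp ((g⁻¹ : GL (Fin N) ℂ) : Matrix (Fin N) (Fin N) ℂ) j' j) * t i' j' := rfl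

theorem gl_el {N m n : ℕ} (g : GL (Fin N) ℂ) (i i' : Fin m → Fin N) (j j' : Fin n → Fin N) :
    glAct N m n g (el i' j') i j = tp (g : Matrix (Fin N) (Fin N) ℂ) i i' *
      tp ((g⁻¹ : GL (Fin N) ℂ) : Matrix (Fin N) (Fin N) ℂ) j' j := by
  simp [gl_apply, el]

theorem opOf_mul_gl {N m n : ℕ} (M) (g : GL (Fin N) ℂ) :
    opOf N m n M * glAct N m n g =
      opOf N m n (kk m n 1 ((g⁻¹ : GL (Fin N) ℂ) : Matrix (Fin N) (Fin N) ℂ) * M *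
        kk m n (g : Matrix (Fin N) (Fin N) ℂ) 1) := by
  refine end_ext _ _ fun i j i' j' => ?_
  rw [Module.End.mul_apply, opOf_el, opOf_apply]
  simp only [gl_el, Matrix.mul_apply, sum_elim, kk_apply, tp_one, Matrix.one_apply]
  simp only [ite_mul, one_mul, zero_mul, mul_ite, mul_one, mul_zero, Finset.sum_ite_eq,
    Finset.sum_ite_eq', Finset.mem_univ, if_true, Finset.sum_const_zero, Finset.sum_ite_irrel]
  refine Finset.sum_congr rfl fun i1 _ => ?_
  rw [Finset.sum_mul]
  refine Finset.sum_congr rfl fun j1 _ => ?_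
  ring

theorem gl_mul_opOf {N m n : ℕ} (M) (g : GL (Fin N) ℂ) :
    glAct N m n g * opOf N m n M =
      opOf N m n (kk m n (g : Matrix (Fin N) (Fin N) ℂ) 1 * M *
        kk m n 1 ((g⁻¹ : GL (Fin N) ℂ) : Matrix (Fin N) (Fin N) ℂ)) := by
  refine end_ext _ _ fun i j i' j' => ?_
  rw [Module.End.mul_apply, opOf_el, gl_apply]
  simp only [opOf_el, Matrix.mul_apply, sum_elim, kk_apply, tp_one, Matrix.one_apply]
  simp only [ite_mul, one_mul, zero_mul, mul_ite, mul_one, mul_zero, Finset.sum_ite_eq,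
    Finset.sum_ite_eq', Finset.mem_univ, if_true, Finset.sum_const_zero, Finset.sum_ite_irrel]
  rw [Finset.sum_comm]
  refine Finset.sum_congr rfl fun i1 _ => ?_
  rw [Finset.sum_mul]
  refine Finset.sum_congr rfl fun j1 _ => ?_
  ring

theorem comm_iff {N m n : ℕ} (M) (g : GL (Fin N) ℂ) :
    Commute (opOf N m n M) (glAct N m n g) ↔
      Commute M (tp (g : Matrix (Fin N) (Fin N) ℂ)) := by
  have e1 : kk m n (1 : Matrix (Fin N) (Fin N) ℂ) g *
      kk m n 1 ((g⁻¹ : GL (Fin N) ℂ) : Matrix (Fin N) (Fin N) ℂ) = 1 := by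
    rw [kk_mul, Units.mul_inv, one_mul, kk_one]
  have e2 : kk m n 1 ((g⁻¹ : GL (Fin N) ℂ) : Matrix (Fin N) (Fin N) ℂ) *
      kk m n (1 : Matrix (Fin N) (Fin N) ℂ) g = 1 := by
    rw [kk_mul, Units.inv_mul, one_mul, kk_one]
  have e3 : kk m n (g : Matrix (Fin N) (Fin N) ℂ) 1 *
      kk m n (1 : Matrix (Fin N) (Fin N) ℂ) g = tp (g : Matrix (Fin N) (Fin N) ℂ) := by
    rw [kk_mul, one_mul, mul_one, kk_self]
  have e4 : kk m n (1 : Matrix (Fin N) (Fin N) ℂ) g *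
      kk m n (g : Matrix (Fin N) (Fin N) ℂ) 1 = tp (g : Matrix (Fin N) (Fin N) ℂ) := by
    rw [kk_mul, one_mul, mul_one, kk_self]
  unfold Commute SemiconjBy
  rw [opOf_mul_gl, gl_mul_opOf, opOf_inj.eq_iff]
  generalize kk m n 1 ((g⁻¹ : GL (Fin N) ℂ) : Matrix (Fin N) (Fin N) ℂ) = a at *
  generalize kk m n (g : Matrix (Fin N) (Fin N) ℂ) 1 = b at *
  generalize kk m n (1 : Matrix (Fin N) (Fin N) ℂ) g = c at *
  constructor
  · intro h
    calc M * tp (g : Matrix (Fin N) (Fin N) ℂ) = (c * a) * M * (b * c) := by rw [e1, e3, one_mul]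
      _ = c * (a * M * b) * c := by noncomm_ring
      _ = (c * b) * M * (a * c) := by rw [h]; noncomm_ring
      _ = _ := by rw [e2, e4, mul_one]
  · intro h
    calc a * M * b = a * M * b * (c * a) := by rw [e1, mul_one]
      _ = a * (M * (b * c)) * a := by noncomm_ring
      _ = (a * c) * b * M * a := by rw [e3, h, ← e4]; noncomm_ring
      _ = _ := by rw [e2, one_mul]

theorem pm_comm {X : Type*} [Fintype X] [DecidableEq X] {N : ℕ} (σ : Equiv.Perm X)
    (A : Matrix (Fin N) (Fin N) ℂ) : Commute (pm σ) (tp A) := by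
  ext r s
  have h4 : ∀ u : X → Fin N, (s = u ∘ σ) ↔ s ∘ ⇑σ.symm = u := by
    intro u
    constructor
    · rintro rfl; funext x; simp
    · rintro rfl; funext x; simp
  simp only [Matrix.mul_apply, pm, h4, mul_ite, mul_one, mul_zero, ite_mul, one_mul,
        zero_mul, Finset.sum_ite_eq, Finset.sum_ite_eq', Finset.mem_univ, if_true]
  simp only [tp]
  rw [← Equiv.prod_comp σ (fun x => A (r x) ((s ∘ ⇑σ.symm) x))]
  simp

/-- The operator of a walled diagram. -/
def D (N m n : ℕ) (σ : Equiv.Perm (Fin m ⊕ Fin n)) : Module.End ℂ (Tens N m n) :=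
  opOf N m n (pm σ)

theorem D_comm {N m n : ℕ} (σ : Equiv.Perm (Fin m ⊕ Fin n)) (g : GL (Fin N) ℂ) :
    Commute (D N m n σ) (glAct N m n g) := (comm_iff _ _).2 (pm_comm _ _)

theorem mem_Cent {N m n : ℕ} (f : Module.End ℂ (Tens N m n)) :
    f ∈ Cent N m n ↔ ∀ g, Commute f (glAct N m n g) := by
  unfold Cent
  rw [Subalgebra.mem_centralizer_iff]
  simp only [Set.forall_mem_range]
  exact forall_congr' fun g => eq_comm

theorem Cent_span {N m n : ℕ} (f : Module.End ℂ (Tens N m n)) (hf : f ∈ Cent N m n) :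
    f ∈ Submodule.span ℂ (Set.range (D N m n)) := by
  rw [mem_Cent] at hf
  obtain ⟨M, rfl⟩ := opOf_surj f
  have := schurWeyl M fun g => (comm_iff _ _).1 (hf g)
  have h2 := Submodule.mem_map_of_mem (f := opOf N m n) this
  rw [Submodule.map_span, ← Set.range_comp] at h2
  exact h2

theorem D_apply {N m n : ℕ} (σ) (t : Tens N m n) (i j) :
    D N m n σ t i j = ∑ i' : Fin m → Fin N, ∑ j' : Fin n → Fin N,
        (if Sum.elim i' j = Sum.elim i j' ∘ σ then 1 else 0) * t i' j' := rfl

theorem D_perm {N m n : ℕ} (p : Equiv.Perm (Fin m)) (q : Equiv.Perm (Fin n)) :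
    D N m n (Equiv.Perm.sumCongr p q) = permU N m n p * permD N m n q⁻¹ := by
  refine LinearMap.ext fun t => ?_
  funext i j
  rw [D_apply]
  have h : ∀ (i' : Fin m → Fin N) (j' : Fin n → Fin N),
      Sum.elim i' j = Sum.elim i j' ∘ (Equiv.Perm.sumCongr p q) ↔
      i' = i ∘ p ∧ j' = j ∘ ⇑q⁻¹ := by
    intro i' j'
    constructor
    · intro h
      constructor
      · funext x; simpa using congrFun h (Sum.inl x)
      · funext x; simpa using (congrFun h (Sum.inr (q⁻¹ x))).symm
    · rintro ⟨rfl, rfl⟩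
      funext x; rcases x with x | x <;> simp
  simp_rw [h, ite_and]
  simp [permU, permD]

theorem swap_iff {N m n : ℕ} (a : Fin m) (b : Fin n) (i i' : Fin m → Fin N)
    (j j' : Fin n → Fin N) :
    Sum.elim i' j = Sum.elim i j' ∘ (Equiv.swap (Sum.inl a) (Sum.inr b)) ↔
      i a = j b ∧ i' a = j' b ∧ i' = Function.update i a (i' a) ∧
        j' = Function.update j b (i' a) := by
  constructor
  · intro h
    have h1 := congrFun h (Sum.inl a)
    have h2 := congrFun h (Sum.inr b)
    simp at h1 h2
    refine ⟨h2.symm, h1, ?_, ?_⟩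
    · funext x
      by_cases hx : x = a
      · subst hx; simp
      · have := congrFun h (Sum.inl x)
        rw [Function.comp_apply, Equiv.swap_apply_of_ne_of_ne (by simpa using hx) (by simp)] at this
        simpa [hx] using this
    · funext x
      by_cases hx : x = b
      · subst hx; simp [h1]
      · have := congrFun h (Sum.inr x)
        rw [Function.comp_apply, Equiv.swap_apply_of_ne_of_ne (by simp) (by simpa using hx)] at this
        simpa [hx] using this.symm
  · rintro ⟨h1, h2, h3, h4⟩
    funext x
    rcases x with x | x
    · by_cases hx : x = a
      · subst hx; simp [h2]
      · rw [Function.comp_apply, Equiv.swap_apply_of_ne_of_ne (by simpa using hx) (by simp)]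
        simp only [Sum.elim_inl]
        rw [h3]; simp [hx]
    · by_cases hx : x = b
      · subst hx; simp [h1]
      · rw [Function.comp_apply, Equiv.swap_apply_of_ne_of_ne (by simp) (by simpa using hx)]
        simp only [Sum.elim_inr]
        rw [h4]; simp [hx]

theorem tau_eq {N m n : ℕ} (a : Fin m) (b : Fin n) :
    tauC N m n a b = D N m n (Equiv.swap (Sum.inl a) (Sum.inr b)) := by
  refine LinearMap.ext fun t => ?_
  funext i j
  rw [D_apply]
  simp_rw [swap_iff]
  change (if i a = j b then
      ∑ k : Fin N, t (Function.update i a k) (Function.update j b k) else 0) = _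
  by_cases h : i a = j b
  · have h5 : ∀ i' j', (i a = j b ∧ i' a = j' b ∧ i' = Function.update i a (i' a) ∧
        j' = Function.update j b (i' a)) ↔
        ∃ k, i' = Function.update i a k ∧ j' = Function.update j b k := by
      intro i' j'
      constructor
      · rintro ⟨_, _, h3, h4⟩; exact ⟨_, h3, h4⟩
      · rintro ⟨k, rfl, rfl⟩; simp [h]
    have h6 : ∀ i' j', (if (i a = j b ∧ i' a = j' b ∧ i' = Function.update i a (i' a) ∧
        j' = Function.update j b (i' a)) then (1:ℂ) else 0) =
        ∑ k, if i' = Function.update i a k then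
          (if j' = Function.update j b k then 1 else 0) else 0 := by
      intro i' j'
      rw [if_congr (h5 i' j') rfl rfl]
      split_ifs with h7
      · obtain ⟨k, rfl, rfl⟩ := h7
        rw [Finset.sum_eq_single k]
        · simp
        · intro k' _ hk
          rw [if_neg]
          intro h8
          have := congrFun h8 a
          simp at this
          exact hk this.symm
        · simp
      · symm
        apply Finset.sum_eq_zero
        intro k _
        rw [← ite_and, if_neg]
        exact fun h8 => h7 ⟨k, h8⟩
    simp_rw [h6, Finset.sum_mul]
    rw [if_pos h, Finset.sum_congr rfl fun i' _ => Finset.sum_comm, Finset.sum_comm]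
    refine Finset.sum_congr rfl fun k _ => ?_
    simp
  · simp [h]

end TPC

namespace TPC

open Matrix Mixed

theorem mem_traceless {N m n : ℕ} (hN : 1 ≤ N) (t : Tens N m n) :
    t ∈ traceless0 N m n ↔ ∀ a b, tauC N m n a b t = 0 := by
  unfold traceless0
  simp only [Submodule.mem_iInf, LinearMap.mem_ker]
  refine forall_congr' fun a => forall_congr' fun b => ?_
  constructor
  · intro h
    funext i j
    have := congrFun (congrFun h i) j
    change (∑ k : Fin N, t (Function.update i a k) (Function.update j b k)) = 0 at this
    change (if i a = j b then
      ∑ k : Fin N, t (Function.update i a k) (Function.update j b k) else 0) = 0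
    rw [this, ite_self]
  · intro h
    funext i j
    let k0 : Fin N := ⟨0, hN⟩
    have := congrFun (congrFun h (Function.update i a k0)) (Function.update j b k0)
    change (if (Function.update i a k0) a = (Function.update j b k0) b then
      ∑ k : Fin N, t (Function.update (Function.update i a k0) a k)
        (Function.update (Function.update j b k0) b k) else 0) = 0 at this
    simp at this
    exact this

theorem range_tau_le {N m n : ℕ} (a b) (t : Tens N m n) :
    tauC N m n a b t ∈ traceSpan0 N m n := by
  unfold traceSpan0
  exact Submodule.mem_iSup_of_mem a (Submodule.mem_iSup_of_mem b ⟨t, rfl⟩)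

/-- If `w` is supported on `i a = j b` and is constant along the diagonal, then it is an
eigenvector of `τ`. -/
theorem tau_diag {N m n : ℕ} (a : Fin m) (b : Fin n) (w : Tens N m n)
    (h0 : ∀ i j, i a ≠ j b → w i j = 0)
    (h1 : ∀ i j k, i a = j b → w (Function.update i a k) (Function.update j b k) = w i j) :
    tauC N m n a b w = (N : ℂ) • w := by
  funext i j
  change (if i a = j b then
      ∑ k : Fin N, w (Function.update i a k) (Function.update j b k) else 0) = (N : ℂ) * w i j
  split_ifs with h
  · simp [h1 i j _ h]
  · rw [h0 i j h, mul_zero]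

theorem tau_symm {N m n : ℕ} (a : Fin m) (b : Fin n) (w t : Tens N m n) :
    ∑ i, ∑ j, tauC N m n a b w i j * t i j = ∑ i, ∑ j, w i j * tauC N m n a b t i j := by
  have hs : ∀ (i i' : Fin m → Fin N) (j j' : Fin n → Fin N),
      (Sum.elim i' j = Sum.elim i j' ∘ (Equiv.swap (Sum.inl a) (Sum.inr b))) ↔
      (Sum.elim i j' = Sum.elim i' j ∘ (Equiv.swap (Sum.inl a) (Sum.inr b))) := by
    intro i i' j j'
    constructor
    · intro h; rw [h]; funext x; simp
    · intro h; rw [h]; funext x; simp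
  simp only [tau_eq, D_apply, Finset.sum_mul, Finset.mul_sum]
  calc _ = ∑ i : Fin m → Fin N, ∑ i' : Fin m → Fin N, ∑ j : Fin n → Fin N,
        ∑ j' : Fin n → Fin N, (if Sum.elim i' j =
          Sum.elim i j' ∘ (Equiv.swap (Sum.inl a) (Sum.inr b)) then 1 else 0) * w i' j' * t i j :=
        Finset.sum_congr rfl fun i _ => Finset.sum_comm
    _ = ∑ i' : Fin m → Fin N, ∑ i : Fin m → Fin N, ∑ j' : Fin n → Fin N,
        ∑ j : Fin n → Fin N, (if Sum.elim i' j =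
          Sum.elim i j' ∘ (Equiv.swap (Sum.inl a) (Sum.inr b)) then 1 else 0) * w i' j' * t i j := by
        rw [Finset.sum_comm]
        exact Finset.sum_congr rfl fun i _ => Finset.sum_congr rfl fun i' _ => Finset.sum_comm
    _ = ∑ i' : Fin m → Fin N, ∑ j' : Fin n → Fin N, ∑ i : Fin m → Fin N,
        ∑ j : Fin n → Fin N, (if Sum.elim i' j =
          Sum.elim i j' ∘ (Equiv.swap (Sum.inl a) (Sum.inr b)) then 1 else 0) * w i' j' * t i j :=
        Finset.sum_congr rfl fun i _ => Finset.sum_comm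
    _ = _ := by
        refine Finset.sum_congr rfl fun i _ => Finset.sum_congr rfl fun j _ =>
          Finset.sum_congr rfl fun i' _ => Finset.sum_congr rfl fun j' _ => ?_
        rw [if_congr (hs i' i j' j) rfl rfl]
        ring

/-- Input-linked diagrams kill traceless tensors. -/
theorem D_kill {N m n : ℕ} (hN : 1 ≤ N) (σ : Equiv.Perm (Fin m ⊕ Fin n)) (a : Fin m) (b : Fin n)
    (hσ : σ (Sum.inl a) = Sum.inr b) (t : Tens N m n) (ht : t ∈ traceless0 N m n) :
    D N m n σ t = 0 := by
  have hN0 : (N : ℂ) ≠ 0 := by exact_mod_cast (by omega : N ≠ 0)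
  funext i j
  rw [D_apply]
  let w : Tens N m n := fun i' j' => if Sum.elim i' j = Sum.elim i j' ∘ σ then 1 else 0
  have hw : tauC N m n a b w = (N : ℂ) • w := by
    apply tau_diag
    · intro i' j' h
      refine if_neg fun h2 => h ?_
      simpa [hσ] using congrFun h2 (Sum.inl a)
    · intro i' j' k h
      refine if_congr ?_ rfl rfl
      rw [funext_iff, funext_iff]
      refine forall_congr' fun x => ?_
      by_cases hx : x = Sum.inl a
      · subst hx; rw [Function.comp_apply, Function.comp_apply, hσ]; simp only [Sum.elim_inl, Sum.elim_inr, Function.update_self, true_iff]; exact h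
      · have hy : σ x ≠ Sum.inr b := fun h => hx (σ.injective (h.trans hσ.symm))
        have e1 : Sum.elim (Function.update i' a k) j x = Sum.elim i' j x := by
          rcases x with x | x
          · have : x ≠ a := fun h => hx (by rw [h])
            simp [this]
          · rfl
        have e2 : (Sum.elim i (Function.update j' b k) ∘ σ) x = (Sum.elim i j' ∘ σ) x := by
          simp only [Function.comp_apply]
          rcases h3 : σ x with y | y
          · rfl
          · have : y ≠ b := fun h => hy (by rw [h3, h])
            simp [this]
        rw [e1, e2]
  have h := tau_symm a b w t
  rw [hw, (mem_traceless hN t).1 ht a b] at h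
  simp only [Pi.smul_apply, Pi.zero_apply, mul_zero, Finset.sum_const_zero, smul_eq_mul,
    mul_assoc, ← Finset.mul_sum] at h
  exact (mul_eq_zero.mp h).resolve_left hN0

/-- Output-linked diagrams have image in the trace span. -/
theorem D_range {N m n : ℕ} (hN : 1 ≤ N) (σ : Equiv.Perm (Fin m ⊕ Fin n)) (a : Fin m) (b : Fin n)
    (hσ : σ (Sum.inr b) = Sum.inl a) (t : Tens N m n) :
    D N m n σ t ∈ traceSpan0 N m n := by
  have hN0 : (N : ℂ) ≠ 0 := by exact_mod_cast (by omega : N ≠ 0)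
  have hw : tauC N m n a b (D N m n σ t) = (N : ℂ) • (D N m n σ t) := by
    apply tau_diag
    · intro i j h
      rw [D_apply]
      refine Finset.sum_eq_zero fun i' _ => Finset.sum_eq_zero fun j' _ => ?_
      rw [if_neg, zero_mul]
      intro h2
      apply h
      simpa [hσ] using (congrFun h2 (Sum.inr b)).symm
    · intro i j k h
      rw [D_apply, D_apply]
      refine Finset.sum_congr rfl fun i' _ => Finset.sum_congr rfl fun j' _ => ?_
      congr 1
      refine if_congr ?_ rfl rfl
      rw [funext_iff, funext_iff]
      refine forall_congr' fun x => ?_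
      by_cases hx : x = Sum.inr b
      · subst hx; rw [Function.comp_apply, Function.comp_apply, hσ]; simp only [Sum.elim_inl, Sum.elim_inr, Function.update_self, true_iff]; exact h.symm
      · have hy : σ x ≠ Sum.inl a := fun h => hx (σ.injective (h.trans hσ.symm))
        have e1 : Sum.elim i' (Function.update j b k) x = Sum.elim i' j x := by
          rcases x with x | x
          · rfl
          · have : x ≠ b := fun h => hx (by rw [h])
            simp [this]
        have e2 : (Sum.elim (Function.update i a k) j' ∘ σ) x = (Sum.elim i j' ∘ σ) x := by
          simp only [Function.comp_apply]
          rcases h3 : σ x with y | y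
          · have : y ≠ a := fun h => hy (by rw [h3, h])
            simp [this]
          · rfl
        rw [e1, e2]
  have h2 : D N m n σ t = tauC N m n a b ((N : ℂ)⁻¹ • D N m n σ t) := by
    rw [map_smul, hw, smul_smul, inv_mul_cancel₀ hN0, one_smul]
  rw [h2]
  exact range_tau_le _ _ _

theorem tau_perm {N m n : ℕ} (p : Equiv.Perm (Fin m)) (q : Equiv.Perm (Fin n)) (a b)
    (t : Tens N m n) :
    tauC N m n (p a) (q b) ((permU N m n p * permD N m n q) t) =
      (permU N m n p * permD N m n q) (tauC N m n a b t) := by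
  have hu : ∀ {l : ℕ} (p : Equiv.Perm (Fin l)) (i : Fin l → Fin N) (a : Fin l) k,
      Function.update i (p a) k ∘ p = Function.update (i ∘ p) a k := by
    intro l p i a k
    funext x
    by_cases hx : x = a
    · subst hx; simp
    · simp [hx]
  funext i j
  change (if i (p a) = j (q b) then ∑ k : Fin N, t (Function.update i (p a) k ∘ p)
      (Function.update j (q b) k ∘ q) else 0) =
    (if (i ∘ p) a = (j ∘ q) b then ∑ k : Fin N, t (Function.update (i ∘ p) a k)
      (Function.update (j ∘ q) b k) else 0)
  simp only [hu, Function.comp_apply]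

theorem traceSpan_invt {N m n : ℕ} (S : Module.End ℂ (Tens N m n))
    (h : ∀ a b t, S (tauC N m n a b t) ∈ traceSpan0 N m n) (t)
    (ht : t ∈ traceSpan0 N m n) : S t ∈ traceSpan0 N m n := by
  have : traceSpan0 N m n ≤ (traceSpan0 N m n).comap S := by
    conv_lhs => unfold traceSpan0
    refine iSup_le fun a => iSup_le fun b => ?_
    rintro _ ⟨t, rfl⟩
    exact h a b t
  exact this ht

theorem comm_of_invt {N m n : ℕ} (P S : Module.End ℂ (Tens N m n))
    (hidem : IsIdempotentElem P)
    (hrange : LinearMap.range P = traceless0 N m n)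
    (hker : LinearMap.ker P = traceSpan0 N m n)
    (h0 : ∀ t ∈ traceless0 N m n, S t ∈ traceless0 N m n)
    (h1 : ∀ a b t, S (tauC N m n a b t) ∈ traceSpan0 N m n) : Commute P S := by
  rw [LinearMap.IsIdempotentElem.commute_iff hidem, hrange, hker]
  exact ⟨h0, fun t ht => traceSpan_invt S h1 t ht⟩

theorem comm_perm {N m n : ℕ} (hN : 1 ≤ N) (P : Module.End ℂ (Tens N m n))
    (hidem : IsIdempotentElem P)
    (hrange : LinearMap.range P = traceless0 N m n)
    (hker : LinearMap.ker P = traceSpan0 N m n)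
    (p : Equiv.Perm (Fin m)) (q : Equiv.Perm (Fin n)) :
    Commute P (permU N m n p * permD N m n q) := by
  apply comm_of_invt P _ hidem hrange hker
  · intro t ht
    rw [mem_traceless hN] at ht ⊢
    intro a b
    have := tau_perm p q (p⁻¹ a) (q⁻¹ b) t
    rw [ht, map_zero] at this
    simpa using this
  · intro a b t
    rw [← tau_perm]
    exact range_tau_le _ _ _

theorem comm_D {N m n : ℕ} (hN : 1 ≤ N) (P : Module.End ℂ (Tens N m n))
    (hidem : IsIdempotentElem P)
    (hrange : LinearMap.range P = traceless0 N m n)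
    (hker : LinearMap.ker P = traceSpan0 N m n)
    (σ : Equiv.Perm (Fin m ⊕ Fin n)) : Commute P (D N m n σ) := by
  by_cases hσ : σ ∈ (Equiv.Perm.sumCongrHom (Fin m) (Fin n)).range
  · obtain ⟨⟨p, q⟩, rfl⟩ := hσ
    have : D N m n (Equiv.Perm.sumCongrHom (Fin m) (Fin n) (p, q)) =
      permU N m n p * permD N m n q⁻¹ := D_perm p q
    rw [this]
    exact comm_perm hN P hidem hrange hker p q⁻¹
  · have hA : ∃ a b, σ (Sum.inl a) = Sum.inr b := by
      by_contra! h
      apply hσ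
      apply Equiv.Perm.mem_sumCongrHom_range_of_perm_mapsTo_inl
      rintro _ ⟨a, rfl⟩
      rcases h3 : σ (Sum.inl a) with y | y
      · exact ⟨y, rfl⟩
      · exact absurd h3 (h a y)
    have hB : ∃ b a, σ (Sum.inr b) = Sum.inl a := by
      by_contra! h
      apply hσ
      rw [← inv_mem_iff]
      apply Equiv.Perm.mem_sumCongrHom_range_of_perm_mapsTo_inl
      rintro _ ⟨a, rfl⟩
      rcases h3 : σ⁻¹ (Sum.inl a) with y | y
      · exact ⟨y, rfl⟩
      · refine absurd ?_ (h y a)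
        rw [← h3]; simp
    obtain ⟨a, b, hab⟩ := hA
    obtain ⟨b', a', hab'⟩ := hB
    apply comm_of_invt P _ hidem hrange hker
    · intro t ht
      rw [D_kill hN σ a b hab t ht]
      exact zero_mem _
    · intro _ _ t
      exact D_range hN σ a' b' hab' _

theorem comm_gl {N m n : ℕ} (hN : 1 ≤ N) (P : Module.End ℂ (Tens N m n))
    (hidem : IsIdempotentElem P)
    (hrange : LinearMap.range P = traceless0 N m n)
    (hker : LinearMap.ker P = traceSpan0 N m n) (g : GL (Fin N) ℂ) :
    Commute P (glAct N m n g) := by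
  have hc : ∀ a b t, tauC N m n a b (glAct N m n g t) = glAct N m n g (tauC N m n a b t) := by
    intro a b t
    rw [tau_eq]
    exact congrArg (fun F : Module.End ℂ (Tens N m n) => F t) (D_comm _ g).eq
  apply comm_of_invt P _ hidem hrange hker
  · intro t ht
    rw [mem_traceless hN] at ht ⊢
    intro a b
    rw [hc, ht, map_zero]
  · intro a b t
    rw [← hc]
    exact range_tau_le _ _ _

end TPC

/-- the traceless projector 𝒫_{m,n} — the idempotent with image the
traceless subspace V₀^{m,n} and kernel V₁^{m,n} — lies in the centre of the
centraliser algebra C_{m,n}(N) = End_{GL(N)}(V^{m,n}); in particular it commutes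
with all permutations of the contravariant and covariant factors. -/
theorem traceless_projector_central (N m n : ℕ) (hm : 1 ≤ m) (hn : 1 ≤ n)
    (hN : 1 ≤ N) (P : Module.End ℂ (Tens N m n))
    (hidem : IsIdempotentElem P)
    (hrange : LinearMap.range P = Mixed.traceless0 N m n)
    (hker : LinearMap.ker P = Mixed.traceSpan0 N m n) :
    P ∈ Mixed.Cent N m n ∧
    (∀ f ∈ Mixed.Cent N m n, P * f = f * P) ∧
    (∀ (p : Equiv.Perm (Fin m)) (q : Equiv.Perm (Fin n)),
      P * (Mixed.permU N m n p * Mixed.permD N m n q) =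
        (Mixed.permU N m n p * Mixed.permD N m n q) * P) := by
  refine ⟨?_, ?_, ?_⟩
  · rw [TPC.mem_Cent]
    exact TPC.comm_gl hN P hidem hrange hker
  · intro f hf
    have h := TPC.Cent_span f hf
    change Commute P f
    clear hf
    induction h using Submodule.span_induction with
    | mem x hx =>
      obtain ⟨σ, rfl⟩ := hx
      exact TPC.comm_D hN P hidem hrange hker σ
    | zero => exact Commute.zero_right P
    | add x y _ _ hx hy => exact hx.add_right hy
    | smul c x _ hx => exact hx.smul_right c
  · intro p q
    exact TPC.comm_perm hN P hidem hrange hker p q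
end
end
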